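/- Let w = e^{−Q} be a Freud weight on ℝ: Q even, three times continuously differentiable, Q' > 0 on (0,∞), 2 ≤ A ≤ (x·Q'(x))'/Q'(x) ≤ B on (0,∞), and |x·Q'''(x)/Q''(x)| ≤ c for |x| ≥ 1; let d ≥ 1 be such that Q''(x) ≥ (1 − (B−1)² − c(B−1))/x² for |x| ≥ d. Let \tilde{w} : ℝ → ℝ be an even, positive, twice continuously differentiable weight with \tilde{w}(x) = w(x) for |x| ≤ 1 and \tilde{w}(x) = w(x)·|x|/Q'(|x|) for |x| ≥ d, such that log(1/\tilde{w}) has positive continuous first and second derivatives on (0,∞). For each n let x_{1,n} < … < x_{n,n} be the zeros of the n-th orthonormal polynomial p_n with respect to w, l_{k,n} the fundamental Lagrange polynomials on these nodes, and Y_n(f,x) = ∑_{k=1}^n l_{k,n}(x)²·f(x_{k,n}) the Grünwald operator. Then for every continuous f : ℝ → ℝ with f(x)·\tilde{w}(x) → 0 as |x| → ∞, one has sup_{x∈ℝ} |(Y_n(f,x) − f(x))·\tilde{w}(x)| → 0 as n → ∞. -/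

import Mathlib

open Real Filter Set Finset MeasureTheory

namespace GW

structure FQ (Q : ℝ → ℝ) (b : ℕ) : Prop where
  even : ∀ x, Q (-x) = Q x
  smooth : ContDiff ℝ 3 Q
  pos : ∀ x : ℝ, 0 < x → 0 < deriv Q x
  lo : ∀ x : ℝ, 0 < x → deriv Q x ≤ x * deriv (deriv Q) x
  hi : ∀ x : ℝ, 0 < x → x * deriv (deriv Q) x ≤ b * deriv Q x
  hb : 1 ≤ b

/-- the quotient `Q'(x)/x`, continuously extended. -/
noncomputable def hh (Q : ℝ → ℝ) (x : ℝ) : ℝ := dslope (deriv Q) 0 x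

variable {Q : ℝ → ℝ} {b : ℕ}

lemma min_of_deriv_sign {f f' : ℝ → ℝ} {x t : ℝ}
    (hf : ∀ s ∈ Set.uIcc x t, HasDerivAt f (f' s) s)
    (h : ∀ s ∈ Set.uIcc x t, 0 ≤ f' s * (s - x)) : f x ≤ f t := by
  rcases lt_trichotomy x t with hlt | heq | hgt
  · obtain ⟨s, hs, he⟩ := exists_hasDerivAt_eq_slope f f' hlt
      (fun y hy => (hf y (by rw [Set.uIcc_of_le hlt.le]; exact hy)).continuousAt.continuousWithinAt)
      (fun y hy => hf y (by rw [Set.uIcc_of_le hlt.le]; exact ⟨hy.1.le, hy.2.le⟩))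
    have h1 := h s (by rw [Set.uIcc_of_le hlt.le]; exact ⟨hs.1.le, hs.2.le⟩)
    have h2 : 0 ≤ f' s := by
      by_contra hc
      push Not at hc
      nlinarith [mul_pos (neg_pos.2 hc) (sub_pos.2 hs.1)]
    rw [he] at h2
    have h3 := sub_pos.2 hlt
    rw [le_div_iff₀ h3] at h2
    linarith
  · rw [heq]
  · obtain ⟨s, hs, he⟩ := exists_hasDerivAt_eq_slope f f' hgt
      (fun y hy => (hf y (by rw [Set.uIcc_of_ge hgt.le]; exact hy)).continuousAt.continuousWithinAt)
      (fun y hy => hf y (by rw [Set.uIcc_of_ge hgt.le]; exact ⟨hy.1.le, hy.2.le⟩))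
    have h1 := h s (by rw [Set.uIcc_of_ge hgt.le]; exact ⟨hs.1.le, hs.2.le⟩)
    have h2 : f' s ≤ 0 := by
      by_contra hc
      push Not at hc
      nlinarith [mul_pos hc (sub_pos.2 hs.2)]
    rw [he] at h2
    have h3 := sub_pos.2 hgt
    rw [div_le_iff₀ h3] at h2
    linarith

namespace FQ

lemma smooth' (H : FQ Q b) : ContDiff ℝ 2 (deriv Q) := by
  have := H.smooth
  have h2 : ContDiff ℝ (2+1) Q := by simpa [show (2:WithTop ℕ∞)+1 = 3 by norm_num] using this
  exact ((contDiff_succ_iff_deriv).1 h2).2.2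

lemma smooth'' (H : FQ Q b) : ContDiff ℝ 1 (deriv (deriv Q)) := by
  have h2 : ContDiff ℝ (1+1) (deriv Q) := by
    simpa [show (1:WithTop ℕ∞)+1 = 2 by norm_num] using H.smooth'
  exact ((contDiff_succ_iff_deriv).1 h2).2.2

lemma d0 (H : FQ Q b) (x : ℝ) : HasDerivAt Q (deriv Q x) x :=
  (H.smooth.differentiable (by norm_num) x).hasDerivAt

lemma d1 (H : FQ Q b) (x : ℝ) : HasDerivAt (deriv Q) (deriv (deriv Q) x) x :=
  (H.smooth'.differentiable (by norm_num) x).hasDerivAt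

lemma cQ (H : FQ Q b) : Continuous Q := H.smooth.continuous
lemma cq (H : FQ Q b) : Continuous (deriv Q) := H.smooth'.continuous
lemma cqq (H : FQ Q b) : Continuous (deriv (deriv Q)) := H.smooth''.continuous

lemma odd (H : FQ Q b) (x : ℝ) : deriv Q (-x) = - deriv Q x := by
  have h1 : (fun y => Q (-y)) = Q := funext H.even
  have h2 := deriv_comp_neg Q x
  rw [h1] at h2
  linarith

lemma q0 (H : FQ Q b) : deriv Q 0 = 0 := by
  have := H.odd 0
  simp at this
  linarith

lemma even2 (H : FQ Q b) (x : ℝ) : deriv (deriv Q) (-x) = deriv (deriv Q) x := by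
  have h1 : (fun y => deriv Q (-y)) = fun y => - deriv Q y := funext H.odd
  have h2 := deriv_comp_neg (deriv Q) x
  rw [h1] at h2
  have h3 : deriv (fun y => - deriv Q y) x = - deriv (deriv Q) x := by
    simp
  rw [h3] at h2
  linarith

lemma qeq (H : FQ Q b) (x : ℝ) : deriv Q x = x * hh Q x := by
  have := sub_smul_dslope (deriv Q) 0 x
  simp only [sub_zero, smul_eq_mul, H.q0] at this
  exact this.symm

lemma ch (H : FQ Q b) : Continuous (hh Q) := by
  have h := (continuousOn_dslope (f := deriv Q) (s := Set.univ) (a := 0) (by simp)).2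
    ⟨H.cq.continuousOn, (H.d1 0).differentiableAt⟩
  exact continuousOn_univ.1 h

lemma hdiv (H : FQ Q b) {x : ℝ} (hx : x ≠ 0) : hh Q x = deriv Q x / x := by
  rw [H.qeq x]; field_simp

lemma heven (H : FQ Q b) (x : ℝ) : hh Q (-x) = hh Q x := by
  by_cases hx : x = 0
  · simp [hx]
  · rw [H.hdiv hx, H.hdiv (neg_ne_zero.2 hx), H.odd]; field_simp

lemma habs (H : FQ Q b) (x : ℝ) : hh Q |x| = hh Q x := by
  rcases abs_choice x with h | h <;> rw [h]
  exact H.heven x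

lemma hpos' (H : FQ Q b) {x : ℝ} (hx : 0 < x) : 0 < hh Q x := by
  rw [H.hdiv hx.ne']; exact div_pos (H.pos x hx) hx

lemma hpos (H : FQ Q b) {x : ℝ} (hx : x ≠ 0) : 0 < hh Q x := by
  rw [← H.habs]; exact H.hpos' (abs_pos.2 hx)

lemma hmono_Ioi (H : FQ Q b) : MonotoneOn (hh Q) (Set.Ioi 0) := by
  have hd : ∀ x ∈ Set.Ioi (0:ℝ), HasDerivAt (fun x => deriv Q x / x)
      ((deriv (deriv Q) x * x - deriv Q x * 1) / x ^ 2) x := by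
    intro x hx
    exact (H.d1 x).div (hasDerivAt_id x) (ne_of_gt hx)
  have : MonotoneOn (fun x => deriv Q x / x) (Set.Ioi 0) := by
    apply monotoneOn_of_deriv_nonneg (convex_Ioi 0)
    · exact fun x hx => (hd x hx).continuousAt.continuousWithinAt
    · rw [interior_Ioi]; exact fun x hx => (hd x hx).differentiableAt.differentiableWithinAt
    · rw [interior_Ioi]; intro x hx
      rw [(hd x hx).deriv]
      have := H.lo x hx
      apply div_nonneg _ (sq_nonneg x)
      linarith
  intro x hx y hy hxy
  rw [H.hdiv (ne_of_gt hx), H.hdiv (ne_of_gt hy)]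
  exact this hx hy hxy

lemma hmono (H : FQ Q b) {x y : ℝ} (hx : 0 ≤ x) (hxy : x ≤ y) : hh Q x ≤ hh Q y := by
  have h1 : Tendsto (fun e : ℝ => hh Q (x + e)) (nhdsWithin 0 (Set.Ioi 0)) (nhds (hh Q x)) := by
    have : Continuous (fun e : ℝ => hh Q (x + e)) := H.ch.comp (by fun_prop)
    have h := this.tendsto 0
    simp only [add_zero] at h
    exact h.mono_left nhdsWithin_le_nhds
  have h2 : Tendsto (fun e : ℝ => hh Q (y + e)) (nhdsWithin 0 (Set.Ioi 0)) (nhds (hh Q y)) := by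
    have : Continuous (fun e : ℝ => hh Q (y + e)) := H.ch.comp (by fun_prop)
    have h := this.tendsto 0
    simp only [add_zero] at h
    exact h.mono_left nhdsWithin_le_nhds
  refine le_of_tendsto_of_tendsto h1 h2 ?_
  filter_upwards [self_mem_nhdsWithin] with e he
  have he : 0 < e := he
  exact H.hmono_Ioi (show 0 < x + e by linarith) (show 0 < y + e by linarith) (by linarith)

lemma hmonoabs (H : FQ Q b) {x y : ℝ} (hxy : |x| ≤ |y|) : hh Q x ≤ hh Q y := by
  rw [← H.habs x, ← H.habs y]; exact H.hmono (abs_nonneg x) hxy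

lemma hnn (H : FQ Q b) (x : ℝ) : 0 ≤ hh Q x := by
  have h1 : Tendsto (fun e : ℝ => hh Q e) (nhdsWithin 0 (Set.Ioi 0)) (nhds (hh Q 0)) :=
    (H.ch.tendsto 0).mono_left nhdsWithin_le_nhds
  have h2 : 0 ≤ hh Q 0 := by
    refine ge_of_tendsto h1 ?_
    filter_upwards [self_mem_nhdsWithin] with e he
    exact (H.hpos' he).le
  have h3 : hh Q 0 ≤ hh Q x := H.hmonoabs (by simp)
  linarith

lemma hscale (H : FQ Q b) {l x : ℝ} (hl : 1 ≤ l) : hh Q (l * x) ≤ l ^ b * hh Q x := by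
  wlog hx : 0 < x generalizing x
  · rcases (not_lt.1 hx).eq_or_lt with h0 | hneg
    · subst h0
      rw [mul_zero]
      have := one_le_pow₀ hl (n := b)
      nlinarith [H.hnn 0]
    · have := this (x := -x) (by linarith)
      rwa [mul_neg, H.heven, H.heven] at this
  have hd : ∀ x ∈ Set.Ioi (0:ℝ), HasDerivAt (fun x => deriv Q x / x ^ b)
      ((deriv (deriv Q) x * x ^ b - deriv Q x * (b * x ^ (b-1))) / (x ^ b) ^ 2) x := by
    intro x hx
    exact (H.d1 x).div (hasDerivAt_pow b x) (pow_ne_zero _ (ne_of_gt hx))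
  have : AntitoneOn (fun x => deriv Q x / x ^ b) (Set.Ioi 0) := by
    apply antitoneOn_of_deriv_nonpos (convex_Ioi 0)
    · exact fun x hx => (hd x hx).continuousAt.continuousWithinAt
    · rw [interior_Ioi]; exact fun x hx => (hd x hx).differentiableAt.differentiableWithinAt
    · rw [interior_Ioi]; intro x hx
      rw [(hd x hx).deriv]
      have h1 := H.hi x hx
      apply div_nonpos_of_nonpos_of_nonneg _ (sq_nonneg _)
      have hx' : 0 < x := hx
      have h2 : x ^ b = x ^ (b-1) * x := by
        rw [← pow_succ, Nat.sub_add_cancel H.hb]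
      rw [h2]
      have h3 : 0 < x ^ (b-1) := pow_pos hx' _
      nlinarith
  have hlx : x ≤ l * x := by nlinarith
  have h1 := this (show x ∈ Set.Ioi 0 from hx) (show l * x ∈ Set.Ioi 0 from lt_of_lt_of_le hx hlx) hlx
  have hl0 : 0 < l := by linarith
  simp only [H.qeq, mul_pow] at h1
  have hxb : 0 < x ^ b := pow_pos hx _
  have hlb : 0 < l ^ b := pow_pos hl0 _
  rw [div_le_div_iff₀ (by positivity) hxb] at h1
  have h2 : (x * x ^ b) * (l * hh Q (l * x)) ≤ (x * x ^ b) * (l ^ b * hh Q x) := by linarith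
  have h3 := le_of_mul_le_mul_left h2 (by positivity)
  have := H.hnn (l * x)
  nlinarith

/-- comparison constant -/
lemma exists_C1 (H : FQ Q b) : ∃ C : ℝ, 1 ≤ C ∧ ∀ x y : ℝ, |y| ≤ |x| + 1 →
    1 + hh Q y ≤ C * (1 + hh Q x) := by
  refine ⟨1 + 2 ^ b + hh Q 2, ?_, ?_⟩
  · have := H.hnn 2
    have : (0:ℝ) < 2 ^ b := by positivity
    linarith
  intro x y hxy
  have h2 := H.hnn 2
  have hb : (1:ℝ) ≤ 2 ^ b := one_le_pow₀ (by norm_num)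
  have hx := H.hnn x
  by_cases h : |x| ≤ 1
  · have : hh Q y ≤ hh Q 2 := H.hmonoabs (by rw [abs_of_pos (by norm_num : (0:ℝ) < 2)]; linarith)
    nlinarith
  · push Not at h
    have h3 : hh Q y ≤ hh Q (2 * x) := H.hmonoabs (by rw [abs_mul, abs_of_pos (by norm_num : (0:ℝ) < 2)]; linarith)
    have h4 := H.hscale (l := 2) (x := x) (by norm_num)
    nlinarith

/-- Convexity in `t^2`. -/
lemma Qlower (H : FQ Q b) (x t : ℝ) : Q x + hh Q x / 2 * (t ^ 2 - x ^ 2) ≤ Q t := by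
  have key : ∀ x t : ℝ, 0 ≤ x → 0 ≤ t → Q x + hh Q x / 2 * (t ^ 2 - x ^ 2) ≤ Q t := by
    intro x t hx ht
    have h := min_of_deriv_sign (f := fun s => Q s - hh Q x / 2 * (s ^ 2 - x ^ 2))
      (f' := fun s => s * (hh Q s - hh Q x)) (x := x) (t := t) (fun s _ => by
        have := (H.d0 s).sub (((hasDerivAt_pow 2 s).sub_const (x^2)).const_mul (hh Q x / 2))
        exact this.congr_deriv (by rw [H.qeq]; push_cast; ring)) (fun s hs => by
        have hs0 : 0 ≤ s := le_trans (le_min hx ht) hs.1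
        rcases le_total s x with h | h
        · have := H.hmono hs0 h
          nlinarith [mul_nonneg hs0 (mul_nonneg (sub_nonneg.2 this) (sub_nonneg.2 h))]
        · have := H.hmono hx h
          nlinarith [mul_nonneg hs0 (mul_nonneg (sub_nonneg.2 this) (sub_nonneg.2 h))])
    simp only [sub_self, mul_zero, sub_zero] at h
    linarith
  have h := key |x| |t| (abs_nonneg _) (abs_nonneg _)
  rw [H.habs, sq_abs, sq_abs] at h
  have e1 : Q |x| = Q x := by rcases abs_choice x with h | h <;> rw [h]; exact H.even x
  have e2 : Q |t| = Q t := by rcases abs_choice t with h | h <;> rw [h]; exact H.even t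
  rwa [e1, e2] at h

lemma Qabs (H : FQ Q b) (x : ℝ) : Q |x| = Q x := by
  rcases abs_choice x with h | h <;> rw [h]; exact H.even x

lemma qq_le (H : FQ Q b) (x : ℝ) : deriv (deriv Q) x ≤ b * hh Q x := by
  have key : ∀ x, 0 < x → deriv (deriv Q) x ≤ b * hh Q x := by
    intro x hx
    have := H.hi x hx
    rw [H.qeq] at this
    have h2 : x * deriv (deriv Q) x ≤ x * (b * hh Q x) := by linarith
    exact le_of_mul_le_mul_left h2 hx
  rcases lt_trichotomy x 0 with h | h | h
  · have := key (-x) (by linarith)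
    rwa [H.even2, H.heven] at this
  · have : hh Q 0 = deriv (deriv Q) 0 := dslope_same _ _
    subst h
    rw [← this]
    have := H.hnn 0
    have hb : (1:ℝ) ≤ b := by exact_mod_cast H.hb
    nlinarith
  · exact key x h

/-- `κ_x(t)`. -/
lemma kap_ge (H : FQ Q b) (x t : ℝ) : hh Q x / 2 ≤ dslope (deriv Q) x t ∧
    hh Q t / 2 ≤ dslope (deriv Q) x t := by
  have hx := H.hnn x
  have ht := H.hnn t
  have main : ∀ t, t ≠ x → hh Q x / 2 ≤ dslope (deriv Q) x t ∧
    hh Q t / 2 ≤ dslope (deriv Q) x t := by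
    intro t htx
    have hx := H.hnn x
    have ht := H.hnn t
    have hs := sub_smul_dslope (deriv Q) x t
    simp only [smul_eq_mul, H.qeq t, H.qeq x] at hs
    have hp : 0 < (t - x) ^ 2 := by
      have := sub_ne_zero.2 htx
      positivity
    have hm : (t - x) ^ 2 * dslope (deriv Q) x t = (t - x) * (t * hh Q t - x * hh Q x) := by
      rw [← hs]; ring
    have hsq : 0 ≤ (hh Q t - hh Q x) * (t ^ 2 - x ^ 2) := by
      rcases le_total |t| |x| with h | h
      · have h1 := H.hmonoabs h
        have h2 := sq_le_sq.2 h
        nlinarith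
      · have h1 := H.hmonoabs h
        have h2 := sq_le_sq.2 h
        nlinarith
    constructor
    · refine le_of_mul_le_mul_left ?_ hp
      rw [hm]
      have : (t - x) * (t * hh Q t - x * hh Q x) - (t-x)^2 * (hh Q x / 2)
         = (hh Q t + 0) / 2 * (t - x)^2 + (hh Q t - hh Q x) * (t ^ 2 - x ^ 2) / 2 := by ring
      have h3 : 0 ≤ hh Q t / 2 * (t - x)^2 := by positivity
      nlinarith
    · refine le_of_mul_le_mul_left ?_ hp
      rw [hm]
      have : (t - x) * (t * hh Q t - x * hh Q x) - (t-x)^2 * (hh Q t / 2)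
         = (hh Q x) / 2 * (t - x)^2 + (hh Q t - hh Q x) * (t ^ 2 - x ^ 2) / 2 := by ring
      have h3 : 0 ≤ hh Q x / 2 * (t - x)^2 := by positivity
      nlinarith
  by_cases h : t = x
  · subst h
    have hc : ContinuousAt (dslope (deriv Q) t) t :=
      continuousAt_dslope_same.2 (H.d1 t).differentiableAt
    have h1 : hh Q t / 2 ≤ dslope (deriv Q) t t := by
      refine ge_of_tendsto (hc.tendsto.mono_left (nhdsWithin_le_nhds (s := {t}ᶜ))) ?_
      filter_upwards [self_mem_nhdsWithin] with s hs
      exact (main s hs).1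
    exact ⟨h1, h1⟩
  · exact main t h

lemma kap_le_max (H : FQ Q b) (x t : ℝ) : dslope (deriv Q) x t ≤ b * max (hh Q x) (hh Q t) := by
  have hmv : ∃ s, |s| ≤ max |x| |t| ∧ dslope (deriv Q) x t = deriv (deriv Q) s := by
    rcases lt_trichotomy x t with h | h | h
    · obtain ⟨s, hs, he⟩ := exists_hasDerivAt_eq_slope (deriv Q) (deriv (deriv Q)) h
        H.cq.continuousOn (fun y _ => H.d1 y)
      refine ⟨s, abs_le_max_abs_abs hs.1.le hs.2.le, ?_⟩
      rw [dslope_of_ne _ h.ne', he, slope_def_field]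
    · subst h; exact ⟨x, le_max_left _ _, dslope_same _ _⟩
    · obtain ⟨s, hs, he⟩ := exists_hasDerivAt_eq_slope (deriv Q) (deriv (deriv Q)) h
        H.cq.continuousOn (fun y _ => H.d1 y)
      refine ⟨s, by rw [max_comm]; exact abs_le_max_abs_abs hs.1.le hs.2.le, ?_⟩
      rw [dslope_of_ne _ h.ne, he, slope_comm, slope_def_field]
  obtain ⟨s, hs, he⟩ := hmv
  rw [he]
  refine (H.qq_le s).trans (mul_le_mul_of_nonneg_left ?_ (Nat.cast_nonneg b))
  rcases le_max_iff.1 hs with h | h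
  · exact (H.hmonoabs h).trans (le_max_left _ _)
  · exact (H.hmonoabs h).trans (le_max_right _ _)

lemma kap_le (H : FQ Q b) (x t : ℝ) : dslope (deriv Q) x t ≤ b * (hh Q x + hh Q t) := by
  refine (H.kap_le_max x t).trans (mul_le_mul_of_nonneg_left ?_ (Nat.cast_nonneg b))
  exact max_le (by linarith [H.hnn t]) (by linarith [H.hnn x])

lemma ckap (H : FQ Q b) (x : ℝ) : Continuous (dslope (deriv Q) x) := by
  have h := (continuousOn_dslope (f := deriv Q) (s := Set.univ) (a := x) (by simp)).2
    ⟨H.cq.continuousOn, (H.d1 x).differentiableAt⟩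
  exact continuousOn_univ.1 h

/-- local upper bound -/
lemma exists_Qupper (H : FQ Q b) : ∃ C : ℝ, 1 ≤ C ∧ ∀ x t : ℝ, |t - x| ≤ 1 →
    Q t ≤ Q x + deriv Q x * (t - x) + C * (1 + hh Q x) * (t - x) ^ 2 := by
  obtain ⟨C, hC1, hC⟩ := H.exists_C1
  have hb : (1:ℝ) ≤ b := by exact_mod_cast H.hb
  refine ⟨b * C, by nlinarith, ?_⟩
  intro x t htx
  set M := b * C * (1 + hh Q x) with hM
  have h := min_of_deriv_sign
    (f := fun s => Q x + deriv Q x * (s - x) + M * (s - x) ^ 2 - Q s)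
    (f' := fun s => deriv Q x + M * (2 * (s - x)) - deriv Q s) (x := x) (t := t) (fun s _ => by
      have h1 : HasDerivAt (fun s : ℝ => s - x) 1 s := (hasDerivAt_id s).sub_const x
      have := (((h1.const_mul (deriv Q x)).const_add (Q x)).add ((h1.pow 2).const_mul M)).sub (H.d0 s)
      exact this.congr_deriv (by push_cast; ring)) (fun s hs => by
      have hs1 : |s - x| ≤ 1 := (Set.abs_sub_left_of_mem_uIcc hs).trans htx
      have hs2 : |s| ≤ |x| + 1 := by
        have := abs_add_le (s - x) x
        simp only [sub_add_cancel] at this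
        linarith
      have hk := H.kap_le_max x s
      have hR := hC x s hs2
      have hx := H.hnn x
      have hm : max (hh Q x) (hh Q s) ≤ C * (1 + hh Q x) := by
        apply max_le
        · nlinarith
        · linarith
      have hk2 : dslope (deriv Q) x s ≤ M := by
        rw [hM, mul_assoc]
        exact hk.trans (mul_le_mul_of_nonneg_left hm (by linarith))
      have hs' := sub_smul_dslope (deriv Q) x s
      simp only [smul_eq_mul] at hs'
      have e : (deriv Q x + M * (2 * (s - x)) - deriv Q s) * (s - x)
        = (M - dslope (deriv Q) x s) * (s - x)^2 + M * (s - x)^2 := by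
        linear_combination (s - x) * hs'
      rw [e]
      have hM0 : 0 ≤ M := by positivity
      have : 0 ≤ (M - dslope (deriv Q) x s) * (s - x)^2 := mul_nonneg (by linarith) (sq_nonneg _)
      positivity)
  simp only [sub_self, mul_zero, add_zero, ne_eq, OfNat.ofNat_ne_zero, not_false_eq_true, zero_pow] at h
  linarith

/-- Growth at infinity -/
lemma hlarge (H : FQ Q b) (x : ℝ) (hx : 1 ≤ |x|) : hh Q 1 ≤ hh Q x := H.hmonoabs (by simpa using hx)

/-- scaling of F-/
lemma Qgrow (H : FQ Q b) : ∃ a C : ℝ, 0 < a ∧ ∀ t : ℝ, a * t ^ 2 - C ≤ Q t := by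
  refine ⟨hh Q 1 / 2, hh Q 1 / 2 - Q 1, by have := H.hpos' one_pos; linarith, fun t => ?_⟩
  have := H.Qlower 1 t
  linarith

lemma hpoly (H : FQ Q b) (t : ℝ) : hh Q t ≤ hh Q 1 * (1 + t ^ 2) ^ b := by
  have h1 : (1:ℝ) ≤ 1 + t ^ 2 := by nlinarith [sq_nonneg t]
  have h2 := H.hscale (x := 1) h1
  rw [mul_one] at h2
  have h3 : hh Q t ≤ hh Q (1 + t ^ 2) := H.hmonoabs (by
    rw [abs_of_nonneg (by linarith : (0:ℝ) ≤ 1 + t^2)]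
    rcases abs_cases t with ⟨h, _⟩ | ⟨h, _⟩ <;> rw [h] <;> nlinarith [sq_nonneg (t - 1), sq_nonneg (t+1)])
  linarith

end FQ

/-! polynomially bounded continuous functions -/
def PB (g : ℝ → ℝ) : Prop := Continuous g ∧ ∃ C : ℝ, ∃ m : ℕ, 0 ≤ C ∧ ∀ t, |g t| ≤ C * (1 + t ^ 2) ^ m

lemma one_le_aux (t : ℝ) : (1:ℝ) ≤ 1 + t ^ 2 := by nlinarith [sq_nonneg t]

namespace PB
variable {f g : ℝ → ℝ}

lemma const (c : ℝ) : PB (fun _ => c) := ⟨continuous_const, |c|, 0, abs_nonneg c, fun t => by simp⟩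

lemma id : PB (fun t => t) := ⟨continuous_id, 1, 1, by norm_num, fun t => by
  rcases abs_cases t with ⟨h, _⟩ | ⟨h, _⟩ <;> rw [h] <;> nlinarith [sq_nonneg (t - 1), sq_nonneg (t+1)]⟩

lemma mul (hf : PB f) (hg : PB g) : PB (fun t => f t * g t) := by
  obtain ⟨cf, C, m, hC, h⟩ := hf
  obtain ⟨cg, D, k, hD, h'⟩ := hg
  refine ⟨cf.mul cg, C * D, m + k, mul_nonneg hC hD, fun t => ?_⟩
  rw [abs_mul, pow_add]
  have h0 := one_le_aux t
  calc |f t| * |g t| ≤ (C * (1 + t ^ 2) ^ m) * (D * (1 + t ^ 2) ^ k) :=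
        mul_le_mul (h t) (h' t) (abs_nonneg _) (by positivity)
    _ = _ := by ring

lemma add (hf : PB f) (hg : PB g) : PB (fun t => f t + g t) := by
  obtain ⟨cf, C, m, hC, h⟩ := hf
  obtain ⟨cg, D, k, hD, h'⟩ := hg
  refine ⟨cf.add cg, C + D, m + k, add_nonneg hC hD, fun t => ?_⟩
  have h0 := one_le_aux t
  have h1 : (1 + t ^ 2) ^ m ≤ (1 + t ^ 2) ^ (m + k) := pow_le_pow_right₀ h0 (by omega)
  have h2 : (1 + t ^ 2) ^ k ≤ (1 + t ^ 2) ^ (m + k) := pow_le_pow_right₀ h0 (by omega)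
  calc |f t + g t| ≤ |f t| + |g t| := abs_add_le _ _
    _ ≤ C * (1 + t ^ 2) ^ m + D * (1 + t ^ 2) ^ k := add_le_add (h t) (h' t)
    _ ≤ C * (1 + t ^ 2) ^ (m+k) + D * (1 + t ^ 2) ^ (m+k) := by gcongr
    _ = _ := by ring

lemma neg (hf : PB f) : PB (fun t => - f t) := by
  have := (const (-1)).mul hf
  simpa using this

lemma sub (hf : PB f) (hg : PB g) : PB (fun t => f t - g t) := by
  have := hf.add hg.neg
  simpa [sub_eq_add_neg] using this

lemma pow (hf : PB f) (n : ℕ) : PB (fun t => f t ^ n) := by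
  induction n with
  | zero => simpa using const 1
  | succ n ih => simpa [pow_succ] using ih.mul hf

lemma poly (p : Polynomial ℝ) : PB (fun t => p.eval t) := by
  induction p using Polynomial.induction_on' with
  | add p q hp hq => simpa using hp.add hq
  | monomial n a => simpa using (const a).mul (id.pow n)

lemma mono (cf : Continuous f) (hg : PB g) (h : ∀ t, |f t| ≤ g t) : PB f := by
  obtain ⟨cg, D, k, hD, h'⟩ := hg
  exact ⟨cf, D, k, hD, fun t => (h t).trans ((le_abs_self _).trans (h' t))⟩

lemma bound (hf : PB f) {a : ℝ} (ha : 0 < a) : ∃ C : ℝ, 0 ≤ C ∧ ∀ t, |f t| * exp (-(a * t ^ 2)) ≤ C := by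
  obtain ⟨cf, C, m, hC, h⟩ := hf
  refine ⟨C * (m.factorial / a ^ m * exp a), by positivity, fun t => ?_⟩
  have h0 := one_le_aux t
  have h1 := Real.pow_div_factorial_le_exp (a * (1 + t ^ 2)) (by positivity) m
  have h2 : (1 + t ^ 2) ^ m ≤ m.factorial / a ^ m * exp (a * (1 + t ^ 2)) := by
    rw [mul_pow, div_le_iff₀ (by positivity)] at h1
    rw [div_mul_eq_mul_div, le_div_iff₀ (by positivity)]
    linarith
  have h3 : exp (a * (1 + t ^ 2)) = exp a * exp (a * t ^ 2) := by rw [← exp_add]; ring_nf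
  rw [h3] at h2
  calc |f t| * exp (-(a * t ^ 2)) ≤ C * (m.factorial / a ^ m * (exp a * exp (a * t ^ 2))) * exp (-(a * t ^ 2)) := by
        gcongr
        exact (h t).trans (by gcongr)
    _ = C * (m.factorial / a ^ m * exp a) * (exp (a * t ^ 2) * exp (-(a * t ^ 2))) := by ring
    _ = _ := by rw [← exp_add]; simp

lemma w_bound (H : FQ Q b) (hf : PB f) : ∃ a C : ℝ, 0 < a ∧ 0 ≤ C ∧
    ∀ t, |f t * exp (-(Q t))| ≤ C * exp (-(a * t ^ 2)) := by
  obtain ⟨a, C, ha, hQ⟩ := H.Qgrow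
  obtain ⟨D, hD, h⟩ := hf.bound (half_pos ha)
  refine ⟨a / 2, D * exp C, half_pos ha, by positivity, fun t => ?_⟩
  rw [abs_mul, abs_of_pos (exp_pos _)]
  have h1 : exp (-(Q t)) ≤ exp C * exp (-(a/2 * t ^ 2)) * exp (-(a / 2 * t ^ 2)) := by
    rw [← exp_add, ← exp_add]
    apply exp_le_exp.2
    linarith [hQ t]
  calc |f t| * exp (-(Q t)) ≤ |f t| * (exp C * exp (-(a/2 * t ^ 2)) * exp (-(a / 2 * t ^ 2))) := by gcongr
    _ = (|f t| * exp (-(a/2 * t ^ 2))) * (exp C * exp (-(a / 2 * t ^ 2))) := by ring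
    _ ≤ D * (exp C * exp (-(a / 2 * t ^ 2))) := by gcongr; exact h t
    _ = _ := by ring

lemma integrable (H : FQ Q b) (hf : PB f) : Integrable (fun t => f t * exp (-(Q t))) := by
  obtain ⟨a, C, ha, hC, h⟩ := hf.w_bound H
  have h1 : Integrable (fun t : ℝ => C * exp (-(a * t ^ 2))) := by
    have := (integrable_exp_neg_mul_sq ha).const_mul C
    simpa using this
  refine h1.mono' ?_ (Eventually.of_forall fun t => by simpa using h t)
  exact (hf.1.mul (continuous_exp.comp H.cQ.neg)).aestronglyMeasurable

lemma tendsto (H : FQ Q b) (hf : PB f) : Tendsto (fun t => f t * exp (-(Q t))) (cocompact ℝ) (nhds 0) := by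
  obtain ⟨a, C, ha, hC, h⟩ := hf.w_bound H
  have h1 : Tendsto (fun t : ℝ => C * exp (-(a * t ^ 2))) (cocompact ℝ) (nhds 0) := by
    have h2 : Tendsto (fun t : ℝ => exp (-(a * t ^ 2))) (cocompact ℝ) (nhds 0) := by
      apply Real.tendsto_exp_neg_atTop_nhds_zero.comp
      apply Tendsto.const_mul_atTop ha
      have : Tendsto (fun t : ℝ => ‖t‖ ^ 2) (cocompact ℝ) atTop :=
        (tendsto_pow_atTop (by norm_num)).comp (tendsto_norm_cocompact_atTop)
      simpa using this
    simpa using h2.const_mul C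
  exact squeeze_zero_norm (fun t => by simpa using h t) h1

lemma h (H : FQ Q b) : PB (hh Q) := ⟨H.ch, hh Q 1, b, H.hnn 1, fun t => by
  rw [abs_of_nonneg (H.hnn t)]; exact H.hpoly t⟩

lemma q (H : FQ Q b) : PB (deriv Q) := by
  have := id.mul (PB.h H)
  convert this using 2 with t
  exact H.qeq t

lemma kap (H : FQ Q b) (x : ℝ) : PB (dslope (deriv Q) x) := by
  refine mono (H.ckap x) ((const (b:ℝ)).mul ((const (hh Q x)).add (PB.h H))) (fun t => ?_)
  rw [abs_of_nonneg]
  · exact H.kap_le x t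
  · exact le_trans (by have := H.hnn x; linarith) (H.kap_ge x t).1

end PB

/-- integration by parts -/
lemma by_parts (H : FQ Q b) (q : Polynomial ℝ) :
    ∫ t, q.derivative.eval t * exp (-(Q t)) = ∫ t, q.eval t * deriv Q t * exp (-(Q t)) := by
  have i1 := (PB.poly q.derivative).integrable H
  have i2 := ((PB.poly q).mul (PB.q H)).integrable H
  have h := integral_eq_zero_of_hasDerivAt_of_integrable (f := fun t => q.eval t * exp (-(Q t)))
    (f' := fun t => q.derivative.eval t * exp (-(Q t)) - q.eval t * deriv Q t * exp (-(Q t)))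
    (fun t => by
      have := (q.hasDerivAt t).mul ((H.d0 t).neg.exp)
      exact this.congr_deriv (by simp only [Pi.neg_apply]; ring))
    (i1.sub i2) ((PB.poly q).integrable H)
  rw [integral_sub i1 i2] at h
  linarith

end GW


namespace GW
variable {Q : ℝ → ℝ} {b : ℕ}

/-- weighted integral -/
noncomputable def I (Q : ℝ → ℝ) (g : ℝ → ℝ) : ℝ := ∫ t, g t * exp (-(Q t))

lemma I_add (H : FQ Q b) {f g : ℝ → ℝ} (hf : PB f) (hg : PB g) :
    I Q (fun t => f t + g t) = I Q f + I Q g := by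
  unfold I
  rw [← integral_add (hf.integrable H) (hg.integrable H)]
  congr 1; ext t; ring

lemma I_sub (H : FQ Q b) {f g : ℝ → ℝ} (hf : PB f) (hg : PB g) :
    I Q (fun t => f t - g t) = I Q f - I Q g := by
  unfold I
  rw [← integral_sub (hf.integrable H) (hg.integrable H)]
  congr 1; ext t; ring

lemma I_mul (a : ℝ) (f : ℝ → ℝ) : I Q (fun t => a * f t) = a * I Q f := by
  unfold I
  rw [← integral_const_mul]
  congr 1; ext t; ring

lemma I_nonneg {f : ℝ → ℝ} (h : ∀ t, 0 ≤ f t) : 0 ≤ I Q f :=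
  integral_nonneg fun t => mul_nonneg (h t) (exp_pos _).le

lemma I_mono (H : FQ Q b) {f g : ℝ → ℝ} (hf : PB f) (hg : PB g) (h : ∀ t, f t ≤ g t) :
    I Q f ≤ I Q g := by
  have := I_nonneg (Q := Q) (f := fun t => g t - f t) (fun t => sub_nonneg.2 (h t))
  rw [I_sub H hg hf] at this
  linarith

lemma I_sum (H : FQ Q b) {ι : Type*} (s : Finset ι) (f : ι → ℝ → ℝ) (hf : ∀ i ∈ s, PB (f i)) :
    I Q (fun t => ∑ i ∈ s, f i t) = ∑ i ∈ s, I Q (f i) := by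
  unfold I
  rw [← integral_finsetSum s (fun i hi => (hf i hi).integrable H)]
  congr 1; ext t; rw [Finset.sum_mul]

lemma I_odd (H : FQ Q b) {f : ℝ → ℝ} (hf : ∀ t, f (-t) = - f t) : I Q f = 0 := by
  have h1 : I Q f = ∫ t, f (-t) * exp (-(Q (-t))) := by
    unfold I
    exact (integral_neg_eq_self (fun t => f t * exp (-(Q t))) volume).symm
  have h2 : (∫ t, f (-t) * exp (-(Q (-t)))) = - I Q f := by
    unfold I
    rw [← integral_neg]
    congr 1; ext t; rw [hf, H.even]; ring
  linarith

lemma I_sq_eq_zero (H : FQ Q b) (p : Polynomial ℝ) (h : I Q (fun t => p.eval t ^ 2) = 0) : p = 0 := by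
  by_contra hp
  have hc : Continuous (fun t => p.eval t ^ 2 * exp (-(Q t))) :=
    (p.continuous.pow 2).mul (continuous_exp.comp H.cQ.neg)
  obtain ⟨x, hx⟩ : ∃ x, p.eval x ≠ 0 := by
    by_contra hn
    push Not at hn
    exact hp (Polynomial.funext (by simpa using hn))
  have hpos : 0 < ∫ t, p.eval t ^ 2 * exp (-(Q t)) := by
    apply integral_pos_of_integrable_nonneg_nonzero hc (((PB.poly p).pow 2).integrable H)
      (fun t => mul_nonneg (sq_nonneg _) (exp_pos _).le) (x := x)
    have := exp_pos (-(Q x))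
    positivity
  unfold I at h
  linarith

structure OP (Q : ℝ → ℝ) (n : ℕ) (p : Polynomial ℝ) (z : Fin n → ℝ) : Prop where
  deg : p.natDegree = n
  lead : 0 < p.leadingCoeff
  orth : ∀ q : Polynomial ℝ, q.degree < n → I Q (fun t => p.eval t * q.eval t) = 0
  norm : I Q (fun t => p.eval t ^ 2) = 1
  mono : StrictMono z
  zero : ∀ k, p.eval (z k) = 0

variable {n : ℕ} {p : Polynomial ℝ} {z : Fin n → ℝ}

/-- divided difference polynomial -/
noncomputable def Sx (p : Polynomial ℝ) (x : ℝ) : Polynomial ℝ := p /ₘ (Polynomial.X - Polynomial.C x)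

lemma Sx_eq (p : Polynomial ℝ) (x : ℝ) :
    p = Polynomial.C (p.eval x) + (Polynomial.X - Polynomial.C x) * Sx p x := by
  have := Polynomial.modByMonic_add_div p (Polynomial.X - Polynomial.C x)
  rw [Polynomial.modByMonic_X_sub_C_eq_C_eval] at this
  exact this.symm

lemma Sx_eval (p : Polynomial ℝ) (x t : ℝ) : (t - x) * (Sx p x).eval t = p.eval t - p.eval x := by
  have := congrArg (Polynomial.eval t) (Sx_eq p x)
  simp at this
  linarith

/-- `∫ p² w κ_x` -/
noncomputable def AA (Q : ℝ → ℝ) (p : Polynomial ℝ) (x : ℝ) : ℝ :=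
  I Q (fun t => p.eval t ^ 2 * dslope (deriv Q) x t)

namespace OP

lemma pne (O : OP Q n p z) : p ≠ 0 := by
  intro h
  have := O.lead
  simp [h] at this

lemma degS (O : OP Q n p z) (hn : 0 < n) (x : ℝ) : (Sx p x).degree < n := by
  have h := Polynomial.degree_divByMonic_lt p (Polynomial.X - Polynomial.C x) O.pne (by simp)
  rwa [Polynomial.degree_eq_natDegree O.pne, O.deg] at h

lemma T1 (H : FQ Q b) (O : OP Q n p z) (hn : 0 < n) (x : ℝ) :
    I Q (fun t => (Sx p x).eval t ^ 2) - deriv Q x * p.eval x * I Q (fun t => (Sx p x).eval t)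
      = AA Q p x - p.eval x ^ 2 * I Q (dslope (deriv Q) x) := by
  set S := Sx p x with hS
  set P := p.eval x with hP
  have hSe : ∀ t, (t - x) * S.eval t = p.eval t - P := Sx_eval p x
  have pp := PB.poly p
  have ps := PB.poly S
  have ps' := PB.poly S.derivative
  have pq := PB.q H
  have pk := PB.kap H x
  have o1 := O.orth S (O.degS hn x)
  have o2 := O.orth S.derivative ((Polynomial.degree_derivative_le).trans_lt (O.degS hn x))
  have b1 := by_parts H S
  have b2 := by_parts H ((Polynomial.X - Polynomial.C x) * S ^ 2)
  change I Q _ = I Q _ at b1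
  change I Q _ = I Q _ at b2
  have e1 : I Q (fun t => ((Polynomial.X - Polynomial.C x) * S ^ 2).derivative.eval t)
      = I Q (fun t => S.eval t ^ 2) + (2 * I Q (fun t => p.eval t * S.derivative.eval t)
        - 2 * P * I Q (fun t => S.derivative.eval t)) := by
    rw [← I_mul, ← I_mul, ← I_sub H (by exact (PB.const 2).mul (pp.mul ps')) (by exact (PB.const _).mul ps'),
      ← I_add H (ps.pow 2) (by exact ((PB.const 2).mul (pp.mul ps')).sub ((PB.const _).mul ps'))]
    congr 1; ext t
    simp [Polynomial.derivative_pow]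
    linear_combination 2 * S.derivative.eval t * hSe t
  have e2 : I Q (fun t => ((Polynomial.X - Polynomial.C x) * S ^ 2).eval t * deriv Q t)
      = I Q (fun t => p.eval t * S.eval t * deriv Q t) - P * I Q (fun t => S.eval t * deriv Q t) := by
    rw [← I_mul, ← I_sub H ((pp.mul ps).mul pq) (by exact (PB.const _).mul (ps.mul pq))]
    congr 1; ext t
    simp
    linear_combination S.eval t * deriv Q t * hSe t
  have e3 : AA Q p x = P ^ 2 * I Q (dslope (deriv Q) x) + (I Q (fun t => p.eval t * S.eval t * deriv Q t)
      + P * I Q (fun t => S.eval t * deriv Q t)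
      - (deriv Q x * I Q (fun t => p.eval t * S.eval t) + deriv Q x * P * I Q (fun t => S.eval t))) := by
    unfold AA
    rw [← I_mul, ← I_mul, ← I_mul, ← I_mul,
      ← I_add H ((pp.mul ps).mul pq) (by exact (PB.const _).mul (ps.mul pq)),
      ← I_add H (by exact (PB.const _).mul (pp.mul ps)) (by exact (PB.const _).mul ps),
      ← I_sub H (by exact ((pp.mul ps).mul pq).add ((PB.const _).mul (ps.mul pq)))
        (by exact ((PB.const _).mul (pp.mul ps)).add ((PB.const _).mul ps)),
      ← I_add H (by exact (PB.const _).mul pk) (by exact (((pp.mul ps).mul pq).add ((PB.const _).mul (ps.mul pq))).sub (((PB.const _).mul (pp.mul ps)).add ((PB.const _).mul ps)))]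
    congr 1; ext t
    have hk := sub_smul_dslope (deriv Q) x t
    simp only [smul_eq_mul] at hk
    linear_combination (-(p.eval t + P) * dslope (deriv Q) x t) * hSe t + (p.eval t + P) * S.eval t * hk
  rw [e1, e2, o2, ← b1] at b2
  rw [o1, ← b1] at e3
  rw [e3]
  linarith

/-- product representation -/
lemma prod (O : OP Q n p z) : p = Polynomial.C p.leadingCoeff * ∏ j, (Polynomial.X - Polynomial.C (z j)) := by
  have hm : (∏ j, (Polynomial.X - Polynomial.C (z j))).Monic :=
    Polynomial.monic_prod_of_monic _ _ (fun _ _ => Polynomial.monic_X_sub_C _)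
  have hd : (∏ j, (Polynomial.X - Polynomial.C (z j))).natDegree = n := by
    rw [Polynomial.natDegree_prod_of_monic _ _ (fun _ _ => Polynomial.monic_X_sub_C _)]
    simp
  have hdvd : (∏ j, (Polynomial.X - Polynomial.C (z j))) ∣ p := by
    apply Finset.prod_dvd_of_coprime
    · intro i _ j _ hij
      exact Polynomial.isCoprime_X_sub_C_of_isUnit_sub
        (sub_ne_zero.2 (O.mono.injective.ne hij)).isUnit
    · intro j _
      exact Polynomial.dvd_iff_isRoot.2 (O.zero j)
  obtain ⟨r, hr⟩ := hdvd
  have hr0 : r ≠ 0 := by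
    rintro rfl
    exact O.pne (by simpa using hr)
  have h1 : r.natDegree = 0 := by
    have := congrArg Polynomial.natDegree hr
    rw [hm.natDegree_mul' hr0, hd, O.deg] at this
    omega
  obtain ⟨a, ha⟩ := Polynomial.natDegree_eq_zero.1 h1
  have h2 : p.leadingCoeff = a := by
    rw [hr, ← ha, Polynomial.leadingCoeff_mul, hm.leadingCoeff]; simp
  rw [h2, ha, mul_comm]; exact hr

end OP

/-- nodal polynomial -/
noncomputable def NN (z : Fin n → ℝ) : Polynomial ℝ := ∏ j, (Polynomial.X - Polynomial.C (z j))

lemma NN_monic (z : Fin n → ℝ) : (NN z).Monic :=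
  Polynomial.monic_prod_of_monic _ _ (fun _ _ => Polynomial.monic_X_sub_C _)
lemma NN_natDegree (z : Fin n → ℝ) : (NN z).natDegree = n := by
  unfold NN
  rw [Polynomial.natDegree_prod_of_monic _ _ (fun _ _ => Polynomial.monic_X_sub_C _)]
  simp
lemma NN_degree (z : Fin n → ℝ) : (NN z).degree = n := by
  rw [Polynomial.degree_eq_natDegree (NN_monic z).ne_zero, NN_natDegree]
lemma NN_eval (z : Fin n → ℝ) (k : Fin n) : (NN z).eval (z k) = 0 := by
  unfold NN
  rw [Polynomial.eval_prod]
  exact Finset.prod_eq_zero (Finset.mem_univ k) (by simp)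

/-- Christoffel numbers -/
noncomputable def lam (Q : ℝ → ℝ) (z : Fin n → ℝ) (k : Fin n) : ℝ :=
  I Q (fun t => (Lagrange.basis Finset.univ z k).eval t)

/-- `e_k` polynomial -/
noncomputable def ep (p : Polynomial ℝ) (z : Fin n → ℝ) (k : Fin n) : Polynomial ℝ :=
  Polynomial.C p.leadingCoeff * ∏ j ∈ Finset.univ.erase k, (Polynomial.X - Polynomial.C (z j))

namespace OP

lemma orthN (O : OP Q n p z) (q : Polynomial ℝ) (hq : q.degree < n) :
    I Q (fun t => (NN z).eval t * q.eval t) = 0 := by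
  have h := O.orth q hq
  have h1 : (fun t => p.eval t * q.eval t) = fun t => p.leadingCoeff * ((NN z).eval t * q.eval t) := by
    ext t
    have := congrArg (Polynomial.eval t) O.prod
    rw [Polynomial.eval_mul, Polynomial.eval_C] at this
    rw [this]; unfold NN; ring
  rw [h1, I_mul] at h
  exact (mul_eq_zero.1 h).resolve_left O.lead.ne'

lemma quad (H : FQ Q b) (O : OP Q n p z) (r : Polynomial ℝ) (hr : r.degree < (2 * n : ℕ)) :
    I Q (fun t => r.eval t) = ∑ k, lam Q z k * r.eval (z k) := by
  have e := Polynomial.modByMonic_add_div r (NN z)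
  have hN := NN_monic z
  set m := r %ₘ NN z with hm
  set d := r /ₘ NN z with hd
  have hmd : m.degree < n := by
    have := Polynomial.degree_modByMonic_lt r hN
    rwa [NN_degree] at this
  have hdd : d.degree < n := by
    by_cases hr0 : r.degree < n
    · have : d = 0 := (Polynomial.divByMonic_eq_zero_iff hN).2 (by rwa [NN_degree])
      rw [this]; simp
    · push Not at hr0
      have h1 := Polynomial.degree_add_divByMonic hN (by rwa [NN_degree] : (NN z).degree ≤ r.degree)
      rw [← h1, NN_degree, ← hd] at hr
      by_contra hc
      push Not at hc
      have := add_le_add_left hc (n : WithBot ℕ)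
      rw [add_comm d.degree] at this
      have h3 : ((2 * n : ℕ) : WithBot ℕ) = (n : WithBot ℕ) + n := by rw [two_mul]; push_cast; rfl
      rw [h3] at hr
      exact absurd (this.trans_lt hr) (lt_irrefl _)
  have hev : ∀ k, r.eval (z k) = m.eval (z k) := by
    intro k
    have := congrArg (Polynomial.eval (z k)) e
    simp [NN_eval] at this
    exact this.symm
  have h1 : I Q (fun t => r.eval t) = I Q (fun t => m.eval t) := by
    have : (fun t => r.eval t) = fun t => m.eval t + (NN z).eval t * d.eval t := by
      ext t; rw [← e]; simp
    rw [this, I_add H (PB.poly m) ((PB.poly _).mul (PB.poly d)), O.orthN d hdd, add_zero]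
  rw [h1]
  have h2 := Lagrange.eq_interpolate (s := Finset.univ) (v := z) (f := m) (O.mono.injective.injOn) (by simpa using hmd)
  have h3 : (fun t => m.eval t) = fun t => ∑ k, m.eval (z k) * (Lagrange.basis Finset.univ z k).eval t := by
    ext t
    conv_lhs => rw [h2]
    rw [Lagrange.interpolate_apply, Polynomial.eval_finsetSum]
    simp
  rw [h3, I_sum H _ _ (fun i _ => by exact (PB.const _).mul (PB.poly _))]
  apply Finset.sum_congr rfl
  intro k _
  rw [I_mul, hev]; unfold lam; ring

lemma p_eval (O : OP Q n p z) (k : Fin n) (x : ℝ) : (x - z k) * (ep p z k).eval x = p.eval x := by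
  have := congrArg (Polynomial.eval x) O.prod
  rw [this, ep, ← Finset.mul_prod_erase Finset.univ _ (Finset.mem_univ k)]
  simp; ring

lemma ep_degree (O : OP Q n p z) (k : Fin n) : (ep p z k).natDegree + 1 = n := by
  unfold ep
  rw [Polynomial.natDegree_C_mul O.lead.ne',
    Polynomial.natDegree_prod_of_monic _ _ (fun _ _ => Polynomial.monic_X_sub_C _)]
  simp
  have := k.pos
  omega

lemma ep_ne (O : OP Q n p z) (k : Fin n) : (ep p z k).eval (z k) ≠ 0 := by
  unfold ep
  rw [Polynomial.eval_mul, Polynomial.eval_C, Polynomial.eval_prod]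
  refine mul_ne_zero O.lead.ne' (Finset.prod_ne_zero_iff.2 fun j hj => ?_)
  simp only [Polynomial.eval_sub, Polynomial.eval_X, Polynomial.eval_C]
  exact sub_ne_zero.2 (O.mono.injective.ne (Finset.ne_of_mem_erase hj).symm)

lemma ep_zero (k j : Fin n) (hj : j ≠ k) : (ep p z k).eval (z j) = 0 := by
  unfold ep
  rw [Polynomial.eval_mul, Polynomial.eval_prod, Finset.prod_eq_zero (Finset.mem_erase.2 ⟨hj, Finset.mem_univ j⟩) (by simp), mul_zero]

lemma S_node (O : OP Q n p z) (k : Fin n) : Sx p (z k) = ep p z k := by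
  have h1 := Sx_eq p (z k)
  rw [O.zero k] at h1
  have h2 : (Polynomial.X - Polynomial.C (z k)) * ep p z k = p := by
    conv_rhs => rw [O.prod]
    rw [ep, ← Finset.mul_prod_erase Finset.univ _ (Finset.mem_univ k)]
    ring
  simp only [map_zero, zero_add] at h1
  rw [h1] at h2
  have := mul_left_cancel₀ (Polynomial.X_sub_C_ne_zero (z k)) h2
  rw [← h1] at this
  exact this.symm

lemma S_eval (O : OP Q n p z) (k : Fin n) (x : ℝ) : (Sx p x).eval (z k) = (ep p z k).eval x := by
  by_cases h : x = z k
  · subst h; rw [O.S_node]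
  · have h1 := Sx_eval p x (z k)
    rw [O.zero k, ← O.p_eval k x] at h1
    have : (z k - x) * ((Sx p x).eval (z k) - (ep p z k).eval x) = 0 := by linarith
    rcases mul_eq_zero.1 this with h2 | h2
    · exact absurd (by linarith) h
    · linarith

lemma deg_sq_lt (hn : 0 < n) {q : Polynomial ℝ} (hq : q.degree < n) : (q ^ 2).degree < (2 * n : ℕ) := by
  by_cases h0 : q = 0
  · simp only [h0, ne_eq, OfNat.ofNat_ne_zero, not_false_eq_true, zero_pow, Polynomial.degree_zero]
    exact WithBot.bot_lt_coe _
  · have h1 : q.natDegree < n := (Polynomial.natDegree_lt_iff_degree_lt h0).2 hq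
    refine (Polynomial.natDegree_lt_iff_degree_lt (pow_ne_zero 2 h0)).1 ?_
    rw [Polynomial.natDegree_pow]; omega

lemma lam_ep (H : FQ Q b) (O : OP Q n p z) (k : Fin n) :
    lam Q z k * (ep p z k).eval (z k) ^ 2 = AA Q p (z k) := by
  have hn := k.pos
  have h := O.T1 H hn (z k)
  rw [O.zero k] at h
  simp only [mul_zero, zero_mul, sub_zero, ne_eq, OfNat.ofNat_ne_zero, not_false_eq_true, zero_pow] at h
  rw [← h]
  have h1 := O.quad H ((Sx p (z k)) ^ 2) (deg_sq_lt hn (O.degS hn _))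
  simp only [Polynomial.eval_pow] at h1
  rw [h1, Finset.sum_eq_single k, O.S_node]
  · intro j _ hj
    rw [O.S_node, ep_zero k j hj]; ring
  · simp

lemma AA_pos (H : FQ Q b) (O : OP Q n p z) (x : ℝ) : hh Q x / 2 ≤ AA Q p x := by
  have : hh Q x / 2 = I Q (fun t => hh Q x / 2 * p.eval t ^ 2) := by
    rw [I_mul, O.norm, mul_one]
  rw [this]
  apply I_mono H ((PB.const _).mul ((PB.poly p).pow 2)) (((PB.poly p).pow 2).mul (PB.kap H x))
  intro t
  have := (H.kap_ge x t).1
  nlinarith [sq_nonneg (p.eval t)]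

lemma AA_m (H : FQ Q b) (x : ℝ) : I Q (fun t => p.eval t ^ 2 * hh Q t) / 2 ≤ AA Q p x := by
  have : I Q (fun t => p.eval t ^ 2 * hh Q t) / 2 = I Q (fun t => 1 / 2 * (p.eval t ^ 2 * hh Q t)) := by
    rw [I_mul]; ring
  rw [this]
  apply I_mono H ((PB.const _).mul (((PB.poly p).pow 2).mul (PB.h H))) (((PB.poly p).pow 2).mul (PB.kap H x))
  intro t
  have := (H.kap_ge x t).2
  nlinarith [sq_nonneg (p.eval t)]

lemma AA_le (H : FQ Q b) (O : OP Q n p z) (x : ℝ) :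
    AA Q p x ≤ b * (hh Q x + I Q (fun t => p.eval t ^ 2 * hh Q t)) := by
  have : b * (hh Q x + I Q (fun t => p.eval t ^ 2 * hh Q t)) =
    I Q (fun t => b * (hh Q x * p.eval t ^ 2 + p.eval t ^ 2 * hh Q t)) := by
    rw [I_mul, I_add H ((PB.const _).mul ((PB.poly p).pow 2)) (((PB.poly p).pow 2).mul (PB.h H)), I_mul, O.norm, mul_one]
  rw [this]
  apply I_mono H (((PB.poly p).pow 2).mul (PB.kap H x))
    ((PB.const _).mul (((PB.const _).mul ((PB.poly p).pow 2)).add (((PB.poly p).pow 2).mul (PB.h H))))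
  intro t
  have := (H.kap_le x t)
  nlinarith [mul_le_mul_of_nonneg_left this (sq_nonneg (p.eval t))]

lemma lam_sq (H : FQ Q b) (O : OP Q n p z) (k : Fin n) : 0 < lam Q z k := by
  have hn := k.pos
  have h0 := O.ep_ne k
  have h1 := O.quad H ((ep p z k) ^ 2) (by
    rw [← O.S_node]; exact deg_sq_lt hn (O.degS hn _))
  simp only [Polynomial.eval_pow] at h1
  rw [Finset.sum_eq_single k (fun j _ hj => by rw [ep_zero k j hj]; ring) (by simp)] at h1
  have h2 : 0 ≤ I Q (fun t => (ep p z k).eval t ^ 2) := I_nonneg (fun t => sq_nonneg _)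
  have h3 : I Q (fun t => (ep p z k).eval t ^ 2) ≠ 0 := by
    intro h
    have := I_sq_eq_zero H _ h
    rw [this] at h0; simp at h0
  have h4 : 0 < (ep p z k).eval (z k) ^ 2 := by positivity
  have h5 : 0 < lam Q z k * (ep p z k).eval (z k) ^ 2 := by rw [← h1]; exact lt_of_le_of_ne h2 (Ne.symm h3)
  exact pos_of_mul_pos_left h5 h4.le

lemma AA_node_pos (H : FQ Q b) (O : OP Q n p z) (k : Fin n) : 0 < AA Q p (z k) := by
  rw [← O.lam_ep H k]
  have := O.lam_sq H k
  have := O.ep_ne k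
  positivity

/-- the key identity for the fundamental polynomials -/
lemma fund (H : FQ Q b) (O : OP Q n p z) (k : Fin n) (x : ℝ) :
    (∏ j ∈ Finset.univ.erase k, (x - z j) / (z k - z j)) ^ 2 * AA Q p (z k)
      = lam Q z k * (ep p z k).eval x ^ 2 := by
  rw [← O.lam_ep H k]
  have h0 := O.ep_ne k
  have h1 : (∏ j ∈ Finset.univ.erase k, (x - z j) / (z k - z j)) = (ep p z k).eval x / (ep p z k).eval (z k) := by
    unfold ep
    simp only [Polynomial.eval_mul, Polynomial.eval_C, Polynomial.eval_prod, Polynomial.eval_sub, Polynomial.eval_X]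
    rw [mul_div_mul_left _ _ O.lead.ne', Finset.prod_div_distrib]
  rw [h1]
  field_simp

end OP
end GW


namespace GW
variable {Q : ℝ → ℝ} {b : ℕ}

/-! ### nonnegative coefficients -/
def NC (K : Polynomial ℝ) : Prop := ∀ i, 0 ≤ K.coeff i

namespace NC
lemma add {f g : Polynomial ℝ} (hf : NC f) (hg : NC g) : NC (f + g) := fun i => by
  rw [Polynomial.coeff_add]; exact add_nonneg (hf i) (hg i)
lemma mul {f g : Polynomial ℝ} (hf : NC f) (hg : NC g) : NC (f * g) := fun i => by
  rw [Polynomial.coeff_mul]; exact Finset.sum_nonneg fun x _ => mul_nonneg (hf _) (hg _)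
lemma C {a : ℝ} (ha : 0 ≤ a) : NC (Polynomial.C a) := fun i => by
  rw [Polynomial.coeff_C]; split_ifs <;> simp [ha]
lemma X : NC (Polynomial.X) := fun i => by
  rw [Polynomial.coeff_X]; split_ifs <;> simp
lemma pow {f : Polynomial ℝ} (hf : NC f) (n : ℕ) : NC (f ^ n) := by
  induction n with
  | zero => simpa using C (zero_le_one)
  | succ n ih => rw [pow_succ]; exact ih.mul hf
lemma Sx {f : Polynomial ℝ} (hf : NC f) {x : ℝ} (hx : 0 ≤ x) : NC (Sx f x) := fun i => by
  rw [GW.Sx, Polynomial.coeff_divByMonic_X_sub_C]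
  exact Finset.sum_nonneg fun j _ => mul_nonneg (pow_nonneg hx _) (hf j)
lemma eval {f : Polynomial ℝ} (hf : NC f) {x : ℝ} (hx : 0 ≤ x) : 0 ≤ f.eval x := by
  rw [Polynomial.eval_eq_sum_range]
  exact Finset.sum_nonneg fun j _ => mul_nonneg (hf j) (pow_nonneg hx _)

lemma div_prod {ι : Type*} [DecidableEq ι] (s : Finset ι) (u : ι → ℝ) (hu : ∀ i, 0 ≤ u i)
    {f : Polynomial ℝ} (hf : NC f) : ∃ A R : Polynomial ℝ, NC A ∧ R.degree < (#s : ℕ) ∧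
      f = A * ∏ i ∈ s, (Polynomial.X - Polynomial.C (u i)) + R := by
  induction s using Finset.induction_on with
  | empty => exact ⟨f, 0, hf, by simp, by simp⟩
  | insert a s ha ih =>
    obtain ⟨A, R, hA, hR, he⟩ := ih
    refine ⟨GW.Sx A (u a), Polynomial.C (A.eval (u a)) * ∏ i ∈ s, (Polynomial.X - Polynomial.C (u i)) + R, hA.Sx (hu a), ?_, ?_⟩
    · rw [Finset.card_insert_of_notMem ha]
      refine (Polynomial.degree_add_le _ _).trans_lt (max_lt ?_ (hR.trans ?_))
      · have h1 : (∏ i ∈ s, (Polynomial.X - Polynomial.C (u i))).degree = ((#s : ℕ) : WithBot ℕ) := by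
          rw [Polynomial.degree_prod]
          simp only [Polynomial.degree_X_sub_C, Finset.sum_const, nsmul_eq_mul, mul_one]
        refine (Polynomial.degree_mul_le_of_le Polynomial.degree_C_le h1.le).trans_lt ?_
        rw [zero_add]
        exact_mod_cast Nat.lt_succ_self _
      · exact_mod_cast Nat.lt_succ_self _
    · rw [Finset.prod_insert ha]
      conv_lhs => rw [he]
      conv_lhs => rw [Sx_eq A (u a)]
      ring
end NC

lemma I_neg (H : FQ Q b) (f : ℝ → ℝ) : I Q (fun t => f (-t)) = I Q f := by
  have h1 : I Q f = ∫ t, f (-t) * exp (-(Q (-t))) := by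
    unfold I
    exact (integral_neg_eq_self (fun t => f t * exp (-(Q t))) volume).symm
  rw [h1]
  unfold I
  congr 1; ext t; rw [H.even]

variable {n : ℕ} {p : Polynomial ℝ} {z : Fin n → ℝ}

namespace OP

lemma parity (H : FQ Q b) (O : OP Q n p z) (t : ℝ) : p.eval (-t) = (-1) ^ n * p.eval t := by
  set pt := Polynomial.C ((-1 : ℝ) ^ n) * p.comp (-Polynomial.X) with hpt
  have hev : ∀ t, pt.eval t = (-1) ^ n * p.eval (-t) := by
    intro t; simp [hpt]
  have hdX : (-Polynomial.X : Polynomial ℝ).natDegree = 1 := by simp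
  have hlc : pt.leadingCoeff = p.leadingCoeff := by
    rw [hpt, Polynomial.leadingCoeff_mul, Polynomial.leadingCoeff_C,
      Polynomial.leadingCoeff_comp (by rw [hdX]; norm_num), O.deg]
    simp
    ring_nf
    rw [mul_comm n 2, pow_mul]; norm_num
  have hpne : pt ≠ 0 := by
    intro h
    rw [h] at hlc
    have := O.lead
    simp at hlc
    rw [← hlc] at this; simp at this
  have hnd : pt.natDegree = n := by
    rw [hpt, Polynomial.natDegree_C_mul (pow_ne_zero _ (by norm_num)), Polynomial.natDegree_comp, hdX, O.deg, mul_one]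
  have hdd : (p - pt).degree < n := by
    have h1 : p.degree = pt.degree := by
      rw [Polynomial.degree_eq_natDegree O.pne, Polynomial.degree_eq_natDegree hpne, O.deg, hnd]
    have := Polynomial.degree_sub_lt_left h1 O.pne hlc.symm
    rwa [Polynomial.degree_eq_natDegree O.pne, O.deg] at this
  set d := p - pt with hd
  have o1 := O.orth d hdd
  have hdc : (d.comp (-Polynomial.X)).degree < n := by
    by_cases h0 : d.comp (-Polynomial.X) = 0
    · rw [h0]; simp
    · have h1 : d ≠ 0 := by rintro h; exact h0 (by simp [h])
      refine (Polynomial.natDegree_lt_iff_degree_lt h0).1 ?_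
      rw [Polynomial.natDegree_comp, hdX, mul_one]
      exact (Polynomial.natDegree_lt_iff_degree_lt h1).2 hdd
  have o2 := O.orth _ hdc
  rw [← I_neg H] at o2
  have h0 : I Q (fun t => d.eval t ^ 2) = 0 := by
    have : (fun t => d.eval t ^ 2) = fun t => p.eval t * d.eval t -
      (-1) ^ n * (p.eval (-t) * (d.comp (-Polynomial.X)).eval (-t)) := by
      ext t
      have : d.eval t = p.eval t - (-1) ^ n * p.eval (-t) := by rw [hd, Polynomial.eval_sub, hev]
      simp only [Polynomial.eval_comp, Polynomial.eval_neg, Polynomial.eval_X, neg_neg]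
      linear_combination d.eval t * this
    have hpb : PB (fun t => p.eval (-t) * (d.comp (-Polynomial.X)).eval (-t)) := by
      have := (PB.poly (p.comp (-Polynomial.X))).mul (PB.poly d)
      convert this using 2 with t
      simp
    rw [this, I_sub H ((PB.poly p).mul (PB.poly d)) ((PB.const _).mul hpb), I_mul, o1, o2]
    ring
  have hz := I_sq_eq_zero H d h0
  have h2 : p.eval (-t) = pt.eval (-t) := by
    have := congrArg (Polynomial.eval (-t)) hz
    rw [hd] at this
    simp only [Polynomial.eval_sub, Polynomial.eval_zero] at this
    linarith
  rw [h2, hev, neg_neg]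

lemma N_eval (O : OP Q n p z) (t : ℝ) : p.eval t = p.leadingCoeff * (NN z).eval t := by
  have := congrArg (Polynomial.eval t) O.prod
  rwa [Polynomial.eval_mul, Polynomial.eval_C] at this

lemma N_parity (H : FQ Q b) (O : OP Q n p z) (t : ℝ) : (NN z).eval (-t) = (-1) ^ n * (NN z).eval t := by
  have h := O.parity H t
  rw [O.N_eval, O.N_eval] at h
  apply mul_left_cancel₀ O.lead.ne'
  linarith

lemma N_sq (H : FQ Q b) (O : OP Q n p z) (t : ℝ) :
    (NN z).eval t ^ 2 = ∏ k, (t ^ 2 - z k ^ 2) := by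
  have h1 : (NN z).eval t * (NN z).eval (-t) = (-1) ^ n * ∏ k, (t ^ 2 - z k ^ 2) := by
    unfold NN
    rw [Polynomial.eval_prod, Polynomial.eval_prod, ← Finset.prod_mul_distrib]
    have : (-1 : ℝ) ^ n = ∏ _k : Fin n, (-1 : ℝ) := by simp
    rw [this, ← Finset.prod_mul_distrib]
    apply Finset.prod_congr rfl
    intro k _
    simp; ring
  rw [O.N_parity H] at h1
  have h2 : ((-1 : ℝ) ^ n) ≠ 0 := pow_ne_zero _ (by norm_num)
  apply mul_left_cancel₀ h2
  linarith

lemma quad_mono (H : FQ Q b) (O : OP Q n p z) (i : ℕ) :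
    ∑ k, lam Q z k * z k ^ i ≤ I Q (fun t => t ^ i) := by
  obtain ⟨j, s, hs, rfl⟩ : ∃ j s, s < 2 ∧ i = 2 * j + s := ⟨i / 2, i % 2, Nat.mod_lt _ (by norm_num), by omega⟩
  obtain ⟨A, R, hA, hR, he⟩ := NC.div_prod (Finset.univ : Finset (Fin n)) (fun k => z k ^ 2)
    (fun k => sq_nonneg _) (NC.X.pow j)
  have hev : ∀ t : ℝ, t ^ (2 * j + s) = t ^ s * (A.eval (t ^ 2) * (NN z).eval t ^ 2) + t ^ s * R.eval (t ^ 2) := by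
    intro t
    have := congrArg (Polynomial.eval (t ^ 2)) he
    rw [Polynomial.eval_add, Polynomial.eval_mul, Polynomial.eval_prod] at this
    simp only [Polynomial.eval_pow, Polynomial.eval_X, Polynomial.eval_sub, Polynomial.eval_C] at this
    rw [← O.N_sq H t] at this
    rw [pow_add, pow_mul, this]; ring
  set r := Polynomial.X ^ s * R.comp (Polynomial.X ^ 2) with hr
  have hre : ∀ t, r.eval t = t ^ s * R.eval (t ^ 2) := by intro t; simp [hr]
  have hrd : r.degree < (2 * n : ℕ) := by
    by_cases h0 : r = 0
    · rw [h0, Polynomial.degree_zero]; exact WithBot.bot_lt_coe _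
    · refine (Polynomial.natDegree_lt_iff_degree_lt h0).1 ?_
      have hR0 : R ≠ 0 := by rintro h; exact h0 (by simp [hr, h])
      have h1 := (Polynomial.natDegree_lt_iff_degree_lt hR0).2 hR
      simp only [Finset.card_univ, Fintype.card_fin] at h1
      have h2 : r.natDegree ≤ s + R.natDegree * 2 := by
        refine Polynomial.natDegree_mul_le.trans ?_
        rw [Polynomial.natDegree_comp]
        simp
      omega
  have q := O.quad H r hrd
  have e1 : I Q (fun t => t ^ (2 * j + s)) = I Q (fun t => t ^ s * (A.eval (t ^ 2) * (NN z).eval t ^ 2)) + I Q (fun t => r.eval t) := by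
    have hpb : PB (fun t => t ^ s * (A.eval (t ^ 2) * (NN z).eval t ^ 2)) := by
      have := (PB.poly (Polynomial.X ^ s)).mul ((PB.poly (A.comp (Polynomial.X ^ 2))).mul ((PB.poly (NN z)).pow 2))
      simpa using this
    rw [← I_add H hpb (PB.poly r)]
    congr 1; ext t; rw [hev, hre]
  have e2 : ∑ k, lam Q z k * z k ^ (2 * j + s) = ∑ k, lam Q z k * r.eval (z k) := by
    apply Finset.sum_congr rfl
    intro k _
    rw [hev, hre, NN_eval]; ring
  rw [e1, e2, ← q]
  have : 0 ≤ I Q (fun t => t ^ s * (A.eval (t ^ 2) * (NN z).eval t ^ 2)) := by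
    interval_cases s
    · refine I_nonneg fun t => ?_
      have := hA.eval (sq_nonneg t)
      simp only [pow_zero, one_mul]
      exact mul_nonneg this (sq_nonneg _)
    · refine le_of_eq (I_odd H fun t => ?_).symm
      simp only [pow_one, neg_sq, O.N_sq H]
      ring
  linarith

lemma quad_ineq (H : FQ Q b) (O : OP Q n p z) (K : Polynomial ℝ) (hK : NC K) :
    ∑ k, lam Q z k * K.eval (z k) ≤ I Q (fun t => K.eval t) := by
  have h1 : I Q (fun t => K.eval t) = ∑ i ∈ Finset.range (K.natDegree + 1), K.coeff i * I Q (fun t => t ^ i) := by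
    simp only [Polynomial.eval_eq_sum_range]
    rw [I_sum H _ _ (fun i _ => by exact (PB.const _).mul (PB.id.pow i))]
    simp only [I_mul]
  have h2 : ∑ k, lam Q z k * K.eval (z k) = ∑ i ∈ Finset.range (K.natDegree + 1), K.coeff i * ∑ k, lam Q z k * z k ^ i := by
    simp only [Polynomial.eval_eq_sum_range, Finset.mul_sum]
    rw [Finset.sum_comm]
    apply Finset.sum_congr rfl; intro i _
    apply Finset.sum_congr rfl; intro k _
    ring
  rw [h1, h2]
  exact Finset.sum_le_sum fun i _ => mul_le_mul_of_nonneg_left (O.quad_mono H i) (hK i)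

/-- The sum `D` -/
lemma D_eq (H : FQ Q b) (O : OP Q n p z) (hn : 0 < n) (x : ℝ) (G : Polynomial ℝ)
    (hG : G.derivative.eval x = deriv Q x * G.eval x) :
    ∑ k, lam Q z k * G.eval (z k) * (ep p z k).eval x ^ 2 =
      G.eval x * (AA Q p x - p.eval x ^ 2 * I Q (dslope (deriv Q) x))
       + p.eval x ^ 2 * ∑ k, lam Q z k * (Sx (Sx G x) x).eval (z k) := by
  have h1 : (Sx G x).eval x = G.derivative.eval x := by
    have := congrArg (fun f => Polynomial.eval x (Polynomial.derivative f)) (Sx_eq G x)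
    simp at this
    exact this.symm
  have hd := O.degS hn x
  have q1 := O.quad H (Sx p x ^ 2) (deg_sq_lt hn hd)
  have q2 := O.quad H (Sx p x) (hd.trans_le (by exact_mod_cast (by omega : n ≤ 2 * n)))
  have t1 := O.T1 H hn x
  simp only [Polynomial.eval_pow] at q1
  rw [← t1, q1, q2, Finset.mul_sum, ← Finset.sum_sub_distrib, Finset.mul_sum, Finset.mul_sum, ← Finset.sum_add_distrib]
  apply Finset.sum_congr rfl
  intro k _
  rw [O.S_eval k x]
  have a1 := Sx_eval G x (z k)
  have a2 := Sx_eval (Sx G x) x (z k)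
  rw [h1, hG] at a2
  have a3 := O.p_eval k x
  set e := (ep p z k).eval x
  set K := (Sx (Sx G x) x).eval (z k)
  set S := (Sx G x).eval (z k)
  rw [← a3]
  have a4 : G.eval (z k) = G.eval x + (z k - x) * (deriv Q x * G.eval x + (z k - x) * K) := by
    rw [a2]; linarith
  rw [a4]; ring

end OP

/-- abstract FTC -/
lemma ftc_nonneg {F v : ℝ → ℝ} {x l m : ℝ} (hF : Continuous F) (hd : ∀ t, t ≠ x → HasDerivAt F (v t) t)
    (hv : ∀ t, 0 ≤ v t) (hl : Tendsto F atTop (nhds l)) (hm : Tendsto F atBot (nhds m)) :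
    Integrable v ∧ ∫ t, v t = l - m := by
  have i1 : IntegrableOn v (Set.Ioi x) :=
    integrableOn_Ioi_deriv_of_nonneg hF.continuousWithinAt (fun t ht => hd t (ne_of_gt ht)) (fun t _ => hv t) hl
  have i2' : IntegrableOn (fun s => v (-s)) (Set.Ioi (-x)) := by
    apply integrableOn_Ioi_deriv_of_nonneg (g := fun s => - F (-s)) (l := -m)
    · exact (hF.comp continuous_neg).neg.continuousWithinAt
    · intro s hs
      have hs' : -s ≠ x := by
        have : -x < s := hs
        intro h; linarith
      have := ((hd (-s) hs').scomp s (hasDerivAt_neg s)).neg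
      exact this.congr_deriv (by simp)
    · exact fun s _ => hv _
    · exact (hm.comp tendsto_neg_atTop_atBot).neg
  have i2 : IntegrableOn v (Set.Iic x) := by
    rw [integrableOn_Iic_iff_integrableOn_Iio]
    rw [← integrable_indicator_iff measurableSet_Ioi] at i2'
    rw [← integrable_indicator_iff measurableSet_Iio]
    have := i2'.comp_neg
    refine this.congr (Eventually.of_forall fun t => ?_)
    simp only [Set.indicator, Set.mem_Iio, Set.mem_Ioi, neg_lt_neg_iff, neg_neg]
  have hi : Integrable v := by
    rw [← integrableOn_univ, ← Set.Iic_union_Ioi (a := x)]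
    exact i2.union i1
  refine ⟨hi, ?_⟩
  rw [← intervalIntegral.integral_Iic_add_Ioi i2 i1,
    integral_Iic_of_hasDerivAt_of_tendsto hF.continuousWithinAt (fun t ht => hd t (ne_of_lt ht)) i2 hm,
    integral_Ioi_of_hasDerivAt_of_tendsto hF.continuousWithinAt (fun t ht => hd t (ne_of_gt ht)) i1 hl]
  ring

/-- `φ = G w` -/
noncomputable def ph (Q : ℝ → ℝ) (G : Polynomial ℝ) (t : ℝ) : ℝ := G.eval t * exp (-(Q t))

/-- integrand of `-H` -/
noncomputable def vv (Q : ℝ → ℝ) (G : Polynomial ℝ) (x t : ℝ) : ℝ := (ph Q G x - ph Q G t) / (t - x) ^ 2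

lemma H_formula (H : FQ Q b) (x : ℝ) (G : Polynomial ℝ)
    (hG : G.derivative.eval x = deriv Q x * G.eval x) (hmax : ∀ t, ph Q G t ≤ ph Q G x) :
    Integrable (vv Q G x) ∧
    I Q (fun t => (Sx (Sx G x) x).eval t) - G.eval x * I Q (dslope (deriv Q) x) = - ∫ t, vv Q G x t := by
  have h1 : (Sx G x).eval x = G.derivative.eval x := by
    have := congrArg (fun f => Polynomial.eval x (Polynomial.derivative f)) (Sx_eq G x)
    simp at this
    exact this.symm
  set K := Sx (Sx G x) x
  set w : ℝ → ℝ := fun t => exp (-(Q t)) with hw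
  have dw : ∀ t, HasDerivAt w (-(deriv Q t) * w t) t := fun t => by
    exact ((H.d0 t).neg.exp).congr_deriv (by simp [hw]; ring)
  have cw : Continuous w := continuous_exp.comp H.cQ.neg
  set g := dslope w x with hg
  have cg : Continuous g := by
    have h := (continuousOn_dslope (f := w) (s := Set.univ) (a := x) (by simp)).2
      ⟨cw.continuousOn, (dw x).differentiableAt⟩
    exact continuousOn_univ.1 h
  have hpb : PB (fun t => K.eval t - G.eval x * dslope (deriv Q) x t) :=
    (PB.poly K).sub ((PB.const _).mul (PB.kap H x))
  set ψ : ℝ → ℝ := fun t => (K.eval t - G.eval x * dslope (deriv Q) x t) * exp (-(Q t)) with hψ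
  have iψ : Integrable ψ := hpb.integrable H
  have cψ : Continuous ψ := hpb.1.mul cw
  have hI : I Q (fun t => K.eval t) - G.eval x * I Q (dslope (deriv Q) x) = ∫ t, ψ t := by
    rw [← I_mul, ← I_sub H (PB.poly K) (by exact (PB.const _).mul (PB.kap H x))]
    rfl
  set F : ℝ → ℝ := fun t => G.eval x * g t - ∫ s in x..t, ψ s with hF
  have dψ : ∀ t, HasDerivAt (fun t => ∫ s in x..t, ψ s) (ψ t) t := fun t =>
    intervalIntegral.integral_hasDerivAt_right (cψ.intervalIntegrable _ _)
      cψ.aestronglyMeasurable.stronglyMeasurableAtFilter cψ.continuousAt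
  have cF : Continuous F := by
    have : Continuous (fun t => ∫ s in x..t, ψ s) :=
      continuous_iff_continuousAt.2 fun t => (dψ t).continuousAt
    exact (cg.const_mul _).sub this
  have hgt : ∀ t, t ≠ x → g t = (w t - w x) / (t - x) := fun t ht => by
    rw [hg, dslope_of_ne _ ht, slope_def_field]
  have dF : ∀ t, t ≠ x → HasDerivAt F (vv Q G x t) t := by
    intro t ht
    have ht' : t - x ≠ 0 := sub_ne_zero.2 ht
    have d1 : HasDerivAt (fun t => (w t - w x) / (t - x))
        ((-(deriv Q t) * w t * (t - x) - (w t - w x) * 1) / (t - x) ^ 2) t :=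
      ((dw t).sub_const (w x)).div ((hasDerivAt_id t).sub_const x) ht'
    have d2 : HasDerivAt g ((-(deriv Q t) * w t * (t - x) - (w t - w x) * 1) / (t - x) ^ 2) t := by
      refine d1.congr_of_eventuallyEq ?_
      filter_upwards [isOpen_ne.mem_nhds ht] with s hs
      exact hgt s hs
    refine ((d2.const_mul (G.eval x)).sub (dψ t)).congr_deriv ?_
    have a1 := Sx_eval G x t
    have a2 := Sx_eval (Sx G x) x t
    rw [h1, hG] at a2
    have a4 : G.eval t = G.eval x + (t - x) * (deriv Q x * G.eval x + (t - x) * K.eval t) := by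
      rw [a2]; linarith
    have hk := sub_smul_dslope (deriv Q) x t
    simp only [smul_eq_mul] at hk
    have hk' : dslope (deriv Q) x t = (deriv Q t - deriv Q x) / (t - x) := by
      rw [← hk]; field_simp
    simp only [hψ, vv, ph, hk']
    rw [a4]
    change _ = (G.eval x * w x - _ * w t) / _
    change G.eval x * _ - _ * w t = _
    field_simp
    ring
  have hv : ∀ t, 0 ≤ vv Q G x t := fun t => div_nonneg (sub_nonneg.2 (hmax t)) (sq_nonneg _)
  have tw0 : Tendsto w (cocompact ℝ) (nhds 0) := by
    have := (PB.const 1).tendsto H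
    simpa only [one_mul] using this
  have hc : cocompact ℝ = atBot ⊔ atTop := cocompact_eq_atBot_atTop
  rw [hc, tendsto_sup] at tw0
  have tg1 : Tendsto g atTop (nhds 0) := by
    have : Tendsto (fun t => (w t - w x) / (t - x)) atTop (nhds 0) :=
      (tw0.2.sub_const (w x)).div_atTop (tendsto_atTop_add_const_right _ (-x) tendsto_id)
    refine this.congr' ?_
    filter_upwards [eventually_ne_atTop x] with t ht
    exact (hgt t ht).symm
  have tg2 : Tendsto g atBot (nhds 0) := by
    have : Tendsto (fun t => (w t - w x) / (t - x)) atBot (nhds 0) :=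
      (tw0.1.sub_const (w x)).div_atBot (tendsto_atBot_add_const_right _ (-x) tendsto_id)
    refine this.congr' ?_
    filter_upwards [eventually_ne_atBot x] with t ht
    exact (hgt t ht).symm
  have l1 : Tendsto F atTop (nhds (- ∫ s in Set.Ioi x, ψ s)) := by
    have := (tg1.const_mul (G.eval x)).sub (intervalIntegral_tendsto_integral_Ioi x iψ.integrableOn tendsto_id)
    simpa using this
  have l2 : Tendsto F atBot (nhds (∫ s in Set.Iic x, ψ s)) := by
    have := (tg2.const_mul (G.eval x)).add (intervalIntegral_tendsto_integral_Iic x iψ.integrableOn tendsto_id)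
    simp only [mul_zero, zero_add] at this
    refine this.congr ?_
    intro t
    simp only [hF, id]
    rw [intervalIntegral.integral_symm]; ring
  obtain ⟨r1, r2⟩ := ftc_nonneg cF dF hv l1 l2
  refine ⟨r1, ?_⟩
  rw [hI, r2, ← intervalIntegral.integral_Iic_add_Ioi (b := x) iψ.integrableOn iψ.integrableOn]
  ring

namespace OP
variable {n : ℕ} {p : Polynomial ℝ} {z : Fin n → ℝ}

/-- inequality form -/
lemma D_le (H : FQ Q b) (O : OP Q n p z) (hn : 0 < n) {x : ℝ} (hx : 0 ≤ x) (G : Polynomial ℝ) (hNC : NC G)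
    (hG : G.derivative.eval x = deriv Q x * G.eval x) (hmax : ∀ t, ph Q G t ≤ ph Q G x) :
    ∑ k, lam Q z k * G.eval (z k) * (ep p z k).eval x ^ 2 ≤
      G.eval x * AA Q p x - p.eval x ^ 2 * ∫ t, vv Q G x t := by
  rw [O.D_eq H hn x G hG]
  have h1 := (H_formula H x G hG hmax).2
  have h2 := O.quad_ineq H _ ((hNC.Sx hx).Sx hx)
  have := mul_le_mul_of_nonneg_left h2 (sq_nonneg (p.eval x))
  nlinarith

lemma D_exact (H : FQ Q b) (O : OP Q n p z) (hn : 0 < n) (x : ℝ) (G : Polynomial ℝ)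
    (hdeg : (Sx (Sx G x) x).degree < (2 * n : ℕ))
    (hG : G.derivative.eval x = deriv Q x * G.eval x) (hmax : ∀ t, ph Q G t ≤ ph Q G x) :
    ∑ k, lam Q z k * G.eval (z k) * (ep p z k).eval x ^ 2 =
      G.eval x * AA Q p x - p.eval x ^ 2 * ∫ t, vv Q G x t := by
  rw [O.D_eq H hn x G hG, ← O.quad H _ hdeg]
  have h1 := (H_formula H x G hG hmax).2
  linear_combination p.eval x ^ 2 * h1

end OP
end GW


namespace GW
variable {Q : ℝ → ℝ} {b : ℕ}

lemma log_up {y : ℝ} (h1 : -(1/2) ≤ y) (h2 : y ≤ 1) : Real.log (1 + y) ≤ y - y ^ 2 / 4 := by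
  have h := min_of_deriv_sign (f := fun s => s - s ^ 2 / 4 - Real.log (1 + s))
    (f' := fun s => s * (1 - s) / (2 * (1 + s))) (x := 0) (t := y) (fun s hs => by
      have hs1 : -(1/2) ≤ s := le_trans (le_min (by norm_num) h1) hs.1
      have h3 : (1 + s) ≠ 0 := by linarith
      have := ((hasDerivAt_id s).sub ((hasDerivAt_pow 2 s).div_const 4)).sub
        (((hasDerivAt_id s).const_add 1).log h3)
      refine this.congr_deriv ?_
      simp only [id]
      field_simp
      push_cast
      ring) (fun s hs => by
      have hs1 : -(1/2) ≤ s := le_trans (le_min (by norm_num) h1) hs.1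
      have hs2 : s ≤ 1 := le_trans hs.2 (max_le (by norm_num) h2)
      have : s * (1 - s) / (2 * (1 + s)) * (s - 0) = s ^ 2 * ((1 - s) / (2 * (1 + s))) := by ring
      rw [this]
      exact mul_nonneg (sq_nonneg s) (div_nonneg (by linarith) (by linarith)))
  simp at h
  linarith

lemma log_lo {y : ℝ} (h1 : -(1/2) ≤ y) : y - y ^ 2 ≤ Real.log (1 + y) := by
  have h := min_of_deriv_sign (f := fun s => Real.log (1 + s) - s + s ^ 2)
    (f' := fun s => s * (1 + 2 * s) / (1 + s)) (x := 0) (t := y) (fun s hs => by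
      have hs1 : -(1/2) ≤ s := le_trans (le_min (by norm_num) h1) hs.1
      have h3 : (1 + s) ≠ 0 := by linarith
      have := ((((hasDerivAt_id s).const_add 1).log h3).sub (hasDerivAt_id s)).add (hasDerivAt_pow 2 s)
      refine this.congr_deriv ?_
      simp only [id]
      field_simp
      push_cast
      ring) (fun s hs => by
      have hs1 : -(1/2) ≤ s := le_trans (le_min (by norm_num) h1) hs.1
      have : s * (1 + 2 * s) / (1 + s) * (s - 0) = s ^ 2 * ((1 + 2 * s) / (1 + s)) := by ring
      rw [this]
      exact mul_nonneg (sq_nonneg s) (div_nonneg (by linarith) (by linarith)))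
  simp at h
  linarith

noncomputable def RR (Q : ℝ → ℝ) (x : ℝ) : ℝ := 1 + hh Q x
noncomputable def JJ (Q : ℝ → ℝ) (x : ℝ) : ℕ := ⌊hh Q x * x ^ 2⌋₊ + 1
noncomputable def et (Q : ℝ → ℝ) (x : ℝ) : ℝ := hh Q x / (2 * JJ Q x)
noncomputable def GG (Q : ℝ → ℝ) (x : ℝ) : Polynomial ℝ :=
  (Polynomial.C (1 - et Q x * x ^ 2) + Polynomial.C (et Q x) * Polynomial.X ^ 2) ^ JJ Q x

lemma JJ_pos (x : ℝ) : (0:ℝ) < JJ Q x := by unfold JJ; positivity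
lemma JJ_one (x : ℝ) : (1:ℝ) ≤ JJ Q x := by unfold JJ; push_cast; linarith [Nat.cast_nonneg (α := ℝ) ⌊hh Q x * x ^ 2⌋₊]
lemma JJ_gt (x : ℝ) : hh Q x * x ^ 2 < JJ Q x := by unfold JJ; push_cast; exact Nat.lt_floor_add_one _
lemma JJ_le (H : FQ Q b) (x : ℝ) : (JJ Q x : ℝ) ≤ hh Q x * x ^ 2 + 1 := by
  unfold JJ; push_cast
  have := Nat.floor_le (mul_nonneg (H.hnn x) (sq_nonneg x))
  linarith

lemma RR_pos (H : FQ Q b) (x : ℝ) : 1 ≤ RR Q x := by have := H.hnn x; unfold RR; linarith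

lemma et_nn (H : FQ Q b) (x : ℝ) : 0 ≤ et Q x := div_nonneg (H.hnn x) (by have := JJ_pos (Q := Q) x; linarith)
lemma et_mul (x : ℝ) : JJ Q x * et Q x = hh Q x / 2 := by
  have := JJ_pos (Q := Q) x
  unfold et; field_simp
lemma et_half (x : ℝ) : et Q x * x ^ 2 ≤ 1 / 2 := by
  have h1 := JJ_pos (Q := Q) x
  have h2 := JJ_gt (Q := Q) x
  unfold et
  rw [div_mul_eq_mul_div, div_le_div_iff₀ (by linarith) (by norm_num)]
  linarith

lemma GG_eval (x t : ℝ) : (GG Q x).eval t = (1 + et Q x * (t ^ 2 - x ^ 2)) ^ JJ Q x := by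
  unfold GG; simp; ring

lemma GG_self (x : ℝ) : (GG Q x).eval x = 1 := by rw [GG_eval]; simp

lemma GG_deriv (H : FQ Q b) (x : ℝ) : (GG Q x).derivative.eval x = deriv Q x * (GG Q x).eval x := by
  rw [GG_self, mul_one, H.qeq]
  unfold GG
  have e := et_mul (Q := Q) x
  simp only [Polynomial.derivative_pow, Polynomial.derivative_add, Polynomial.derivative_C, Polynomial.derivative_mul]
  simp
  linear_combination (2 * x) * e

lemma GG_NC (H : FQ Q b) (x : ℝ) : NC (GG Q x) := by
  have := et_half (Q := Q) x
  exact ((NC.C (by linarith)).add ((NC.C (et_nn H x)).mul (NC.X.pow 2))).pow _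

lemma yy_ge (H : FQ Q b) (x t : ℝ) : -(1/2) ≤ et Q x * (t ^ 2 - x ^ 2) := by
  have h1 := et_half (Q := Q) x
  have h2 := mul_nonneg (et_nn H x) (sq_nonneg t)
  linarith

lemma ph_self (x : ℝ) : ph Q (GG Q x) x = exp (-(Q x)) := by unfold ph; rw [GG_self, one_mul]

lemma GG_nn (H : FQ Q b) (x t : ℝ) : 0 ≤ (GG Q x).eval t := by
  rw [GG_eval]; have := yy_ge H x t; exact pow_nonneg (by linarith) _

lemma ph_le (H : FQ Q b) (x t : ℝ) : ph Q (GG Q x) t ≤ exp (-(Q x)) *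
    exp (JJ Q x * (Real.log (1 + et Q x * (t ^ 2 - x ^ 2)) - et Q x * (t ^ 2 - x ^ 2))) := by
  have hy := yy_ge H x t
  have hq := H.Qlower x t
  have e := et_mul (Q := Q) x
  unfold ph
  rw [GG_eval]
  set y := et Q x * (t ^ 2 - x ^ 2) with hyd
  have h1 : (1 + y) ^ JJ Q x = exp (JJ Q x * Real.log (1 + y)) := by
    rw [mul_comm, Real.exp_mul, Real.exp_log (by linarith)]; norm_cast
  rw [h1, ← exp_add, ← exp_add]
  apply exp_le_exp.2
  have : JJ Q x * y = hh Q x / 2 * (t ^ 2 - x ^ 2) := by rw [← e, hyd]; ring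
  rw [mul_sub, this]
  linarith

lemma ph_max (H : FQ Q b) (x t : ℝ) : ph Q (GG Q x) t ≤ ph Q (GG Q x) x := by
  have h := ph_le H x t
  have hy := yy_ge H x t
  rw [ph_self]
  refine h.trans ?_
  have h2 := Real.log_le_sub_one_of_pos (x := 1 + et Q x * (t ^ 2 - x ^ 2)) (by linarith)
  have h3 : exp (JJ Q x * (Real.log (1 + et Q x * (t ^ 2 - x ^ 2)) - et Q x * (t ^ 2 - x ^ 2))) ≤ 1 := by
    rw [exp_le_one_iff]
    exact mul_nonpos_of_nonneg_of_nonpos (JJ_pos x).le (by linarith)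
  have := exp_pos (-(Q x))
  nlinarith

lemma ph_up (H : FQ Q b) : ∃ c : ℝ, 0 < c ∧ ∀ x t : ℝ, 1 ≤ x → 0 ≤ t →
    ph Q (GG Q x) t ≤ exp (-(Q x)) / (1 + c * hh Q x * (t - x) ^ 2) := by
  have hh1 := H.hpos' one_pos
  set θ := hh Q 1 / (1 + hh Q 1) with hθ
  have hθ0 : 0 < θ := by positivity
  refine ⟨θ / 128, by positivity, fun x t hx ht => ?_⟩
  refine (ph_le H x t).trans ?_
  rw [div_eq_mul_inv]
  refine mul_le_mul_of_nonneg_left ?_ (exp_pos _).le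
  have hy := yy_ge H x t
  set y := et Q x * (t ^ 2 - x ^ 2) with hyd
  have hJ := JJ_one (Q := Q) x
  have hhx := H.hnn x
  set J : ℝ := ((JJ Q x : ℕ) : ℝ) with hJd
  set s2 := (t - x) ^ 2 with hs2
  have hs20 : 0 ≤ s2 := sq_nonneg _
  have hJy : θ / 4 * hh Q x * s2 ≤ J * y ^ 2 := by
    have e := et_mul (Q := Q) x
    have f1 : θ * J ≤ hh Q x * x ^ 2 := by
      have a1 := JJ_le H x
      have a2 : hh Q 1 ≤ hh Q x * x ^ 2 := by
        have := H.hmono zero_le_one hx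
        have h2 : 1 ≤ x ^ 2 := by nlinarith
        nlinarith [mul_nonneg hhx (sub_nonneg.2 h2)]
      rw [hθ, div_mul_eq_mul_div, div_le_iff₀ (by linarith)]
      nlinarith
    have f2 : x ^ 2 * s2 ≤ (t ^ 2 - x ^ 2) ^ 2 := by
      have : (t ^ 2 - x ^ 2) ^ 2 = (t + x) ^ 2 * s2 := by rw [hs2]; ring
      rw [this]
      exact mul_le_mul_of_nonneg_right (by nlinarith) hs20
    have f3 : J * (J * y ^ 2) = (hh Q x / 2) ^ 2 * (t ^ 2 - x ^ 2) ^ 2 := by rw [← e, hyd]; ring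
    have f4 : J * (θ / 4 * hh Q x * s2) ≤ J * (J * y ^ 2) := by
      rw [f3]
      calc J * (θ / 4 * hh Q x * s2) = (θ * J) * (hh Q x * s2 / 4) := by ring
        _ ≤ (hh Q x * x ^ 2) * (hh Q x * s2 / 4) := by gcongr
        _ = (hh Q x / 2) ^ 2 * (x ^ 2 * s2) := by ring
        _ ≤ _ := by gcongr
    exact le_of_mul_le_mul_left f4 (by linarith)
  have hden : 0 < 1 + θ / 128 * hh Q x * s2 := by positivity
  rw [← inv_inv (exp _), ← exp_neg]
  apply inv_anti₀ hden
  rcases le_total y 1 with h1 | h1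
  · have hl := log_up hy h1
    have : J * y ^ 2 / 4 ≤ -(J * (Real.log (1 + y) - y)) := by nlinarith
    have h3 := add_one_le_exp (-(J * (Real.log (1 + y) - y)))
    have h4 : 0 ≤ θ * hh Q x * s2 := by positivity
    linarith
  · have h2 : Real.log (1 + y) ≤ 3 * y / 4 := by
      rw [Real.log_le_iff_le_exp (by linarith)]
      have := Real.quadratic_le_exp_of_nonneg (x := 3 * y / 4) (by linarith)
      nlinarith
    have h3 : J * y / 4 ≤ -(J * (Real.log (1 + y) - y)) := by nlinarith
    have h4 := Real.quadratic_le_exp_of_nonneg (x := J * y / 4) (by positivity)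
    have h5 := exp_le_exp.2 h3
    have h6 : J * y ^ 2 ≤ (J * y) ^ 2 := by nlinarith [sq_nonneg y, mul_nonneg (sub_nonneg.2 hJ) (sq_nonneg y)]
    have h7 : 0 ≤ J * y / 4 := by positivity
    nlinarith

lemma ph_lo (H : FQ Q b) : ∃ C : ℝ, 1 ≤ C ∧ ∀ x t : ℝ, RR Q x * (t - x) ^ 2 ≤ 1 / 4 →
    exp (-(Q x)) * exp (-(C * (RR Q x * (t - x) ^ 2))) ≤ ph Q (GG Q x) t := by
  obtain ⟨C, hC1, hC⟩ := H.exists_Qupper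
  have hh1 := H.hpos' one_pos
  refine ⟨C + (2 + (1 + hh Q 1) / 8), by linarith, fun x t hxt => ?_⟩
  have hy := yy_ge H x t
  have e := et_mul (Q := Q) x
  have hR := RR_pos H x
  have hs : |t - x| ≤ 1 / 2 := by
    apply abs_le_of_sq_le_sq _ (by norm_num)
    nlinarith [sq_nonneg (t - x)]
  have hq := hC x t (by linarith)
  have hhx := H.hnn x
  have hJ := JJ_one (Q := Q) x
  unfold ph
  rw [GG_eval]
  have hJF := (JJ_gt (Q := Q) x).le
  set y := et Q x * (t ^ 2 - x ^ 2) with hyd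
  have h1 : (1 + y) ^ JJ Q x = exp (JJ Q x * Real.log (1 + y)) := by
    rw [mul_comm, Real.exp_mul, Real.exp_log (by linarith)]; norm_cast
  rw [h1, ← exp_add, ← exp_add]
  apply exp_le_exp.2
  set J : ℝ := ((JJ Q x : ℕ) : ℝ) with hJd
  have hl := mul_le_mul_of_nonneg_left (log_lo hy) (by linarith : 0 ≤ J)
  have hJy : J * y = deriv Q x * (t - x) + hh Q x / 2 * (t - x) ^ 2 := by
    rw [H.qeq]
    have : J * y = (J * et Q x) * (t ^ 2 - x ^ 2) := by rw [hyd]; ring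
    rw [this, e]; ring
  have hJ2 : J * y ^ 2 ≤ (2 + (1 + hh Q 1) / 8) * (hh Q x * (t - x) ^ 2) := by
    have hhJ : hh Q x ≤ (1 + hh Q 1) * J := by
      rcases le_total 1 |x| with h | h
      · have : 1 ≤ x ^ 2 := by rw [← sq_abs]; nlinarith
        nlinarith
      · have : hh Q x ≤ hh Q 1 := H.hmonoabs (by simpa using h)
        nlinarith
    have f1 : (t + x) ^ 2 ≤ 8 * x ^ 2 + 1 / 2 := by
      have : (t - x) ^ 2 ≤ 1 / 4 := by nlinarith [sq_nonneg (t - x)]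
      nlinarith [sq_nonneg (2 * x - (t - x))]
    have f3 : J * (J * y ^ 2) = (hh Q x / 2) ^ 2 * ((t + x) ^ 2 * (t - x) ^ 2) := by rw [← e, hyd]; ring
    have f4 : J * (J * y ^ 2) ≤ J * ((2 + (1 + hh Q 1) / 8) * (hh Q x * (t - x) ^ 2)) := by
      rw [f3]
      have hs0 := sq_nonneg (t - x)
      calc (hh Q x / 2) ^ 2 * ((t + x) ^ 2 * (t - x) ^ 2)
          ≤ (hh Q x / 2) ^ 2 * ((8 * x ^ 2 + 1 / 2) * (t - x) ^ 2) := by gcongr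
        _ = (2 * (hh Q x * x ^ 2) + hh Q x / 8) * (hh Q x * (t - x) ^ 2) := by ring
        _ ≤ (2 * J + ((1 + hh Q 1) * J) / 8) * (hh Q x * (t - x) ^ 2) := by gcongr
        _ = _ := by ring
    exact le_of_mul_le_mul_left f4 (by linarith)
  have hRR : hh Q x * (t - x) ^ 2 ≤ RR Q x * (t - x) ^ 2 := by
    unfold RR; nlinarith [sq_nonneg (t - x)]
  have h5 : (2 + (1 + hh Q 1) / 8) * (hh Q x * (t - x) ^ 2) ≤ (2 + (1 + hh Q 1) / 8) * (RR Q x * (t - x) ^ 2) := by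
    gcongr
  have h6 : 0 ≤ hh Q x / 2 * (t - x) ^ 2 := by positivity
  unfold RR at *
  nlinarith

end GW


namespace GW
variable {Q : ℝ → ℝ} {b : ℕ} {n : ℕ} {p : Polynomial ℝ} {z : Fin n → ℝ}

lemma one_le_inv_aux {c : ℝ} (hc : 0 < c) : 1 ≤ 1 + 1 / c := by
  have : 0 < 1 / c := by positivity
  linarith

lemma cauchy_int {r : ℝ} (hr : 0 < r) (x : ℝ) :
    Integrable (fun t : ℝ => (1 + r * (t - x) ^ 2)⁻¹) ∧ ∫ t : ℝ, (1 + r * (t - x) ^ 2)⁻¹ = π / √r := by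
  have hs : 0 < √r := Real.sqrt_pos.2 hr
  have e : (fun t : ℝ => (1 + r * (t - x) ^ 2)⁻¹) = fun t => (fun u : ℝ => (1 + (√r * u) ^ 2)⁻¹) (t - x) := by
    funext t
    simp only [mul_pow, Real.sq_sqrt hr.le]
  rw [e]
  constructor
  · exact (integrable_inv_one_add_sq.comp_mul_left' hs.ne').comp_sub_right x
  · rw [integral_sub_right_eq_self (fun u : ℝ => (1 + (√r * u) ^ 2)⁻¹) x,
      Measure.integral_comp_mul_left (fun u : ℝ => (1 + u ^ 2)⁻¹) (√r), integral_univ_inv_one_add_sq,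
      smul_eq_mul, abs_of_pos (inv_pos.2 hs)]
    field_simp

lemma int_lower {v : ℝ → ℝ} (hi : Integrable v) (h0 : ∀ t, 0 ≤ v t) {α ℓ m : ℝ} (hl : 0 ≤ ℓ)
    (hm : ∀ t ∈ Set.Ioc α (α + ℓ), m ≤ v t) : m * ℓ ≤ ∫ t, v t := by
  have h1 : ∫ t in Set.Ioc α (α + ℓ), m ≤ ∫ t in Set.Ioc α (α + ℓ), v t :=
    setIntegral_mono_on (by simp) hi.integrableOn measurableSet_Ioc hm
  have h2 := setIntegral_le_integral hi (Eventually.of_forall h0) (s := Set.Ioc α (α + ℓ))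
  simp [hl] at h1
  linarith

lemma RR_mono (H : FQ Q b) {x y : ℝ} (hx : 0 ≤ x) (hxy : x ≤ y) : RR Q x ≤ RR Q y := by
  have := H.hmono hx hxy
  unfold RR; linarith

lemma vv_nn (H : FQ Q b) (x t : ℝ) : 0 ≤ vv Q (GG Q x) x t :=
  div_nonneg (sub_nonneg.2 (ph_max H x t)) (sq_nonneg _)

lemma vv_int (H : FQ Q b) (x : ℝ) : Integrable (vv Q (GG Q x) x) :=
  (H_formula H x _ (GG_deriv H x) (ph_max H x)).1

lemma ph_nn (H : FQ Q b) (x t : ℝ) : 0 ≤ ph Q (GG Q x) t := mul_nonneg (GG_nn H x t) (exp_pos _).le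

lemma vv_up (H : FQ Q b) : ∃ C : ℝ, 1 ≤ C ∧ ∀ x : ℝ,
    ∫ t, vv Q (GG Q x) x t ≤ C * (exp (-(Q x)) * √(RR Q x)) := by
  obtain ⟨C, hC1, hC⟩ := ph_lo H
  refine ⟨5 * C * π, by nlinarith [Real.pi_gt_three], fun x => ?_⟩
  have hR := RR_pos H x
  have hw := exp_pos (-(Q x))
  obtain ⟨hi, he⟩ := cauchy_int (r := RR Q x) (by linarith) x
  have hb : ∀ t, vv Q (GG Q x) x t ≤ (5 * C * exp (-(Q x)) * RR Q x) * (1 + RR Q x * (t - x) ^ 2)⁻¹ := by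
    intro t
    have hs := sq_nonneg (t - x)
    rw [← div_eq_mul_inv]
    rcases eq_or_lt_of_le hs with h0 | h0
    · unfold vv; rw [← h0]; simp; positivity
    have hd : 0 < 1 + RR Q x * (t - x) ^ 2 := by positivity
    unfold vv
    rw [ph_self, div_le_div_iff₀ h0 hd]
    set u := RR Q x * (t - x) ^ 2 with hu
    have hu0 : 0 < u := by positivity
    have : 5 * C * exp (-(Q x)) * RR Q x * (t - x) ^ 2 = exp (-(Q x)) * (5 * C * u) := by rw [hu]; ring
    rw [this]
    rcases le_total u (1/4) with h | h
    · have h1 := hC x t h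
      have h2 := add_one_le_exp (-(C * u))
      have h3 : exp (-(Q x)) * (1 - C * u) ≤ ph Q (GG Q x) t := le_trans (by gcongr; linarith) h1
      have h4 : exp (-(Q x)) - ph Q (GG Q x) t ≤ exp (-(Q x)) * (C * u) := by linarith
      calc (exp (-(Q x)) - ph Q (GG Q x) t) * (1 + u) ≤ exp (-(Q x)) * (C * u) * (1 + u) := by gcongr
        _ = exp (-(Q x)) * (C * u * (1 + u)) := by ring
        _ ≤ _ := by
          refine mul_le_mul_of_nonneg_left ?_ hw.le
          nlinarith [mul_pos (by linarith : 0 < C) hu0]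
    · have h1 := ph_nn H x t
      calc (exp (-(Q x)) - ph Q (GG Q x) t) * (1 + u) ≤ exp (-(Q x)) * (1 + u) := by gcongr; linarith
        _ ≤ _ := by
          gcongr
          nlinarith
  have h1 := integral_mono (vv_int H x) (hi.const_mul _) hb
  rw [integral_const_mul, he] at h1
  refine h1.trans (le_of_eq ?_)
  have hs : 0 < √(RR Q x) := Real.sqrt_pos.2 (by linarith)
  have := Real.mul_self_sqrt (by linarith : 0 ≤ RR Q x)
  rw [mul_div_assoc']
  rw [div_eq_iff hs.ne']
  linear_combination (-5 * C * exp (-(Q x)) * π) * this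

lemma h_ge_R (H : FQ Q b) : ∃ c : ℝ, 0 < c ∧ ∀ x : ℝ, 1 ≤ |x| → c * RR Q x ≤ hh Q x := by
  have hh1 := H.hpos' one_pos
  refine ⟨hh Q 1 / (1 + hh Q 1), by positivity, fun x hx => ?_⟩
  have := H.hlarge x hx
  rw [div_mul_eq_mul_div, div_le_iff₀ (by linarith)]
  unfold RR; nlinarith

lemma ph_up' (H : FQ Q b) : ∃ c : ℝ, 0 < c ∧ ∀ x t : ℝ, 1 ≤ x → 0 ≤ t →
    ph Q (GG Q x) t ≤ exp (-(Q x)) / (1 + c * RR Q x * (t - x) ^ 2) := by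
  obtain ⟨c, hc, h⟩ := ph_up H
  obtain ⟨c', hc', h'⟩ := h_ge_R H
  refine ⟨c * c', by positivity, fun x t hx ht => (h x t hx ht).trans ?_⟩
  have := h' x (by rwa [abs_of_pos (by linarith)])
  have hR := RR_pos H x
  apply div_le_div_of_nonneg_left (exp_pos _).le (by positivity)
  have := mul_le_mul_of_nonneg_left this hc.le
  have := mul_le_mul_of_nonneg_right this (sq_nonneg (t - x))
  linarith

lemma vv_low (H : FQ Q b) : ∃ c : ℝ, 0 < c ∧ ∀ x : ℝ, 1 ≤ x →
    c * (exp (-(Q x)) * √(RR Q x)) ≤ ∫ t, vv Q (GG Q x) x t := by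
  obtain ⟨c, hc, h⟩ := ph_up' H
  refine ⟨√c / 2, by positivity, fun x hx => ?_⟩
  have hR := RR_pos H x
  have hr : 0 < c * RR Q x := by positivity
  have hs : 0 < √(c * RR Q x) := Real.sqrt_pos.2 hr
  have hw := exp_pos (-(Q x))
  have key := int_lower (vv_int H x) (vv_nn H x) (α := x) (ℓ := 1 / √(c * RR Q x))
    (m := exp (-(Q x)) * (c * RR Q x) / 2) (by positivity) (by
      intro t ht
      have h0 : 0 < (t - x) ^ 2 := by have := ht.1; exact pow_pos (by linarith) 2
      have h1 := h x t hx (by linarith [ht.1])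
      have h2 : c * RR Q x * (t - x) ^ 2 ≤ 1 := by
        have : (t - x) ^ 2 ≤ (1 / √(c * RR Q x)) ^ 2 :=
          pow_le_pow_left₀ (by linarith [ht.1]) (by linarith [ht.2]) 2
        rw [div_pow, Real.sq_sqrt hr.le, one_pow, le_div_iff₀ hr] at this
        linarith
      unfold vv
      rw [ph_self, le_div_iff₀ h0]
      set u := c * RR Q x * (t - x) ^ 2 with hu
      have hu0 : 0 < u := by positivity
      have h3 : exp (-(Q x)) / (1 + u) ≤ exp (-(Q x)) * (1 - u / 2) := by
        rw [div_le_iff₀ (by linarith), mul_assoc]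
        nlinarith [mul_nonneg hw.le (mul_nonneg hu0.le (by linarith : 0 ≤ 1 - u))]
      nlinarith)
  refine le_trans (le_of_eq ?_) key
  rw [mul_one_div, eq_div_iff hs.ne', Real.sqrt_mul hc.le]
  have e1 := Real.mul_self_sqrt hc.le
  have e2 := Real.mul_self_sqrt (by linarith : 0 ≤ RR Q x)
  linear_combination exp (-(Q x)) / 2 * (√(RR Q x) * √(RR Q x) * e1 + c * e2)

noncomputable def nu (Q : ℝ → ℝ) (z : Fin n → ℝ) (k : Fin n) : ℝ := lam Q z k * exp (Q (z k))

lemma nu_pos (H : FQ Q b) (O : OP Q n p z) (k : Fin n) : 0 < nu Q z k :=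
  mul_pos (O.lam_sq H k) (exp_pos _)

lemma D_nn (H : FQ Q b) (O : OP Q n p z) (x : ℝ) :
    0 ≤ ∑ k, lam Q z k * (GG Q x).eval (z k) * (ep p z k).eval x ^ 2 :=
  Finset.sum_nonneg fun k _ => mul_nonneg (mul_nonneg (O.lam_sq H k).le (GG_nn H x _)) (sq_nonneg _)

lemma Q2 (H : FQ Q b) : ∃ C : ℝ, 1 ≤ C ∧ ∀ (n : ℕ) (p : Polynomial ℝ) (z : Fin n → ℝ), OP Q n p z → 0 < n →
    ∀ x : ℝ, 1 ≤ x → p.eval x ^ 2 * exp (-(Q x)) * √(RR Q x) ≤ C * AA Q p x := by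
  obtain ⟨c, hc, h⟩ := vv_low H
  refine ⟨1 + 1 / c, one_le_inv_aux hc, fun n p z O hn x hx => ?_⟩
  have h1 := O.D_le H hn (by linarith : 0 ≤ x) (GG Q x) (GG_NC H x) (GG_deriv H x) (ph_max H x)
  have h2 := D_nn H O x
  rw [GG_self, one_mul] at h1
  have h3 := mul_le_mul_of_nonneg_left (h x hx) (sq_nonneg (p.eval x))
  have h4 : 0 ≤ AA Q p x := le_trans (by have := H.hnn x; linarith) (O.AA_pos H x)
  have h5 : c * (p.eval x ^ 2 * exp (-(Q x)) * √(RR Q x)) ≤ AA Q p x := by nlinarith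
  rw [add_mul, one_mul, one_div_mul_eq_div]
  have : p.eval x ^ 2 * exp (-(Q x)) * √(RR Q x) ≤ AA Q p x / c := by
    rw [le_div_iff₀ hc]; linarith
  linarith

lemma GG_near (H : FQ Q b) : ∃ c : ℝ, 0 < c ∧ ∀ x t : ℝ, RR Q x * (t - x) ^ 2 ≤ 1 / 4 →
    c * exp (-(Q x)) * exp (Q t) ≤ (GG Q x).eval t := by
  obtain ⟨C, hC1, hC⟩ := ph_lo H
  refine ⟨exp (-(C / 4)), exp_pos _, fun x t h => ?_⟩
  have h1 := hC x t h
  unfold ph at h1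
  have h2 : exp (-(C / 4)) ≤ exp (-(C * (RR Q x * (t - x) ^ 2))) := by
    apply exp_le_exp.2; nlinarith
  have h3 : exp (-(Q x)) * exp (-(C / 4)) ≤ (GG Q x).eval t * exp (-(Q t)) :=
    le_trans (by gcongr) h1
  have h4 := mul_le_mul_of_nonneg_right h3 (exp_pos (Q t)).le
  rw [mul_assoc ((GG Q x).eval t), ← exp_add (-(Q t)), neg_add_cancel, exp_zero, mul_one] at h4
  linarith

lemma Q3 (H : FQ Q b) : ∃ C : ℝ, 1 ≤ C ∧ ∀ (n : ℕ) (p : Polynomial ℝ) (z : Fin n → ℝ), OP Q n p z → 0 < n →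
    ∀ x : ℝ, 0 ≤ x → exp (-(Q x)) * ∑ k with RR Q x * (z k - x) ^ 2 ≤ 1 / 4, nu Q z k * (ep p z k).eval x ^ 2
      ≤ C * AA Q p x := by
  obtain ⟨c, hc, h⟩ := GG_near H
  refine ⟨1 + 1 / c, one_le_inv_aux hc, fun n p z O hn x hx => ?_⟩
  have h1 := O.D_le H hn hx (GG Q x) (GG_NC H x) (GG_deriv H x) (ph_max H x)
  rw [GG_self, one_mul] at h1
  have h4 : 0 ≤ AA Q p x := le_trans (by have := H.hnn x; linarith) (O.AA_pos H x)
  have h5 : c * (exp (-(Q x)) * ∑ k with RR Q x * (z k - x) ^ 2 ≤ 1 / 4, nu Q z k * (ep p z k).eval x ^ 2) ≤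
      ∑ k, lam Q z k * (GG Q x).eval (z k) * (ep p z k).eval x ^ 2 := by
    rw [← mul_assoc, Finset.mul_sum]
    refine le_trans (Finset.sum_le_sum (g := fun k => lam Q z k * (GG Q x).eval (z k) * (ep p z k).eval x ^ 2) ?_)
      (Finset.sum_le_sum_of_subset_of_nonneg (Finset.filter_subset _ _) ?_)
    · intro k hk
      have h6 := h x (z k) (Finset.mem_filter.1 hk).2
      unfold nu
      have h7 := mul_le_mul_of_nonneg_left h6 (mul_nonneg (O.lam_sq H k).le (sq_nonneg ((ep p z k).eval x)))
      linarith
    · intro k _ _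
      exact mul_nonneg (mul_nonneg (O.lam_sq H k).le (GG_nn H x _)) (sq_nonneg _)
  have h6 : 0 ≤ p.eval x ^ 2 * ∫ t, vv Q (GG Q x) x t :=
    mul_nonneg (sq_nonneg _) (integral_nonneg (vv_nn H x))
  rw [add_mul, one_mul, one_div_mul_eq_div]
  have : exp (-(Q x)) * ∑ k with RR Q x * (z k - x) ^ 2 ≤ 1 / 4, nu Q z k * (ep p z k).eval x ^ 2 ≤ AA Q p x / c := by
    rw [le_div_iff₀ hc]; linarith
  linarith

lemma GG_neg (x t : ℝ) : (GG Q x).eval (-t) = (GG Q x).eval t := by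
  rw [GG_eval, GG_eval, neg_sq]

lemma GG_abs (x t : ℝ) : (GG Q x).eval |t| = (GG Q x).eval t := by
  rw [GG_eval, GG_eval, sq_abs]

lemma Q1 (H : FQ Q b) : ∃ C : ℝ, 1 ≤ C ∧ ∀ (n : ℕ) (p : Polynomial ℝ) (z : Fin n → ℝ), OP Q n p z →
    ∀ y : ℝ, 1 ≤ y → √(RR Q y) * ∑ k with RR Q y * (|z k| - y) ^ 2 ≤ 1 / 4, nu Q z k ≤ C := by
  obtain ⟨c, hc, h⟩ := GG_near H
  obtain ⟨c', hc', h'⟩ := ph_up' H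
  have hD : 0 < 2 * π / √c' / c := by positivity
  refine ⟨1 + 2 * π / √c' / c, by linarith, fun n p z O y hy => ?_⟩
  have hR := RR_pos H y
  have hw := exp_pos (-(Q y))
  have hr : 0 < c' * RR Q y := by positivity
  obtain ⟨i1, e1⟩ := cauchy_int hr y
  obtain ⟨i2, e2⟩ := cauchy_int hr (-y)
  have h1 := O.quad_ineq H (GG Q y) (GG_NC H y)
  have h2 : I Q (fun t => (GG Q y).eval t) ≤ exp (-(Q y)) * (2 * (π / √(c' * RR Q y))) := by
    have : I Q (fun t => (GG Q y).eval t) ≤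
        ∫ t, exp (-(Q y)) * ((1 + c' * RR Q y * (t - y) ^ 2)⁻¹ + (1 + c' * RR Q y * (t - -y) ^ 2)⁻¹) := by
      apply integral_mono ((PB.poly (GG Q y)).integrable H) ((i1.add i2).const_mul _)
      intro t
      have a1 : 0 ≤ (1 + c' * RR Q y * (t - y) ^ 2)⁻¹ := by positivity
      have a2 : 0 ≤ (1 + c' * RR Q y * (t - -y) ^ 2)⁻¹ := by positivity
      simp only [Pi.add_apply]
      rcases le_total 0 t with ht | ht
      · have := h' y t hy ht
        unfold ph at this
        rw [div_eq_mul_inv] at this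
        nlinarith
      · have := h' y (-t) hy (by linarith)
        unfold ph at this
        rw [div_eq_mul_inv, GG_neg, H.even, (by ring : (-t - y) ^ 2 = (t - -y) ^ 2)] at this
        nlinarith
    rw [integral_const_mul, integral_add i1 i2, e1, e2] at this
    linarith
  have h5 : c * exp (-(Q y)) * ∑ k with RR Q y * (|z k| - y) ^ 2 ≤ 1 / 4, nu Q z k ≤
      ∑ k, lam Q z k * (GG Q y).eval (z k) := by
    rw [Finset.mul_sum]
    refine le_trans (Finset.sum_le_sum (g := fun k => lam Q z k * (GG Q y).eval (z k)) ?_)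
      (Finset.sum_le_sum_of_subset_of_nonneg (Finset.filter_subset _ _) ?_)
    · intro k hk
      have h6 := h y |z k| (Finset.mem_filter.1 hk).2
      rw [GG_abs, H.Qabs] at h6
      unfold nu
      have h7 := mul_le_mul_of_nonneg_left h6 (O.lam_sq H k).le
      linarith
    · intro k _ _
      exact mul_nonneg (O.lam_sq H k).le (GG_nn H y _)
  set S := ∑ k with RR Q y * (|z k| - y) ^ 2 ≤ 1 / 4, nu Q z k
  have h6 : exp (-(Q y)) * (c * S) ≤ exp (-(Q y)) * (2 * (π / √(c' * RR Q y))) := by linarith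
  have h7 := le_of_mul_le_mul_left h6 hw
  have hs : 0 < √(RR Q y) := Real.sqrt_pos.2 (by linarith)
  have hs' : 0 < √c' := Real.sqrt_pos.2 hc'
  rw [Real.sqrt_mul hc'.le] at h7
  have h8 : √(RR Q y) * S ≤ 2 * π / √c' / c := by
    rw [div_div, le_div_iff₀ (by positivity)]
    have h9 : 2 * (π / (√c' * √(RR Q y))) = 2 * π / (√c' * √(RR Q y)) := by ring
    rw [h9, le_div_iff₀ (by positivity)] at h7
    linarith
  linarith

end GW


namespace GW
variable {Q : ℝ → ℝ} {b : ℕ} {n : ℕ} {p : Polynomial ℝ} {z : Fin n → ℝ}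

lemma Rsum_gen (H : FQ Q b) : ∃ C : ℝ, 1 ≤ C ∧ ∀ (n : ℕ) (p : Polynomial ℝ) (z : Fin n → ℝ), OP Q n p z →
    ∀ r x C2 : ℝ, 0 < r → 1 ≤ C2 → (∀ a : ℝ, 1 ≤ a → r ≤ C2 * (RR Q a * (1 + r * (a - x) ^ 2))) →
    ∑ k with 1 ≤ |z k|, nu Q z k * (1 + r * (|z k| - x) ^ 2)⁻¹ ≤ C * (1 + C2) * (π / √r) := by
  obtain ⟨C1, hC1, h1⟩ := H.exists_C1
  obtain ⟨CQ, hCQ, hQ⟩ := Q1 H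
  refine ⟨CQ * (4 * C1), by nlinarith, fun n p z O r x C2 hr hC2 hc => ?_⟩
  set g : ℝ → ℝ := fun y => (1 + r * (y - x) ^ 2)⁻¹ with hg
  obtain ⟨gi, ge⟩ := cauchy_int hr x
  have g0 : ∀ y, 0 < g y := fun y => by simp only [hg]; positivity
  have gc : Continuous g := by
    apply Continuous.inv₀ (by fun_prop)
    intro y; positivity
  have hRc : Continuous (fun y => √(RR Q y)) := by
    unfold RR; exact (continuous_const.add H.ch).sqrt
  set v : Fin n → ℝ → ℝ := fun k => (Set.Ioc |z k| (|z k| + 1 / (2 * C1) / √(RR Q |z k|))).indicator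
    (fun y => √(RR Q y) * g y) with hv
  have vi : ∀ k, Integrable (v k) := fun k =>
    ((hRc.mul gc).integrableOn_Ioc).integrable_indicator measurableSet_Ioc
  have v0 : ∀ k y, 0 ≤ v k y := fun k y =>
    Set.indicator_nonneg (fun y _ => mul_nonneg (Real.sqrt_nonneg _) (g0 y).le) y
  have near : ∀ a y : ℝ, 0 ≤ a → y ∈ Set.Ioc a (a + 1 / (2 * C1) / √(RR Q a)) →
      RR Q a * (y - a) ^ 2 ≤ 1 / (4 * C1) ∧ y ≤ a + 1 := by
    intro a y ha hy
    have hR := RR_pos H a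
    have hs : 0 < √(RR Q a) := Real.sqrt_pos.2 (by linarith)
    have hs1 : 1 ≤ √(RR Q a) := Real.one_le_sqrt.2 hR
    have e0 : (y - a) * √(RR Q a) ≤ 1 / (2 * C1) := by
      have := hy.2
      rw [← le_div_iff₀ hs]; linarith
    have e1 : ((y - a) * √(RR Q a)) ^ 2 ≤ (1 / (2 * C1)) ^ 2 :=
      pow_le_pow_left₀ (mul_nonneg (by linarith [hy.1]) hs.le) e0 2
    rw [mul_pow, Real.sq_sqrt (by linarith)] at e1
    have e2 : (1 / (2 * C1)) ^ 2 ≤ 1 / (4 * C1) := by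
      rw [div_pow, div_le_div_iff₀ (by positivity) (by positivity)]
      nlinarith
    refine ⟨by linarith, ?_⟩
    have e3 : (1 / (2 * C1)) ≤ 1 := by
      rw [div_le_iff₀ (by positivity)]; linarith
    nlinarith [hy.1]
  have low : ∀ k, 1 ≤ |z k| → g |z k| * (1 / (2 * C1) / (2 + 2 * C2)) ≤ ∫ y, v k y := by
    intro k hk
    set a := |z k| with ha
    have hR := RR_pos H a
    have hs : 0 < √(RR Q a) := Real.sqrt_pos.2 (by linarith)
    have := int_lower (vi k) (v0 k) (α := a) (ℓ := 1 / (2 * C1) / √(RR Q a)) (m := √(RR Q a) * g a / (2 + 2 * C2))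
      (by positivity) (by
        intro y hy
        have e : v k y = √(RR Q y) * g y := by
          simp only [hv]; rw [Set.indicator_of_mem]; exact hy
        rw [e]
        obtain ⟨n1, n2⟩ := near a y (by linarith) hy
        have n3 : RR Q a * (y - a) ^ 2 ≤ 1 := n1.trans (by rw [div_le_iff₀ (by positivity)]; linarith)
        have m1 : √(RR Q a) ≤ √(RR Q y) := Real.sqrt_le_sqrt (RR_mono H (by linarith) hy.1.le)
        have m2 : g a / (2 + 2 * C2) ≤ g y := by
          simp only [hg]
          rw [← one_div, ← one_div, div_div, div_le_div_iff₀ (by positivity) (by positivity), one_mul, one_mul]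
          have q1 := hc a hk
          have q2 : r * (y - a) ^ 2 ≤ C2 * (1 + r * (a - x) ^ 2) := by
            calc r * (y - a) ^ 2 ≤ C2 * (RR Q a * (1 + r * (a - x) ^ 2)) * (y - a) ^ 2 := by gcongr
              _ = C2 * (1 + r * (a - x) ^ 2) * (RR Q a * (y - a) ^ 2) := by ring
              _ ≤ C2 * (1 + r * (a - x) ^ 2) * 1 := by gcongr
              _ = _ := by ring
          have q3 : r * (y - x) ^ 2 ≤ 2 * (r * (a - x) ^ 2) + 2 * (r * (y - a) ^ 2) := by
            nlinarith [mul_nonneg hr.le (sq_nonneg ((a - x) - (y - a)))]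
          nlinarith
        calc √(RR Q a) * g a / (2 + 2 * C2) = √(RR Q a) * (g a / (2 + 2 * C2)) := by ring
          _ ≤ _ := mul_le_mul m1 m2 (by have := g0 a; positivity) (Real.sqrt_nonneg _))
    refine le_trans (le_of_eq ?_) this
    field_simp
  have up : ∫ y, ∑ k with 1 ≤ |z k|, nu Q z k * v k y ≤ ∫ y, CQ * g y := by
    apply integral_mono (integrable_finsetSum _ fun k _ => (vi k).const_mul _) (gi.const_mul _)
    intro y
    simp only
    rcases lt_or_ge y 1 with hy | hy
    · rw [Finset.sum_eq_zero]
      · have := g0 y; positivity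
      · intro k hk
        have hk := (Finset.mem_filter.1 hk).2
        have : v k y = 0 := by
          simp only [hv]; rw [Set.indicator_of_notMem]
          intro h; have := h.1; linarith
        rw [this, mul_zero]
    · have hq := hQ n p z O y hy
      have e1 : ∑ k with 1 ≤ |z k|, nu Q z k * v k y ≤
          ∑ k with RR Q y * (|z k| - y) ^ 2 ≤ 1 / 4, nu Q z k * (√(RR Q y) * g y) := by
        rw [Finset.sum_filter, Finset.sum_filter]
        apply Finset.sum_le_sum
        intro k _
        have hn := nu_pos H O k
        have hg0 := g0 y
        by_cases hy2 : y ∈ Set.Ioc |z k| (|z k| + 1 / (2 * C1) / √(RR Q |z k|))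
        · obtain ⟨n1, n2⟩ := near _ y (abs_nonneg _) hy2
          have hn2 : RR Q y ≤ C1 * RR Q |z k| := by
            apply h1; rw [abs_of_pos (by linarith : 0 < y), abs_abs]; exact n2
          have : RR Q y * (|z k| - y) ^ 2 ≤ 1 / 4 := by
            have := mul_le_mul_of_nonneg_right hn2 (sq_nonneg (y - |z k|))
            have h5 : C1 * (RR Q |z k| * (y - |z k|) ^ 2) ≤ C1 * (1 / (4 * C1)) := by gcongr
            have h6 : C1 * (1 / (4 * C1)) = 1 / 4 := by field_simp
            nlinarith
          rw [if_pos this]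
          have e : v k y = √(RR Q y) * g y := by
            simp only [hv]; rw [Set.indicator_of_mem]; exact hy2
          rw [e]
          split_ifs
          · exact le_rfl
          · positivity
        · have e : v k y = 0 := by
            simp only [hv]; rw [Set.indicator_of_notMem]; exact hy2
          rw [e, mul_zero, ite_self]
          split_ifs
          · positivity
          · exact le_rfl
      rw [← Finset.sum_mul] at e1
      refine e1.trans ?_
      have := mul_le_mul_of_nonneg_right hq (g0 y).le
      linarith
  rw [integral_const_mul, ge, integral_finsetSum _ (fun k _ => (vi k).const_mul _)] at up
  simp only [integral_const_mul] at up
  have e2 : ∑ k with 1 ≤ |z k|, nu Q z k * (g |z k| * (1 / (2 * C1) / (2 + 2 * C2))) ≤ CQ * (π / √r) := by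
    refine le_trans (Finset.sum_le_sum fun k hk => ?_) up
    exact mul_le_mul_of_nonneg_left (low k (Finset.mem_filter.1 hk).2) (nu_pos H O k).le
  simp only [← mul_assoc] at e2
  rw [← Finset.sum_mul] at e2
  have e3 : (∑ k with 1 ≤ |z k|, nu Q z k * g |z k|) = (∑ k with 1 ≤ |z k|, nu Q z k * g |z k|) *
    (1 / (2 * C1) / (2 + 2 * C2)) * (2 * C1 * (2 + 2 * C2)) := by
    field_simp
  rw [e3]
  calc _ ≤ CQ * (π / √r) * (2 * C1 * (2 + 2 * C2)) := by gcongr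
    _ = _ := by ring

lemma nu_small (H : FQ Q b) : ∃ C : ℝ, 1 ≤ C ∧ ∀ (n : ℕ) (p : Polynomial ℝ) (z : Fin n → ℝ), OP Q n p z →
    ∑ k with ¬ 1 ≤ |z k|, nu Q z k ≤ C := by
  have h0 : 0 ≤ I Q (fun _ => 1) := integral_nonneg fun t => by simp [exp_nonneg]
  refine ⟨1 + I Q (fun _ => 1) * exp (Q 1), by have := exp_pos (Q 1); nlinarith, fun n p z O => ?_⟩
  have h1 := O.quad_ineq H (Polynomial.C 1) (NC.C zero_le_one)
  simp only [Polynomial.eval_C, mul_one] at h1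
  have h2 : ∑ k with ¬ 1 ≤ |z k|, nu Q z k ≤ ∑ k, lam Q z k * exp (Q 1) := by
    refine le_trans (Finset.sum_le_sum (g := fun k => lam Q z k * exp (Q 1)) fun k hk => ?_)
      (Finset.sum_le_sum_of_subset_of_nonneg (Finset.filter_subset _ _) fun k _ _ =>
        (mul_pos (O.lam_sq H k) (exp_pos _)).le)
    have hk := (Finset.mem_filter.1 hk).2
    unfold nu
    refine mul_le_mul_of_nonneg_left (exp_le_exp.2 ?_) (O.lam_sq H k).le
    have h3 := H.Qlower (z k) 1
    have h4 : z k ^ 2 ≤ 1 := by rw [← sq_abs]; nlinarith [abs_nonneg (z k)]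
    have h5 := H.hnn (z k)
    nlinarith
  rw [← Finset.sum_mul] at h2
  have := mul_le_mul_of_nonneg_right h1 (exp_pos (Q 1)).le
  linarith

lemma Rsum (H : FQ Q b) : ∃ C : ℝ, 1 ≤ C ∧ ∀ (n : ℕ) (p : Polynomial ℝ) (z : Fin n → ℝ), OP Q n p z →
    ∀ x : ℝ, 0 ≤ x → √(RR Q x) * ∑ k, nu Q z k * (1 + RR Q x * (z k - x) ^ 2)⁻¹ ≤ C := by
  obtain ⟨C, hC, h⟩ := Rsum_gen H
  obtain ⟨C1, hC1, h1⟩ := H.exists_C1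
  obtain ⟨Cs, hCs, hs⟩ := nu_small H
  have hR2 := RR_pos H 2
  refine ⟨C * (1 + C1) * π + Cs * RR Q 2, by nlinarith [Real.pi_gt_three, mul_pos (by linarith : 0 < C) (by linarith : 0 < 1 + C1)], fun n p z O x hx => ?_⟩
  have hR := RR_pos H x
  have hsR : 0 < √(RR Q x) := Real.sqrt_pos.2 (by linarith)
  have hsle : √(RR Q x) ≤ RR Q x := by
    rw [Real.sqrt_le_left (by linarith)]; nlinarith
  have step : ∑ k, nu Q z k * (1 + RR Q x * (z k - x) ^ 2)⁻¹ ≤ ∑ k, nu Q z k * (1 + RR Q x * (|z k| - x) ^ 2)⁻¹ := by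
    apply Finset.sum_le_sum
    intro k _
    apply mul_le_mul_of_nonneg_left _ (nu_pos H O k).le
    apply inv_anti₀ (by positivity)
    have : (|z k| - x) ^ 2 ≤ (z k - x) ^ 2 := by
      nlinarith [mul_le_mul_of_nonneg_right (le_abs_self (z k)) hx, sq_abs (z k)]
    gcongr
  have big := h n p z O (RR Q x) x C1 (by linarith) hC1 (by
    intro a ha
    have hRa := RR_pos H a
    rcases le_total |a - x| 1 with h2 | h2
    · have h3 : RR Q x ≤ C1 * RR Q a := by
        apply h1; rw [abs_of_nonneg hx, abs_of_pos (by linarith : 0 < a)]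
        have := (abs_le.1 h2).1; linarith
      have h4 : 0 ≤ C1 * RR Q a * (RR Q x * (a - x) ^ 2) := by positivity
      nlinarith
    · have h3 : 1 ≤ (a - x) ^ 2 := by rw [← sq_abs]; nlinarith
      have h4 : RR Q x ≤ 1 + RR Q x * (a - x) ^ 2 := by nlinarith
      have h5 : 1 ≤ C1 * RR Q a := by nlinarith
      calc RR Q x ≤ 1 + RR Q x * (a - x) ^ 2 := h4
        _ ≤ (C1 * RR Q a) * (1 + RR Q x * (a - x) ^ 2) := le_mul_of_one_le_left (by positivity) h5
        _ = _ := by ring)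
  have small : ∑ k with ¬ 1 ≤ |z k|, nu Q z k * (√(RR Q x) * (1 + RR Q x * (|z k| - x) ^ 2)⁻¹) ≤ Cs * RR Q 2 := by
    refine le_trans (Finset.sum_le_sum (g := fun k => nu Q z k * RR Q 2) fun k hk => ?_) ?_
    · have hk := (Finset.mem_filter.1 hk).2
      apply mul_le_mul_of_nonneg_left _ (nu_pos H O k).le
      rw [← div_eq_mul_inv, div_le_iff₀ (by positivity)]
      rcases le_total x 2 with h2 | h2
      · have := RR_mono H hx h2
        have h4 : 0 ≤ RR Q x * (|z k| - x) ^ 2 := by positivity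
        nlinarith
      · have h3 : 1 ≤ (|z k| - x) ^ 2 := by nlinarith
        have h4 : RR Q x ≤ 1 + RR Q x * (|z k| - x) ^ 2 := by nlinarith
        nlinarith
    · rw [← Finset.sum_mul]
      have := hs n p z O
      gcongr
  calc _ ≤ √(RR Q x) * ∑ k, nu Q z k * (1 + RR Q x * (|z k| - x) ^ 2)⁻¹ := by gcongr
    _ = √(RR Q x) * ∑ k with 1 ≤ |z k|, nu Q z k * (1 + RR Q x * (|z k| - x) ^ 2)⁻¹ +
        ∑ k with ¬ 1 ≤ |z k|, nu Q z k * (√(RR Q x) * (1 + RR Q x * (|z k| - x) ^ 2)⁻¹) := by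
      rw [← Finset.sum_filter_add_sum_filter_not Finset.univ (fun k => 1 ≤ |z k|), mul_add]
      congr 1
      rw [Finset.mul_sum]
      exact Finset.sum_congr rfl fun k _ => by ring
    _ ≤ √(RR Q x) * (C * (1 + C1) * (π / √(RR Q x))) + Cs * RR Q 2 := by gcongr
    _ = _ := by field_simp

lemma Rsum0 (H : FQ Q b) : ∃ C : ℝ, 1 ≤ C ∧ ∀ (n : ℕ) (p : Polynomial ℝ) (z : Fin n → ℝ), OP Q n p z →
    ∑ k, nu Q z k * (1 + z k ^ 2)⁻¹ ≤ C := by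
  obtain ⟨C, hC, h⟩ := Rsum_gen H
  obtain ⟨Cs, hCs, hs⟩ := nu_small H
  refine ⟨C * (1 + 1) * π + Cs, by nlinarith [Real.pi_gt_three], fun n p z O => ?_⟩
  have big := h n p z O 1 0 1 one_pos le_rfl (by
    intro a ha
    have hRa := RR_pos H a
    nlinarith [mul_nonneg (by linarith : 0 ≤ RR Q a) (sq_nonneg a)])
  simp only [sub_zero, sq_abs, one_mul, Real.sqrt_one, div_one] at big
  have small : ∑ k with ¬ 1 ≤ |z k|, nu Q z k * (1 + z k ^ 2)⁻¹ ≤ Cs := by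
    refine le_trans (Finset.sum_le_sum fun k hk => ?_) (hs n p z O)
    have : (1 + z k ^ 2)⁻¹ ≤ 1 := inv_le_one_of_one_le₀ (by nlinarith [sq_nonneg (z k)])
    have := nu_pos H O k
    nlinarith
  rw [← Finset.sum_filter_add_sum_filter_not Finset.univ (fun k => 1 ≤ |z k|)]
  linarith

end GW


namespace GW
variable {Q : ℝ → ℝ} {b : ℕ} {n : ℕ} {p : Polynomial ℝ} {z : Fin n → ℝ}

lemma log_sqrt {y : ℝ} (hy : 0 ≤ y) : Real.log (1 + y) ≤ √y := by
  rw [Real.log_le_iff_le_exp (by linarith)]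
  have h1 := Real.sqrt_nonneg y
  have h2 := Real.sum_le_exp_of_nonneg h1 4
  have h3 := Real.sq_sqrt hy
  set u := √y
  simp [Finset.sum_range_succ, Nat.factorial] at h2
  nlinarith [mul_nonneg h1 (sq_nonneg (u - 3/2)), mul_nonneg h1 (sq_nonneg u)]

lemma cheb_abs (m : ℕ) (u : ℝ) : (Polynomial.Chebyshev.T ℝ m).eval u ^ 2 = (Polynomial.Chebyshev.T ℝ m).eval |u| ^ 2 := by
  rcases abs_choice u with h | h
  · rw [h]
  · rw [h, Polynomial.Chebyshev.T_eval_neg, mul_pow]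
    have : ((((m : ℤ).negOnePow : ℤ) : ℝ)) ^ 2 = 1 := by
      rcases Int.units_eq_one_or ((m : ℤ).negOnePow) with h | h <;> rw [h] <;> simp
    rw [this, one_mul]

lemma cheb_one (m : ℕ) {u : ℝ} (hu : |u| ≤ 1) : (Polynomial.Chebyshev.T ℝ m).eval u ^ 2 ≤ 1 := by
  have := Polynomial.Chebyshev.abs_eval_T_real_le_one m hu
  rw [← sq_abs]; nlinarith [abs_nonneg ((Polynomial.Chebyshev.T ℝ m).eval u)]

lemma cheb_tail (m : ℕ) {u : ℝ} (hu : 1 ≤ |u|) :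
    (Polynomial.Chebyshev.T ℝ m).eval u ^ 2 ≤ (2 * |u|) ^ (2 * m) := by
  rw [cheb_abs]
  have h1 := Polynomial.Chebyshev.T_real_cosh (θ := Real.arcosh |u|) (m : ℤ)
  have h2 := Real.arcosh_nonneg hu
  rw [Real.cosh_arcosh hu] at h1
  rw [h1, mul_comm 2 m, pow_mul]
  apply pow_le_pow_left₀ (Real.cosh_pos _).le
  have h3 : Real.cosh (m * Real.arcosh |u|) ≤ exp (m * Real.arcosh |u|) := by
    rw [Real.cosh_eq]
    have := exp_le_exp.2 (by have : 0 ≤ m * Real.arcosh |u| := by positivity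
                             linarith : -(m * Real.arcosh |u|) ≤ m * Real.arcosh |u|)
    linarith
  push_cast
  refine h3.trans ?_
  rw [mul_comm, Real.exp_mul, Real.exp_arcosh hu]
  norm_cast
  apply pow_le_pow_left₀ (by positivity)
  have : √(|u| ^ 2 - 1) ≤ |u| := by
    rw [Real.sqrt_le_left (by linarith)]; linarith
  linarith

lemma cheb_mid (m : ℕ) {u a : ℝ} (ha : 0 ≤ a) (h1 : 1 ≤ u) (hu : u ≤ Real.cosh a) :
    (Polynomial.Chebyshev.T ℝ m).eval u ^ 2 ≤ Real.cosh (m * a) ^ 2 := by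
  have e := Polynomial.Chebyshev.T_real_cosh (θ := Real.arcosh u) (m : ℤ)
  have h2 := Real.arcosh_nonneg h1
  rw [Real.cosh_arcosh h1] at e
  rw [e]
  apply pow_le_pow_left₀ (Real.cosh_pos _).le
  rw [Real.cosh_le_cosh]
  have h3 : Real.arcosh u ≤ a := by
    rw [← Real.arcosh_cosh ha, Real.arcosh_le_arcosh (by linarith) (Real.cosh_pos _)]; exact hu
  push_cast
  rw [abs_of_nonneg (by positivity), abs_of_nonneg (by positivity)]
  gcongr

noncomputable def UU (m : ℕ) (L c x : ℝ) : Polynomial ℝ :=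
  (Polynomial.Chebyshev.T ℝ m).comp (Polynomial.C c - Polynomial.C (1 / L ^ 2) * (Polynomial.X - Polynomial.C x) ^ 2)

lemma UU_eval (m : ℕ) (L c x t : ℝ) :
    (UU m L c x).eval t = (Polynomial.Chebyshev.T ℝ m).eval (c - (t - x) ^ 2 / L ^ 2) := by
  unfold UU
  simp [Polynomial.eval_comp]
  congr 1; ring

lemma UU_deriv (m : ℕ) (L c x : ℝ) : (UU m L c x).derivative.eval x = 0 := by
  unfold UU
  rw [Polynomial.derivative_comp]
  simp [Polynomial.derivative_pow]

lemma UU_deg (m : ℕ) (L c x : ℝ) : (UU m L c x).natDegree ≤ m * 2 := by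
  unfold UU
  refine Polynomial.natDegree_comp_le.trans ?_
  rw [Polynomial.Chebyshev.natDegree_T]
  simp only [Int.natAbs_natCast]
  gcongr
  refine (Polynomial.natDegree_sub_le _ _).trans ?_
  simp only [Polynomial.natDegree_C, zero_le, sup_of_le_right]
  refine (Polynomial.natDegree_C_mul_le _ _).trans ?_
  refine (Polynomial.natDegree_pow_le).trans ?_
  rw [Polynomial.natDegree_X_sub_C]

lemma GG_deg (x : ℝ) : (GG Q x).natDegree ≤ JJ Q x * 2 := by
  unfold GG
  refine (Polynomial.natDegree_pow_le).trans ?_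
  gcongr
  refine (Polynomial.natDegree_add_le _ _).trans ?_
  simp only [Polynomial.natDegree_C, zero_le, sup_of_le_right]
  refine (Polynomial.natDegree_C_mul_le _ _).trans ?_
  rw [Polynomial.natDegree_X_pow]

noncomputable def FF (Q : ℝ → ℝ) (t : ℝ) : ℝ := hh Q t * t ^ 2

lemma FF_scale (H : FQ Q b) {l s t : ℝ} (h1 : |s| ≤ |t|) (h2 : l * s ^ 2 ≤ t ^ 2) : l * FF Q s ≤ FF Q t := by
  have h := H.hmonoabs h1
  have h0 := H.hnn s
  unfold FF
  calc l * (hh Q s * s ^ 2) = hh Q s * (l * s ^ 2) := by ring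
    _ ≤ hh Q s * t ^ 2 := by gcongr
    _ ≤ _ := by gcongr

lemma FF_nn (H : FQ Q b) (t : ℝ) : 0 ≤ FF Q t := mul_nonneg (H.hnn t) (sq_nonneg t)

lemma tail_ph (H : FQ Q b) : ∃ κ K : ℝ, 0 < κ ∧ κ ≤ 1 ∧ 10 ≤ K ∧ ∀ x t : ℝ, 0 ≤ x → K * x ≤ |t| → K ^ 2 ≤ FF Q t →
    ph Q (GG Q x) t ≤ exp (-(Q x)) * exp (-(κ / 2 * FF Q t)) := by
  set κ : ℝ := 3 / 8 / 2 ^ b with hκ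
  have h2b : (1:ℝ) ≤ 2 ^ b := one_le_pow₀ (by norm_num)
  have hκ0 : 0 < κ := by positivity
  have hκ1 : κ ≤ 3 / 8 := by rw [hκ]; exact div_le_self (by norm_num) h2b
  have hK : 10 ≤ 4 / κ := by rw [le_div_iff₀ hκ0]; linarith
  refine ⟨κ, 4 / κ, hκ0, by linarith, hK, fun x t hx hxt hF => ?_⟩
  set K := 4 / κ with hKd
  have hKκ : K * κ = 4 := by rw [hKd]; field_simp
  have hxt' : |x| ≤ |t| := by rw [abs_of_nonneg hx]; nlinarith
  have hK2 : K ^ 2 * x ^ 2 ≤ t ^ 2 := by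
    rw [← mul_pow, ← sq_abs t]; exact pow_le_pow_left₀ (by positivity) hxt 2
  have hF0 := FF_nn H t
  have hFx := FF_scale H hxt' hK2
  have hxx : 100 * x ^ 2 ≤ t ^ 2 := by nlinarith [mul_nonneg (by nlinarith : 0 ≤ K ^ 2 - 100) (sq_nonneg x)]
  have hQ : Q x + κ * FF Q t ≤ Q t := by
    have q1 := H.Qlower (t / 2) t
    have q2 := H.Qlower x (t / 2)
    have q3 := H.hscale (l := 2) (x := t / 2) (by norm_num)
    rw [(by ring : 2 * (t / 2) = t)] at q3
    have q4 : 0 ≤ hh Q x / 2 * ((t / 2) ^ 2 - x ^ 2) := mul_nonneg (by have := H.hnn x; linarith) (by nlinarith)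
    have q5 : κ * FF Q t ≤ hh Q (t / 2) / 2 * (t ^ 2 - (t / 2) ^ 2) := by
      unfold FF
      have : κ * hh Q t ≤ 3 / 8 * hh Q (t / 2) := by
        rw [hκ, div_mul_eq_mul_div, div_le_iff₀ (by positivity)]; linarith
      have := mul_le_mul_of_nonneg_right this (sq_nonneg t)
      linarith
    linarith
  unfold ph
  rw [GG_eval]
  have e := et_mul (Q := Q) x
  have hJ := JJ_one (Q := Q) x
  have hJl := JJ_le H x
  have hy : 0 ≤ et Q x * (t ^ 2 - x ^ 2) := mul_nonneg (et_nn H x) (by nlinarith)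
  set y := et Q x * (t ^ 2 - x ^ 2) with hyd
  have h1 : (1 + y) ^ JJ Q x = exp (JJ Q x * Real.log (1 + y)) := by
    rw [mul_comm, Real.exp_mul, Real.exp_log (by linarith)]; norm_cast
  rw [h1, ← exp_add, ← exp_add]
  apply exp_le_exp.2
  have hl := log_sqrt hy
  set J : ℝ := ((JJ Q x : ℕ) : ℝ) with hJd
  have h2 : J * √y ≤ FF Q t / K := by
    refine le_trans (le_abs_self _) (abs_le_of_sq_le_sq ?_ (by positivity))
    rw [mul_pow, Real.sq_sqrt hy, div_pow, le_div_iff₀ (by positivity)]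
    have f1 : J * y ≤ FF Q t / 2 := by
      have : J * y = (J * et Q x) * (t ^ 2 - x ^ 2) := by rw [hyd]; ring
      rw [this, e]
      have a1 := H.hmonoabs hxt'
      have a0 := H.hnn x
      unfold FF
      nlinarith [mul_nonneg a0 (sq_nonneg x), mul_le_mul_of_nonneg_right a1 (sq_nonneg t)]
    have f2 : J * K ^ 2 ≤ 2 * FF Q t := by
      have : J ≤ FF Q x + 1 := hJl
      nlinarith [mul_le_mul_of_nonneg_right this (sq_nonneg K)]
    have f3 : 0 ≤ J * y := by positivity
    calc J ^ 2 * y * K ^ 2 = (J * y) * (J * K ^ 2) := by ring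
      _ ≤ (FF Q t / 2) * (2 * FF Q t) := by gcongr
      _ = _ := by ring
  have h3 : FF Q t / K = κ / 4 * FF Q t := by rw [hKd]; field_simp
  have h4 : J * Real.log (1 + y) ≤ J * √y := by gcongr
  have h5 : 0 ≤ κ * FF Q t := by positivity
  linarith

end GW


namespace GW
variable {Q : ℝ → ℝ} {b : ℕ} {n : ℕ} {p : Polynomial ℝ} {z : Fin n → ℝ}

lemma geo_aux {K L x t : ℝ} (hK : 10 ≤ K) (hL : 1 ≤ L) (hx : 0 ≤ x) (hxL : K * x ≤ L)
    (hv : 2 * L ^ 2 ≤ (t - x) ^ 2) : L ≤ |t| ∧ L ^ 2 ≤ t ^ 2 ∧ x ^ 2 ≤ t ^ 2 := by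
  have hxs : 10 * x ≤ L := le_trans (mul_le_mul_of_nonneg_right hK hx) hxL
  have htL : L ≤ |t| := by
    by_contra hcon
    push Not at hcon
    have h3 : |t - x| < 11 / 10 * L := by
      have := abs_sub t x
      rw [abs_of_nonneg hx] at this
      linarith
    have h4 := pow_lt_pow_left₀ h3 (abs_nonneg _) (n := 2) (by norm_num)
    rw [sq_abs] at h4
    nlinarith
  have h2 : L ^ 2 ≤ t ^ 2 := by
    rw [← sq_abs t]; exact pow_le_pow_left₀ (by linarith) htL 2
  exact ⟨htL, h2, le_trans (pow_le_pow_left₀ hx (by linarith) 2) h2⟩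

set_option maxHeartbeats 1600000 in
lemma bulk_poly (H : FQ Q b) {κ K : ℝ} (hκ : 0 < κ) (hκ1 : κ ≤ 1) (hK : 10 ≤ K)
    (ht : ∀ x t : ℝ, 0 ≤ x → K * x ≤ |t| → K ^ 2 ≤ FF Q t →
      ph Q (GG Q x) t ≤ exp (-(Q x)) * exp (-(κ / 2 * FF Q t)))
    (O : OP Q n p z) {L x : ℝ} (hL : 1 ≤ L) (hFL : FF Q L = n) (hnK : K ^ 2 ≤ n) (hx : 0 ≤ x) (hxL : K * x ≤ L)
    {m : ℕ} (hm : 2 ≤ m) (hmn : (m : ℝ) ≤ κ / 32 * n) :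
    p.eval x ^ 2 * exp (-(Q x)) * m ≤ 16 * L * AA Q p x := by
  have hm2 : (2:ℝ) ≤ m := by exact_mod_cast hm
  have hm0 : (0:ℝ) < m := by linarith
  have hn100 : (100:ℝ) ≤ n := by nlinarith
  have hn0 : 0 < n := by
    have : (0:ℝ) < n := by linarith
    exact_mod_cast this
  set a : ℝ := 2 / m with ha
  have ha0 : 0 < a := by positivity
  have hma : m * a = 2 := by rw [ha]; field_simp
  set c := Real.cosh a with hc
  have hc1 : 1 < c := Real.one_lt_cosh.2 ha0.ne'
  have hw := exp_pos (-(Q x))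
  set D := Real.cosh 2 ^ 2 with hD
  have hD2 : 2 ≤ D := by
    have h1 := Real.quadratic_le_exp_of_nonneg (x := 2) (by norm_num)
    have h2 := Real.cosh_eq 2
    have h3 := exp_pos (-2)
    nlinarith
  set G := GG Q x * UU m L c x ^ 2 with hG
  have Ge : ∀ t, ph Q G t = ph Q (GG Q x) t * (Polynomial.Chebyshev.T ℝ m).eval (c - (t - x) ^ 2 / L ^ 2) ^ 2 := by
    intro t
    unfold ph
    rw [hG, Polynomial.eval_mul, Polynomial.eval_pow, UU_eval]; ring
  have hTc : (Polynomial.Chebyshev.T ℝ m).eval c ^ 2 = D := by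
    have := Polynomial.Chebyshev.T_real_cosh (θ := a) (m : ℤ)
    rw [hc, this]; push_cast; rw [hma]
  have Gx : G.eval x = D := by
    rw [hG, Polynomial.eval_mul, Polynomial.eval_pow, UU_eval, GG_self]; simp [hTc]
  have phx : ph Q G x = exp (-(Q x)) * D := by
    rw [Ge, ph_self]; simp [hTc]
  have Gd : G.derivative.eval x = deriv Q x * G.eval x := by
    have := GG_deriv H x
    rw [hG, Polynomial.derivative_mul, Polynomial.derivative_pow]
    simp only [Polynomial.eval_add, Polynomial.eval_mul, Polynomial.eval_pow, UU_deriv, mul_zero, add_zero]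
    rw [this]; ring
  have hL0 : 0 < L ^ 2 := by positivity
  -- far estimate
  have far : ∀ t, c - 1 ≤ (t - x) ^ 2 / L ^ 2 → ph Q G t ≤ exp (-(Q x)) := by
    intro t hv
    rw [Ge]
    set v := (t - x) ^ 2 / L ^ 2 with hvd
    have h0 := ph_nn H x t
    have h1 := ph_max H x t
    rw [ph_self] at h1
    rcases le_or_gt (-1) (c - v) with h | h
    · have := cheb_one m (u := c - v) (abs_le.2 ⟨h, by linarith⟩)
      nlinarith [sq_nonneg ((Polynomial.Chebyshev.T ℝ m).eval (c - v))]
    · have hT := cheb_tail m (u := c - v) (by rw [abs_of_neg (by linarith)]; linarith)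
      have hv2 : 2 * L ^ 2 ≤ (t - x) ^ 2 := by
        rw [← le_div_iff₀ hL0]; linarith
      obtain ⟨htL, ht2, hx2⟩ := geo_aux hK hL hx hxL hv2
      set s := t ^ 2 / L ^ 2 with hs
      have hs1 : 1 ≤ s := by rw [hs, le_div_iff₀ hL0]; linarith
      have hvs : v ≤ 4 * s := by
        rw [hvd, hs, mul_div_assoc', div_le_div_iff_of_pos_right hL0]
        linarith [sq_nonneg (t + x), (by ring : (t - x) ^ 2 + (t + x) ^ 2 = 2 * t ^ 2 + 2 * x ^ 2)]
      have hsF : s * n ≤ FF Q t := by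
        rw [← hFL]
        apply FF_scale H
        · rwa [abs_of_pos (by linarith : 0 < L)]
        · rw [hs]; rw [div_mul_cancel₀ _ hL0.ne']
      have hFt : K ^ 2 ≤ FF Q t := hnK.trans (le_trans (le_mul_of_one_le_left (by linarith) hs1) hsF)
      have htail := ht x t hx (by linarith) hFt
      have hT2 : (Polynomial.Chebyshev.T ℝ m).eval (c - v) ^ 2 ≤ exp (κ / 2 * FF Q t) := by
        calc _ ≤ (2 * |c - v|) ^ (2 * m) := hT
          _ ≤ (exp (8 * s)) ^ (2 * m) := by
            apply pow_le_pow_left₀ (by positivity)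
            rw [abs_of_neg (by linarith)]
            have := add_one_le_exp (8 * s)
            linarith
          _ = exp (16 * m * s) := by rw [← Real.exp_nat_mul]; congr 1; push_cast; ring
          _ ≤ _ := by
            apply exp_le_exp.2
            calc 16 * m * s ≤ 16 * (κ / 32 * n) * s := by gcongr
              _ = κ / 2 * (s * n) := by ring
              _ ≤ _ := by gcongr
      calc _ ≤ exp (-(Q x)) * exp (-(κ / 2 * FF Q t)) * exp (κ / 2 * FF Q t) := by gcongr
        _ = _ := by rw [mul_assoc, ← exp_add]; simp
  have hmax : ∀ t, ph Q G t ≤ ph Q G x := by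
    intro t
    rw [phx]
    rcases le_total (c - 1) ((t - x) ^ 2 / L ^ 2) with h | h
    · have := far t h
      nlinarith
    · rw [Ge]
      have h0 := ph_nn H x t
      have h1 := ph_max H x t
      rw [ph_self] at h1
      have h2 := cheb_mid m (u := c - (t - x) ^ 2 / L ^ 2) ha0.le (by linarith) (by
        have : 0 ≤ (t - x) ^ 2 / L ^ 2 := by positivity
        linarith)
      rw [hma] at h2
      exact mul_le_mul h1 h2 (sq_nonneg _) hw.le
  -- lower bound on the integral
  set e := √(c - 1) with he
  have he0 : 0 < e := Real.sqrt_pos.2 (by linarith)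
  have he2 : e ^ 2 = c - 1 := Real.sq_sqrt (by linarith)
  have hem : e * m ≤ 2 := by
    have h : a ≤ 1 := by rw [ha, div_le_iff₀ hm0]; linarith
    have h1 := Real.cosh_le_exp_half_sq a
    have h2 := Real.abs_exp_sub_one_le (x := a ^ 2 / 2) (by rw [abs_of_nonneg (by positivity)]; nlinarith)
    rw [abs_of_nonneg (a := a ^ 2 / 2) (by positivity)] at h2
    have h3 := (abs_le.1 h2).2
    have h4 : e ≤ a := by
      refine le_trans (le_abs_self _) (abs_le_of_sq_le_sq ?_ ha0.le)
      rw [he2]; linarith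
    calc e * m ≤ a * m := by gcongr
      _ = 2 := by rw [mul_comm]; exact hma
  have hvi := (H_formula H x G Gd hmax).1
  have hlow : exp (-(Q x)) * D / (8 * (c - 1) * L ^ 2) * (e * L) ≤ ∫ t, vv Q G x t := by
    apply int_lower hvi (fun t => div_nonneg (sub_nonneg.2 (hmax t)) (sq_nonneg _)) (α := x + e * L) (by positivity)
    intro t htt
    have b1 : e * L ≤ t - x := by linarith [htt.1]
    have b2 : t - x ≤ 2 * (e * L) := by linarith [htt.2]
    have heL : 0 < e * L := by positivity
    have b3 : (c - 1) * L ^ 2 ≤ (t - x) ^ 2 := by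
      rw [← he2, ← mul_pow]; exact pow_le_pow_left₀ heL.le b1 2
    have b4 : (t - x) ^ 2 ≤ 4 * ((c - 1) * L ^ 2) := by
      have := pow_le_pow_left₀ (by linarith) b2 2
      rw [mul_pow, mul_pow, he2] at this; linarith
    have b5 := far t (by rw [le_div_iff₀ hL0]; exact b3)
    unfold vv
    rw [phx, div_le_div_iff₀ (by have : 0 < c - 1 := by linarith
                                 positivity) (by have := pow_pos (lt_of_lt_of_le heL b1) 2; exact this)]
    have b6 : exp (-(Q x)) * D / 2 ≤ exp (-(Q x)) * D - ph Q G t := by nlinarith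
    have hc0 : 0 < c - 1 := by linarith
    calc exp (-(Q x)) * D * (t - x) ^ 2 ≤ exp (-(Q x)) * D * (4 * ((c - 1) * L ^ 2)) := by gcongr
      _ = exp (-(Q x)) * D / 2 * (8 * (c - 1) * L ^ 2) := by ring
      _ ≤ _ := by gcongr
  have hJ : (JJ Q x : ℝ) ≤ n / 100 + 1 := by
    have h1 := JJ_le H x
    have hxs : 10 * x ≤ L := le_trans (mul_le_mul_of_nonneg_right hK hx) hxL
    have h2 : 100 * FF Q x ≤ FF Q L := FF_scale H (by
      rw [abs_of_nonneg hx, abs_of_pos (by linarith : 0 < L)]; linarith) (by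
      have := pow_le_pow_left₀ (by linarith) hxs 2
      rw [mul_pow] at this; linarith)
    rw [hFL] at h2
    unfold FF at h2
    linarith
  have hdegG : G.natDegree < 2 * n := by
    have h1 : G.natDegree ≤ JJ Q x * 2 + 2 * (m * 2) := by
      refine Polynomial.natDegree_mul_le.trans ?_
      have := GG_deg (Q := Q) x
      have h2 : (UU m L c x ^ 2).natDegree ≤ 2 * (m * 2) := by
        refine Polynomial.natDegree_pow_le.trans ?_
        have := UU_deg m L c x
        omega
      omega
    have h2 : ((JJ Q x * 2 + 2 * (m * 2) : ℕ) : ℝ) < ((2 * n : ℕ) : ℝ) := by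
      push_cast; nlinarith
    exact lt_of_le_of_lt h1 (by exact_mod_cast h2)
  have hdeg : (Sx (Sx G x) x).degree < (2 * n : ℕ) := by
    refine lt_of_le_of_lt Polynomial.degree_le_natDegree ?_
    have : (Sx (Sx G x) x).natDegree ≤ G.natDegree := by
      unfold Sx
      rw [Polynomial.natDegree_divByMonic _ (Polynomial.monic_X_sub_C x), Polynomial.natDegree_divByMonic _ (Polynomial.monic_X_sub_C x)]
      omega
    exact_mod_cast lt_of_le_of_lt this hdegG
  have key := O.D_exact H hn0 x G hdeg Gd hmax
  have hnn : 0 ≤ ∑ k, lam Q z k * G.eval (z k) * (ep p z k).eval x ^ 2 :=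
    Finset.sum_nonneg fun k _ => mul_nonneg (mul_nonneg (O.lam_sq H k).le (by
      rw [hG, Polynomial.eval_mul, Polynomial.eval_pow]
      exact mul_nonneg (GG_nn H x _) (sq_nonneg _))) (sq_nonneg _)
  rw [Gx] at key
  have k1 := mul_le_mul_of_nonneg_left hlow (sq_nonneg (p.eval x))
  have k2 : exp (-(Q x)) * D / (8 * (c - 1) * L ^ 2) * (e * L) = exp (-(Q x)) * D / (8 * e * L) := by
    rw [← he2]; field_simp
  rw [k2] at k1
  have k3 : D * (p.eval x ^ 2 * exp (-(Q x))) / (8 * e * L) ≤ D * AA Q p x := by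
    have : p.eval x ^ 2 * (exp (-(Q x)) * D / (8 * e * L)) = D * (p.eval x ^ 2 * exp (-(Q x))) / (8 * e * L) := by ring
    linarith
  rw [mul_div_assoc] at k3
  have k4 := le_of_mul_le_mul_left k3 (by linarith)
  rw [div_le_iff₀ (by positivity)] at k4
  have hA0 : 0 ≤ AA Q p x := le_trans (by have := H.hnn x; linarith) (O.AA_pos H x)
  calc p.eval x ^ 2 * exp (-(Q x)) * m ≤ AA Q p x * (8 * e * L) * m := by gcongr
    _ = 8 * L * AA Q p x * (e * m) := by ring
    _ ≤ 8 * L * AA Q p x * 2 := by gcongr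
    _ = _ := by ring

end GW


namespace GW
variable {Q : ℝ → ℝ} {b : ℕ} {n : ℕ} {p : Polynomial ℝ} {z : Fin n → ℝ}

lemma moment (H : FQ Q b) (O : OP Q n p z) (hn : 0 < n) :
    I Q (fun t => p.eval t ^ 2 * (hh Q t * t ^ 2)) = 2 * n + 1 := by
  have b1 := by_parts H (Polynomial.X * p ^ 2)
  change I Q _ = I Q _ at b1
  set r : Polynomial ℝ := Polynomial.X * p.derivative - Polynomial.C (n : ℝ) * p with hr
  have hrd : r.degree < n := by
    rw [Polynomial.degree_lt_iff_coeff_zero]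
    intro m hm
    rw [hr, Polynomial.coeff_sub, Polynomial.coeff_C_mul]
    obtain ⟨m, rfl⟩ : ∃ k, m = k + 1 := ⟨m - 1, by omega⟩
    rw [Polynomial.coeff_X_mul, Polynomial.coeff_derivative]
    rcases hm.eq_or_lt with h | h
    · rw [h]; push_cast; ring
    · rw [Polynomial.coeff_eq_zero_of_natDegree_lt (by rw [O.deg]; exact h)]; ring
  have h0 := O.orth r hrd
  have e1 : I Q (fun t => (Polynomial.X * p ^ 2).derivative.eval t)
      = (2 * n + 1) * I Q (fun t => p.eval t ^ 2) + 2 * I Q (fun t => p.eval t * r.eval t) := by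
    rw [← I_mul, ← I_mul, ← I_add H (by exact (PB.const _).mul ((PB.poly p).pow 2))
      (by exact (PB.const _).mul ((PB.poly p).mul (PB.poly r)))]
    congr 1; ext t
    simp [hr, Polynomial.derivative_pow]
    ring
  rw [e1, h0, O.norm] at b1
  have e2 : I Q (fun t => (Polynomial.X * p ^ 2).eval t * deriv Q t)
      = I Q (fun t => p.eval t ^ 2 * (hh Q t * t ^ 2)) := by
    congr 1; ext t
    rw [H.qeq t]; simp; ring
  rw [e2] at b1
  linarith

lemma mn_up (H : FQ Q b) (O : OP Q n p z) (hn : 0 < n) {L : ℝ} (hL : 1 ≤ L) (hFL : FF Q L = n) :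
    I Q (fun t => p.eval t ^ 2 * hh Q t) ≤ 4 * hh Q L := by
  have hL0 : 0 < L ^ 2 := by positivity
  have pp := (PB.poly p).pow 2
  have h1 : I Q (fun t => p.eval t ^ 2 * hh Q t)
      ≤ I Q (fun t => hh Q L * p.eval t ^ 2 + 1 / L ^ 2 * (p.eval t ^ 2 * (hh Q t * t ^ 2))) := by
    apply I_mono H (pp.mul (PB.h H)) (by
      exact ((PB.const _).mul pp).add ((PB.const _).mul (pp.mul ((PB.h H).mul (PB.id.pow 2)))))
    intro t
    have e : hh Q L * p.eval t ^ 2 + 1 / L ^ 2 * (p.eval t ^ 2 * (hh Q t * t ^ 2))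
      = p.eval t ^ 2 * (hh Q L + hh Q t * (t ^ 2 / L ^ 2)) := by ring
    rw [e]
    apply mul_le_mul_of_nonneg_left _ (sq_nonneg _)
    have hnt := H.hnn t
    have hnL := H.hnn L
    rcases le_total |t| |L| with h | h
    · have := H.hmonoabs h
      have : 0 ≤ hh Q t * (t ^ 2 / L ^ 2) := by positivity
      linarith
    · have : 1 ≤ t ^ 2 / L ^ 2 := by rw [le_div_iff₀ hL0, one_mul]; exact sq_le_sq.2 h
      nlinarith
  rw [I_add H (by exact (PB.const _).mul pp) (by exact (PB.const _).mul (pp.mul ((PB.h H).mul (PB.id.pow 2)))),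
    I_mul, I_mul, O.norm, moment H O hn] at h1
  have h2 : (n : ℝ) = hh Q L * L ^ 2 := by rw [← hFL]; rfl
  have h3 : (1:ℝ) ≤ n := by exact_mod_cast hn
  have h4 : 1 / L ^ 2 * (2 * (n:ℝ) + 1) ≤ 3 * hh Q L := by
    rw [one_div, inv_mul_le_iff₀ hL0]; linarith
  linarith

lemma exists_L (H : FQ Q b) : ∃ L : ℕ → ℝ, Tendsto L atTop atTop ∧ ∀ᶠ n : ℕ in atTop, 1 ≤ L n ∧ FF Q (L n) = n := by
  have h1 := H.hpos' one_pos
  have hex : ∀ n : ℕ, ∃ L : ℝ, hh Q 1 ≤ n → 1 ≤ L ∧ FF Q L = n := by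
    intro n
    by_cases hn : hh Q 1 ≤ n
    · set T : ℝ := 1 + n / hh Q 1 with hT
      have hT1 : 1 ≤ T := by rw [hT]; have : 0 ≤ n / hh Q 1 := by positivity
                             linarith
      have hc : ContinuousOn (FF Q) (Set.Icc 1 T) := by
        have : Continuous (FF Q) := H.ch.mul (continuous_id.pow 2)
        exact this.continuousOn
      have hm : (n:ℝ) ∈ Set.Icc (FF Q 1) (FF Q T) := by
        refine ⟨by unfold FF; simpa using hn, ?_⟩
        have a1 : hh Q 1 ≤ hh Q T := H.hmono zero_le_one hT1
        have a2 : n ≤ hh Q 1 * T := by rw [hT]; rw [mul_add, mul_div_cancel₀ _ h1.ne']; linarith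
        have a3 : T ≤ T ^ 2 := by nlinarith
        unfold FF
        calc (n:ℝ) ≤ hh Q 1 * T := a2
          _ ≤ hh Q 1 * T ^ 2 := by gcongr
          _ ≤ _ := by gcongr
      obtain ⟨L, hL, hLe⟩ := intermediate_value_Icc hT1 hc hm
      exact ⟨L, fun _ => ⟨hL.1, hLe⟩⟩
    · exact ⟨0, fun h => absurd h hn⟩
  choose L hL using hex
  have hev : ∀ᶠ n : ℕ in atTop, 1 ≤ L n ∧ FF Q (L n) = n := by
    filter_upwards [tendsto_natCast_atTop_atTop.eventually_ge_atTop (hh Q 1)] with n hn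
    exact hL n hn
  refine ⟨L, tendsto_atTop.2 fun A => ?_, hev⟩
  filter_upwards [hev, tendsto_natCast_atTop_atTop.eventually_gt_atTop (FF Q A)] with n hn hA
  by_contra hcon
  push Not at hcon
  have := FF_scale H (l := 1) (s := L n) (t := A) (by
    rw [abs_of_pos (by linarith [hn.1]), abs_of_pos (by linarith [hn.1])]; exact hcon.le) (by nlinarith [hn.1])
  rw [hn.2] at this
  linarith

/-- the summary of bounds -/
structure MB (Q : ℝ → ℝ) (b : ℕ) (K C c : ℝ) (N : ℕ) (L : ℕ → ℝ) : Prop where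
  hK : 10 ≤ K
  hC : 1 ≤ C
  hc : 0 < c
  hL : Tendsto L atTop atTop
  N0 : 0 < N
  L1 : ∀ n, N ≤ n → 1 ≤ L n
  inner : ∀ n p (z : Fin n → ℝ), N ≤ n → OP Q n p z → ∀ x, 0 ≤ x → K * x ≤ L n → p.eval x ^ 2 * exp (-(Q x)) ≤ C / L n
  outer : ∀ n p (z : Fin n → ℝ), N ≤ n → OP Q n p z → ∀ x, 0 ≤ x → L n ≤ K * x → AA Q p x ≤ C * hh Q x
  low : ∀ n p (z : Fin n → ℝ), N ≤ n → OP Q n p z → ∀ x, c * RR Q x ≤ AA Q p x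

lemma exists_MB (H : FQ Q b) : ∃ K C c N L, MB Q b K C c N L := by
  obtain ⟨κ, K, hκ, hκ1, hK, ht⟩ := tail_ph H
  obtain ⟨L, hLt, hLe⟩ := exists_L H
  have h1 := H.hpos' one_pos
  have hb : (1:ℝ) ≤ b := by exact_mod_cast H.hb
  have hKb : (1:ℝ) ≤ K ^ b := one_le_pow₀ (by linarith)
  set C : ℝ := 5120 * b / κ + 5 * b * K ^ b with hC
  have hCκ : 0 ≤ 5120 * b / κ := by positivity
  have hC1 : 1 ≤ C := by
    have : 1 ≤ b * K ^ b := one_le_mul_of_one_le_of_one_le hb hKb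
    rw [hC]; linarith
  set c : ℝ := min (1/4) (hh Q 1 / 8) with hc
  have hc0 : 0 < c := lt_min (by norm_num) (by positivity)
  have hev : ∀ᶠ n : ℕ in atTop, (1 ≤ L n ∧ FF Q (L n) = n) ∧ K ^ 2 ≤ n ∧ 256 / κ ≤ n ∧ K + 4 * C ≤ L n ∧ 0 < n := by
    filter_upwards [hLe, tendsto_natCast_atTop_atTop.eventually_ge_atTop (K ^ 2),
      tendsto_natCast_atTop_atTop.eventually_ge_atTop (256 / κ), hLt.eventually_ge_atTop (K + 4 * C), eventually_gt_atTop 0]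
      with n a1 a2 a3 a4 a5
    exact ⟨a1, a2, a3, a4, a5⟩
  obtain ⟨N, hN⟩ := eventually_atTop.1 hev
  have hin : ∀ n p (z : Fin n → ℝ), N ≤ n → OP Q n p z → ∀ x, 0 ≤ x → K * x ≤ L n → p.eval x ^ 2 * exp (-(Q x)) ≤ C / L n := by
    intro n p z hn O x hx hxL
    obtain ⟨⟨hL1, hFL⟩, hnK, hnκ, hLK, hn0⟩ := hN n hn
    rw [div_le_iff₀ hκ] at hnκ
    set m := ⌊κ / 32 * n⌋₊ with hm
    have hm1 : (m:ℝ) ≤ κ / 32 * n := Nat.floor_le (by positivity)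
    have hm2 : κ / 32 * n < m + 1 := Nat.lt_floor_add_one _
    have hm3 : (7:ℝ) < m := by linarith
    have hm4 : κ / 64 * n ≤ m := by linarith
    have hm5 : 2 ≤ m := by
      have : 7 < m := by exact_mod_cast hm3
      omega
    have hB := bulk_poly H hκ hκ1 hK ht O hL1 hFL hnK hx hxL hm5 hm1
    have hA : AA Q p x ≤ 5 * b * hh Q (L n) := by
      have a1 := O.AA_le H x
      have a2 := mn_up H O hn0 hL1 hFL
      have a3 : hh Q x ≤ hh Q (L n) := H.hmono hx (by nlinarith)
      calc AA Q p x ≤ b * (hh Q x + I Q (fun t => p.eval t ^ 2 * hh Q t)) := a1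
        _ ≤ b * (hh Q (L n) + 4 * hh Q (L n)) := by gcongr
        _ = _ := by ring
    have hn1 : (n:ℝ) = hh Q (L n) * L n ^ 2 := by rw [← hFL]; rfl
    have hnp : (0:ℝ) < n := by exact_mod_cast hn0
    rw [le_div_iff₀ (by linarith)]
    set Pw := p.eval x ^ 2 * exp (-(Q x)) with hPw
    have hP0 : 0 ≤ Pw := by positivity
    have e1 : Pw * (κ / 64 * n) * L n ≤ 80 * b * n := by
      calc Pw * (κ / 64 * n) * L n ≤ Pw * m * L n := by gcongr
        _ ≤ 16 * L n * AA Q p x * L n := by gcongr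
        _ ≤ 16 * L n * (5 * b * hh Q (L n)) * L n := by gcongr
        _ = 80 * b * n := by rw [hn1]; ring
    have e2 : Pw * κ * L n ≤ 5120 * b := by
      have : (Pw * κ * L n) * n ≤ (5120 * b) * n := by nlinarith
      exact le_of_mul_le_mul_right this hnp
    have e3 : Pw * L n ≤ 5120 * b / κ := by
      rw [le_div_iff₀ hκ]; linarith
    have : 0 ≤ 5 * b * K ^ b := by positivity
    linarith
  refine ⟨K, C, c, max N 1, L, hK, hC1, hc0, hLt, by simp, fun n hn => (hN n (le_trans (le_max_left _ _) hn)).1.1, ?_, ?_, ?_⟩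
  · intro n p z hn; exact hin n p z (le_trans (le_max_left _ _) hn)
  · intro n p z hn O x hx hxL
    obtain ⟨⟨hL1, hFL⟩, hnK, hnκ, hLK, hn0⟩ := hN n (le_trans (le_max_left _ _) hn)
    have a1 := O.AA_le H x
    have a2 := mn_up H O hn0 hL1 hFL
    have a3 : hh Q (L n) ≤ K ^ b * hh Q x := le_trans (H.hmono (by linarith) hxL) (H.hscale (by linarith))
    have h0 := H.hnn x
    calc AA Q p x ≤ b * (hh Q x + I Q (fun t => p.eval t ^ 2 * hh Q t)) := a1
      _ ≤ b * (K ^ b * hh Q x + 4 * (K ^ b * hh Q x)) := by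
        gcongr
        · exact le_mul_of_one_le_left h0 hKb
        · linarith
      _ = 5 * b * K ^ b * hh Q x := by ring
      _ ≤ C * hh Q x := by gcongr; linarith
  · intro n p z hn O x
    obtain ⟨⟨hL1, hFL⟩, hnK, hnκ, hLK, hn0⟩ := hN n (le_trans (le_max_left _ _) hn)
    have hP := hin n p z (le_trans (le_max_left _ _) hn) O
    have pp := (PB.poly p).pow 2
    have hmn : hh Q 1 / 2 ≤ I Q (fun t => p.eval t ^ 2 * hh Q t) := by
      have i1 : Integrable (fun t => (hh Q 1 * p.eval t ^ 2) * exp (-(Q t))) := PB.integrable H (by exact (PB.const _).mul pp)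
      have i2 : Integrable (fun t => (p.eval t ^ 2 * hh Q t) * exp (-(Q t))) := PB.integrable H (by exact pp.mul (PB.h H))
      have i3 : Integrable ((Set.Icc (-1:ℝ) 1).indicator (fun _ => hh Q 1 * (C / L n))) := by
        rw [integrable_indicator_iff measurableSet_Icc]
        exact integrableOn_const (by simp)
      have hle := integral_mono i1 (i2.add i3) (by
        intro t
        simp only [Pi.add_apply]
        by_cases htt : t ∈ Set.Icc (-1:ℝ) 1
        · rw [Set.indicator_of_mem htt]
          have e : p.eval t ^ 2 * exp (-(Q t)) ≤ C / L n := by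
            have := hP |t| (abs_nonneg t) (by nlinarith [abs_le.2 htt])
            rw [H.Qabs] at this
            have e2 : p.eval |t| ^ 2 = p.eval t ^ 2 := by
              rcases abs_choice t with h | h
              · rw [h]
              · rw [h, O.parity H, mul_pow, ← pow_mul, mul_comm n 2, pow_mul]; simp
            rwa [e2] at this
          have e3 : 0 ≤ p.eval t ^ 2 * hh Q t * exp (-(Q t)) := by have := H.hnn t; positivity
          nlinarith
        · rw [Set.indicator_of_notMem htt, add_zero]
          have : 1 ≤ |t| := by
            by_contra hcon; push Not at hcon
            exact htt ⟨(abs_lt.1 hcon).1.le, (abs_lt.1 hcon).2.le⟩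
          have := H.hlarge t this
          have : hh Q 1 * p.eval t ^ 2 ≤ p.eval t ^ 2 * hh Q t := by nlinarith [sq_nonneg (p.eval t)]
          gcongr)
      rw [integral_add' i2 i3, integral_indicator measurableSet_Icc] at hle
      simp only [integral_const, MeasurableSet.univ, measureReal_restrict_apply, Set.univ_inter, smul_eq_mul,
        Real.volume_real_Icc] at hle
      have e4 : ∫ t, (hh Q 1 * p.eval t ^ 2) * exp (-(Q t)) = hh Q 1 := by
        change I Q _ = _
        rw [I_mul, O.norm, mul_one]
      rw [e4] at hle
      change _ ≤ I Q (fun t => p.eval t ^ 2 * hh Q t) + _ at hle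
      have e5 : C / L n ≤ 1 / 4 := by rw [div_le_iff₀ (by linarith)]; linarith
      norm_num at hle
      nlinarith
    have a1 := O.AA_pos H x
    have a2 := OP.AA_m (p := p) H x
    have c1 : c ≤ 1 / 4 := min_le_left _ _
    have c2 : c ≤ hh Q 1 / 8 := min_le_right _ _
    have h0 := H.hnn x
    unfold RR
    nlinarith

end GW


namespace GW
variable {Q : ℝ → ℝ} {b : ℕ} {n : ℕ} {p : Polynomial ℝ} {z : Fin n → ℝ}

/-- fundamental polynomial value -/
noncomputable def ll (z : Fin n → ℝ) (k : Fin n) (x : ℝ) : ℝ := ∏ j ∈ Finset.univ.erase k, (x - z j) / (z k - z j)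

structure TW (Q tw : ℝ → ℝ) (D : ℝ) : Prop where
  hD : 1 ≤ D
  pos : ∀ x, 0 < tw x
  cont : Continuous tw
  even : ∀ x, tw (-x) = tw x
  up : ∀ x, exp (-(Q x)) ≤ D * RR Q x * tw x
  lo : ∀ x, RR Q x * tw x ≤ D * exp (-(Q x))

lemma inv_tw {tw : ℝ → ℝ} {D : ℝ} (T : TW Q tw D) (t : ℝ) : 1 / tw t ≤ D * RR Q t * exp (Q t) := by
  rw [div_le_iff₀ (T.pos t)]
  have h := mul_le_mul_of_nonneg_right (T.up t) (exp_pos (Q t)).le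
  rw [← exp_add] at h
  simp only [neg_add_cancel, exp_zero] at h
  linarith

lemma tw_le (H : FQ Q b) {tw : ℝ → ℝ} {D : ℝ} (T : TW Q tw D) (t : ℝ) : tw t ≤ D * exp (-(Q t)) :=
  le_trans (le_mul_of_one_le_left (T.pos t).le (RR_pos H t)) (T.lo t)

lemma tw_bdd (H : FQ Q b) {tw : ℝ → ℝ} {D : ℝ} (T : TW Q tw D) (t : ℝ) : tw t ≤ D * exp (-(Q 0)) := by
  refine (tw_le H T t).trans (mul_le_mul_of_nonneg_left (exp_le_exp.2 ?_) (by linarith [T.hD]))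
  have := H.Qlower 0 t
  have h0 := H.hnn 0
  have : 0 ≤ hh Q 0 / 2 * (t ^ 2 - 0 ^ 2) := by rw [zero_pow two_ne_zero, sub_zero]; positivity
  linarith

section
variable {tw : ℝ → ℝ} {D K C c : ℝ} {N : ℕ} {L : ℕ → ℝ}

lemma node_bd (H : FQ Q b) (T : TW Q tw D) (M : MB Q b K C c N L) (hn : N ≤ n) (O : OP Q n p z) (k : Fin n) (x : ℝ) :
    ll z k x ^ 2 / tw (z k) ≤ D / c * (nu Q z k * (ep p z k).eval x ^ 2) := by
  have h1 := inv_tw T (z k)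
  have h2 := M.low n p z hn O (z k)
  have h3 := O.fund H k x
  change ll z k x ^ 2 * _ = _ at h3
  have hD := T.hD
  have hc := M.hc
  have h4 : D * RR Q (z k) ≤ D / c * AA Q p (z k) := by
    calc D * RR Q (z k) = D / c * (c * RR Q (z k)) := by field_simp
      _ ≤ _ := by gcongr
  calc ll z k x ^ 2 / tw (z k) = ll z k x ^ 2 * (1 / tw (z k)) := by ring
    _ ≤ ll z k x ^ 2 * (D * RR Q (z k) * exp (Q (z k))) := by gcongr
    _ ≤ ll z k x ^ 2 * (D / c * AA Q p (z k) * exp (Q (z k))) := by gcongr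
    _ = D / c * exp (Q (z k)) * (ll z k x ^ 2 * AA Q p (z k)) := by ring
    _ = _ := by rw [h3, nu]; ring

lemma ep_far (O : OP Q n p z) (k : Fin n) {x : ℝ} (h : x ≠ z k) :
    (ep p z k).eval x ^ 2 = p.eval x ^ 2 / (z k - x) ^ 2 := by
  have := O.p_eval k x
  have h0 : z k - x ≠ 0 := sub_ne_zero.2 (Ne.symm h)
  rw [← this]
  field_simp
  ring

lemma P_bound (H : FQ Q b) (M : MB Q b K C c N L) : ∃ C2 : ℝ, 1 ≤ C2 ∧ ∃ N2, N ≤ N2 ∧ ∀ n p (z : Fin n → ℝ), N2 ≤ n →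
    OP Q n p z → ∀ x, 0 ≤ x → p.eval x ^ 2 * exp (-(Q x)) ≤ C2 * √(RR Q x) := by
  obtain ⟨C2, hC2, h2⟩ := Q2 H
  obtain ⟨N1, hN1⟩ := eventually_atTop.1 (M.hL.eventually_ge_atTop K)
  have hC := M.hC
  refine ⟨C * C2, one_le_mul_of_one_le_of_one_le hC hC2, max N N1, le_max_left _ _, fun n p z hn O x hx => ?_⟩
  have hnN := le_trans (le_max_left _ _) hn
  have hLK := hN1 n (le_trans (le_max_right _ _) hn)
  have hR := RR_pos H x
  have hs : 1 ≤ √(RR Q x) := Real.one_le_sqrt.2 hR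
  have hs2 : √(RR Q x) * √(RR Q x) = RR Q x := Real.mul_self_sqrt (by linarith)
  have hK := M.hK
  rcases le_total (K * x) (L n) with h | h
  · have := M.inner n p z hnN O x hx h
    have hL1 := M.L1 n hnN
    calc _ ≤ C / L n := this
      _ ≤ C / 1 := by gcongr
      _ = C * 1 * 1 := by ring
      _ ≤ C * C2 * √(RR Q x) := by gcongr
  · have hx1 : 1 ≤ x := by
      by_contra hcon; push Not at hcon
      nlinarith
    have a1 := h2 n p z O (by have := M.N0; omega) x hx1
    have a2 := M.outer n p z hnN O x hx h
    have a3 : hh Q x ≤ RR Q x := by unfold RR; linarith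
    have a4 : p.eval x ^ 2 * exp (-(Q x)) * √(RR Q x) ≤ C * C2 * √(RR Q x) * √(RR Q x) := by
      calc _ ≤ C2 * AA Q p x := a1
        _ ≤ C2 * (C * RR Q x) := by
          have : C * hh Q x ≤ C * RR Q x := by gcongr
          gcongr; linarith
        _ = _ := by rw [mul_assoc (C * C2), hs2]; ring
    exact le_of_mul_le_mul_right a4 (by linarith)

lemma AA_comp (H : FQ Q b) (M : MB Q b K C c N L) : ∃ C3 : ℝ, 1 ≤ C3 ∧ ∀ n p (z : Fin n → ℝ), N ≤ n →
    OP Q n p z → ∀ x y, |x| ≤ |y| + 1 → AA Q p x ≤ C3 * AA Q p y := by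
  obtain ⟨C1, hC1, h1⟩ := H.exists_C1
  have hc := M.hc
  have hb : (1:ℝ) ≤ b := by exact_mod_cast H.hb
  refine ⟨1 + b * (C1 / c + 2), by have : 0 ≤ b * (C1 / c + 2) := by positivity
                                   linarith, fun n p z hn O x y hxy => ?_⟩
  have a1 := O.AA_le H x
  have a2 := OP.AA_m (p := p) H y
  have a3 := M.low n p z hn O y
  have a4 := h1 y x hxy
  have hR := RR_pos H y
  have hA : 0 ≤ AA Q p y := by nlinarith
  have a5 : C1 * RR Q y ≤ C1 / c * AA Q p y := by
    calc C1 * RR Q y = C1 / c * (c * RR Q y) := by field_simp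
      _ ≤ _ := by gcongr
  unfold RR at a5
  calc AA Q p x ≤ b * (hh Q x + I Q (fun t => p.eval t ^ 2 * hh Q t)) := a1
    _ ≤ b * (C1 / c * AA Q p y + 2 * AA Q p y) := by gcongr <;> linarith
    _ = b * (C1 / c + 2) * AA Q p y := by ring
    _ ≤ _ := by nlinarith

lemma V_bound (H : FQ Q b) (T : TW Q tw D) (M : MB Q b K C c N L) : ∃ C2 : ℝ, 1 ≤ C2 ∧ ∃ N2, N ≤ N2 ∧
    ∀ n p (z : Fin n → ℝ), N2 ≤ n → OP Q n p z → ∀ x, 0 ≤ x → tw x * ∑ k, ll z k x ^ 2 / tw (z k) ≤ C2 := by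
  obtain ⟨Cp, hCp, N2, hN2, hP⟩ := P_bound H M
  obtain ⟨Ca, hCa, hA⟩ := AA_comp H M
  obtain ⟨C3, hC3, h3⟩ := Q3 H
  obtain ⟨Cr, hCr, hr⟩ := Rsum H
  obtain ⟨C1, hC1, h1⟩ := H.exists_C1
  have hc := M.hc
  have hD := T.hD
  refine ⟨1 + (D * (D * C1 * Ca * C3) + D * (D / c * (5 * Cp * Cr))), by
    have : 0 ≤ D * (D * C1 * Ca * C3) + D * (D / c * (5 * Cp * Cr)) := by positivity
    linarith, N2, hN2, fun n p z hn O x hx => ?_⟩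
  have hnN := hN2.trans hn
  have hn0 : 0 < n := by have := M.N0; omega
  have hR := RR_pos H x
  have hs : 1 ≤ √(RR Q x) := Real.one_le_sqrt.2 hR
  have hs2 : √(RR Q x) * √(RR Q x) = RR Q x := Real.mul_self_sqrt (by linarith)
  have hw := exp_pos (-(Q x))
  have hlow := M.low n p z hnN O x
  have hAx : 0 < AA Q p x := lt_of_lt_of_le (by positivity) hlow
  rw [← Finset.sum_filter_add_sum_filter_not Finset.univ (fun k => RR Q x * (z k - x) ^ 2 ≤ 1 / 4)]
  -- near
  have near : exp (-(Q x)) * ∑ k with RR Q x * (z k - x) ^ 2 ≤ 1 / 4, ll z k x ^ 2 / tw (z k)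
      ≤ D * C1 * Ca * C3 * RR Q x := by
    have e1 : ∀ k ∈ Finset.univ.filter (fun k => RR Q x * (z k - x) ^ 2 ≤ 1 / 4),
        ll z k x ^ 2 / tw (z k) ≤ D * C1 * Ca * RR Q x / AA Q p x * (nu Q z k * (ep p z k).eval x ^ 2) := by
      intro k hk
      rw [Finset.mem_filter] at hk
      have hk1 : |z k - x| ≤ 1 := by
        apply abs_le_of_sq_le_sq _ zero_le_one
        nlinarith [sq_nonneg (z k - x)]
      have b1 : |z k| ≤ |x| + 1 := by
        have := abs_sub_abs_le_abs_sub (z k) x; linarith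
      have b2 : |x| ≤ |z k| + 1 := by
        have := abs_sub_abs_le_abs_sub x (z k); rw [abs_sub_comm] at this; linarith
      have c1 := h1 x (z k) b1
      change RR Q (z k) ≤ C1 * RR Q x at c1
      have c2 := hA n p z hnN O x (z k) b2
      have c3 := inv_tw T (z k)
      have c4 := O.fund H k x
      change ll z k x ^ 2 * _ = _ at c4
      calc ll z k x ^ 2 / tw (z k) = ll z k x ^ 2 * (1 / tw (z k)) := by ring
        _ ≤ ll z k x ^ 2 * (D * RR Q (z k) * exp (Q (z k))) := by gcongr
        _ ≤ ll z k x ^ 2 * (D * (C1 * RR Q x) * exp (Q (z k))) := by gcongr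
        _ = D * C1 * RR Q x / AA Q p x * exp (Q (z k)) * (ll z k x ^ 2 * AA Q p x) := by field_simp
        _ ≤ D * C1 * RR Q x / AA Q p x * exp (Q (z k)) * (ll z k x ^ 2 * (Ca * AA Q p (z k))) := by gcongr
        _ = D * C1 * Ca * RR Q x / AA Q p x * exp (Q (z k)) * (ll z k x ^ 2 * AA Q p (z k)) := by ring
        _ = _ := by rw [c4, nu]; ring
    calc _ ≤ exp (-(Q x)) * ∑ k with RR Q x * (z k - x) ^ 2 ≤ 1 / 4,
          D * C1 * Ca * RR Q x / AA Q p x * (nu Q z k * (ep p z k).eval x ^ 2) := by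
          gcongr with k hk
          exact e1 k hk
      _ = D * C1 * Ca * RR Q x / AA Q p x * (exp (-(Q x)) * ∑ k with RR Q x * (z k - x) ^ 2 ≤ 1 / 4,
          nu Q z k * (ep p z k).eval x ^ 2) := by rw [← Finset.mul_sum]; ring
      _ ≤ D * C1 * Ca * RR Q x / AA Q p x * (C3 * AA Q p x) := by
          exact mul_le_mul_of_nonneg_left (h3 n p z O hn0 x hx) (by positivity)
      _ = _ := by field_simp
  have far : exp (-(Q x)) * ∑ k with ¬ RR Q x * (z k - x) ^ 2 ≤ 1 / 4, ll z k x ^ 2 / tw (z k)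
      ≤ D / c * (5 * Cp * Cr) * RR Q x := by
    have e1 : ∀ k ∈ Finset.univ.filter (fun k => ¬ RR Q x * (z k - x) ^ 2 ≤ 1 / 4),
        ll z k x ^ 2 / tw (z k) ≤ D / c * (5 * RR Q x * p.eval x ^ 2) * (nu Q z k * (1 + RR Q x * (z k - x) ^ 2)⁻¹) := by
      intro k hk
      rw [Finset.mem_filter] at hk
      have hk1 := hk.2
      push Not at hk1
      have hne : x ≠ z k := by rintro rfl; norm_num at hk1
      have hsq : 0 < (z k - x) ^ 2 := by
        have : z k - x ≠ 0 := sub_ne_zero.2 hne.symm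
        positivity
      have hnu := nu_pos H O k
      have hi : 1 / (z k - x) ^ 2 ≤ 5 * RR Q x * (1 + RR Q x * (z k - x) ^ 2)⁻¹ := by
        rw [← div_eq_mul_inv, div_le_div_iff₀ hsq (by positivity)]
        nlinarith
      calc _ ≤ _ := node_bd H T M hnN O k x
        _ = D / c * (nu Q z k * (p.eval x ^ 2 * (1 / (z k - x) ^ 2))) := by rw [ep_far O k hne]; ring
        _ ≤ D / c * (nu Q z k * (p.eval x ^ 2 * (5 * RR Q x * (1 + RR Q x * (z k - x) ^ 2)⁻¹))) := by gcongr
        _ = _ := by ring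
    have hP' := hP n p z hn O x hx
    have hr' := hr n p z O x hx
    have hs0 : 0 ≤ ∑ k, nu Q z k * (1 + RR Q x * (z k - x) ^ 2)⁻¹ :=
      Finset.sum_nonneg fun k _ => mul_nonneg (nu_pos H O k).le (by positivity)
    calc _ ≤ exp (-(Q x)) * ∑ k with ¬ RR Q x * (z k - x) ^ 2 ≤ 1 / 4,
          D / c * (5 * RR Q x * p.eval x ^ 2) * (nu Q z k * (1 + RR Q x * (z k - x) ^ 2)⁻¹) := by
          gcongr with k hk
          exact e1 k hk
      _ ≤ exp (-(Q x)) * ∑ k,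
          D / c * (5 * RR Q x * p.eval x ^ 2) * (nu Q z k * (1 + RR Q x * (z k - x) ^ 2)⁻¹) := by
          apply mul_le_mul_of_nonneg_left _ hw.le
          apply Finset.sum_le_sum_of_subset_of_nonneg (Finset.filter_subset _ _)
          intro k _ _
          have := (nu_pos H O k).le
          positivity
      _ = D / c * (5 * RR Q x) * (p.eval x ^ 2 * exp (-(Q x))) * ∑ k, nu Q z k * (1 + RR Q x * (z k - x) ^ 2)⁻¹ := by
          rw [← Finset.mul_sum]; ring
      _ ≤ D / c * (5 * RR Q x) * (Cp * √(RR Q x)) * ∑ k, nu Q z k * (1 + RR Q x * (z k - x) ^ 2)⁻¹ := by gcongr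
      _ = D / c * (5 * RR Q x) * Cp * (√(RR Q x) * ∑ k, nu Q z k * (1 + RR Q x * (z k - x) ^ 2)⁻¹) := by ring
      _ ≤ D / c * (5 * RR Q x) * Cp * Cr := by gcongr
      _ = _ := by ring
  have ht := T.lo x
  set S1 := ∑ k with RR Q x * (z k - x) ^ 2 ≤ 1 / 4, ll z k x ^ 2 / tw (z k)
  set S2 := ∑ k with ¬ RR Q x * (z k - x) ^ 2 ≤ 1 / 4, ll z k x ^ 2 / tw (z k)
  have hS1 : 0 ≤ S1 := Finset.sum_nonneg fun k _ => div_nonneg (sq_nonneg _) (T.pos _).le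
  have hS2 : 0 ≤ S2 := Finset.sum_nonneg fun k _ => div_nonneg (sq_nonneg _) (T.pos _).le
  have fin : RR Q x * (tw x * (S1 + S2)) ≤ RR Q x * (D * (D * C1 * Ca * C3) + D * (D / c * (5 * Cp * Cr))) := by
    calc RR Q x * (tw x * (S1 + S2)) = (RR Q x * tw x) * (S1 + S2) := by ring
      _ ≤ D * exp (-(Q x)) * (S1 + S2) := by gcongr
      _ = D * (exp (-(Q x)) * S1 + exp (-(Q x)) * S2) := by ring
      _ ≤ D * (D * C1 * Ca * C3 * RR Q x + D / c * (5 * Cp * Cr) * RR Q x) := by gcongr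
      _ = _ := by ring
  have := le_of_mul_le_mul_left fin (by linarith)
  linarith

end
end GW


namespace GW
variable {Q : ℝ → ℝ} {b : ℕ} {n : ℕ} {p : Polynomial ℝ} {z : Fin n → ℝ}

noncomputable def YY (z : Fin n → ℝ) (f : ℝ → ℝ) (x : ℝ) : ℝ := ∑ k, ll z k x ^ 2 * f (z k)

section
variable {tw : ℝ → ℝ} {D K C c : ℝ} {N : ℕ} {L : ℕ → ℝ}

lemma tail_step (H : FQ Q b) (T : TW Q tw D) (M : MB Q b K C c N L) {f : ℝ → ℝ} {Cf : ℝ}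
    (hCf : ∀ t, |f t| * tw t ≤ Cf) (hdec : ∀ e : ℝ, 0 < e → ∃ A : ℝ, ∀ t, A ≤ |t| → |f t| * tw t ≤ e)
    {ε : ℝ} (hε : 0 < ε) : ∃ X : ℝ, ∃ N2 : ℕ, ∀ n p (z : Fin n → ℝ), N2 ≤ n → OP Q n p z → ∀ x, 0 ≤ x → X ≤ x →
      |(YY z f x - f x) * tw x| ≤ ε := by
  obtain ⟨C2, hC2, N1, hN1, hV⟩ := V_bound H T M
  obtain ⟨Cp, hCp, N2, hN2, hP⟩ := P_bound H M
  obtain ⟨Cr, hCr, hr⟩ := Rsum0 H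
  have hc := M.hc
  have hD := T.hD
  have hCf0 : 0 ≤ Cf := le_trans (mul_nonneg (abs_nonneg _) (T.pos 0).le) (hCf 0)
  set e := ε / (4 * C2) with he
  have he0 : 0 < e := by positivity
  have heC : e * C2 = ε / 4 := by rw [he]; field_simp
  have he1 : e ≤ ε / 4 := by rw [← heC]; exact le_mul_of_one_le_right he0.le hC2
  obtain ⟨A, hA⟩ := hdec e he0
  set E : ℝ := Cf * (D / c) * (D * Cp) * 4 * (1 + A ^ 2) with hE
  have hE0 : 0 ≤ E := by positivity
  refine ⟨1 + 2 * |A| + 4 * (E * Cr) / ε, max N1 N2, fun n p z hn O x hx hX => ?_⟩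
  have hq0 : 0 ≤ 4 * (E * Cr) / ε := by positivity
  have hA0 := abs_nonneg A
  have hAA := le_abs_self A
  have hx1 : 1 ≤ x := by linarith
  have hnN2 := le_trans (le_max_right _ _) hn
  have hnN := hN2.trans hnN2
  have hV' := hV n p z (le_trans (le_max_left _ _) hn) O x hx
  have hP' := hP n p z hnN2 O x hx
  have hr' := hr n p z O
  have htw := T.pos x
  have hR := RR_pos H x
  have hs2 : √(RR Q x) * √(RR Q x) = RR Q x := Real.mul_self_sqrt (by linarith)
  have hs : 1 ≤ √(RR Q x) := Real.one_le_sqrt.2 hR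
  have hPt : p.eval x ^ 2 * tw x ≤ D * Cp := by
    have h1 : RR Q x * (p.eval x ^ 2 * tw x) ≤ RR Q x * (D * Cp) := by
      calc RR Q x * (p.eval x ^ 2 * tw x) = p.eval x ^ 2 * (RR Q x * tw x) := by ring
        _ ≤ p.eval x ^ 2 * (D * exp (-(Q x))) := mul_le_mul_of_nonneg_left (T.lo x) (sq_nonneg _)
        _ = D * (p.eval x ^ 2 * exp (-(Q x))) := by ring
        _ ≤ D * (Cp * √(RR Q x)) := by gcongr
        _ ≤ D * (Cp * RR Q x) := by gcongr; nlinarith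
        _ = _ := by ring
    exact le_of_mul_le_mul_left h1 (by linarith)
  have node : ∀ k, ll z k x ^ 2 * |f (z k)| * tw x ≤
      e * (tw x * (ll z k x ^ 2 / tw (z k))) + E / x ^ 2 * (nu Q z k * (1 + z k ^ 2)⁻¹) := by
    intro k
    have hnu := (nu_pos H O k).le
    have htk := T.pos (z k)
    have e0 : ll z k x ^ 2 * |f (z k)| * tw x = (|f (z k)| * tw (z k)) * (tw x * (ll z k x ^ 2 / tw (z k))) := by
      field_simp
    have p1 : 0 ≤ tw x * (ll z k x ^ 2 / tw (z k)) := by positivity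
    rcases le_total A |z k| with h | h
    · rw [e0]
      have p2 : 0 ≤ E / x ^ 2 * (nu Q z k * (1 + z k ^ 2)⁻¹) := by positivity
      have := mul_le_mul_of_nonneg_right (hA (z k) h) p1
      linarith
    · have hd : x / 2 ≤ |z k - x| := by
        have := neg_abs_le (z k - x)
        have := le_abs_self (z k)
        linarith
      have hsq : x ^ 2 / 4 ≤ (z k - x) ^ 2 := by
        have := pow_le_pow_left₀ (by linarith) hd 2
        rw [sq_abs] at this; linarith
      have hne : x ≠ z k := by
        rintro h0; rw [← h0, sub_self, abs_zero] at hd; linarith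
      have hz2 : z k ^ 2 ≤ A ^ 2 := by rw [← sq_abs (z k)]; exact pow_le_pow_left₀ (abs_nonneg _) h 2
      have hi : 1 / (z k - x) ^ 2 ≤ 4 / x ^ 2 := by
        rw [div_le_div_iff₀ (by nlinarith) (by positivity)]; linarith
      have hj : 1 ≤ (1 + A ^ 2) * (1 + z k ^ 2)⁻¹ := by
        rw [← div_eq_mul_inv, one_le_div (by positivity)]; linarith
      have q1 : ll z k x ^ 2 / tw (z k) ≤ D / c * (nu Q z k * (p.eval x ^ 2 * (4 / x ^ 2))) := by
        calc _ ≤ _ := node_bd H T M hnN O k x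
          _ = D / c * (nu Q z k * (p.eval x ^ 2 * (1 / (z k - x) ^ 2))) := by rw [ep_far O k hne]; ring
          _ ≤ _ := by gcongr
      have q2 : ll z k x ^ 2 * |f (z k)| * tw x ≤ E / x ^ 2 * (nu Q z k * (1 + z k ^ 2)⁻¹) := by
        rw [e0]
        calc _ ≤ Cf * (tw x * (D / c * (nu Q z k * (p.eval x ^ 2 * (4 / x ^ 2))))) := by
              gcongr
              exact hCf _
          _ = Cf * (D / c) * (p.eval x ^ 2 * tw x) * (4 / x ^ 2) * nu Q z k * 1 := by ring
          _ ≤ Cf * (D / c) * (D * Cp) * (4 / x ^ 2) * nu Q z k * ((1 + A ^ 2) * (1 + z k ^ 2)⁻¹) := by gcongr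
          _ = _ := by rw [hE]; ring
      have : 0 ≤ e * (tw x * (ll z k x ^ 2 / tw (z k))) := by positivity
      linarith
  have s1 : |YY z f x| * tw x ≤ ε / 4 + ε / 4 := by
    calc |YY z f x| * tw x ≤ (∑ k, ll z k x ^ 2 * |f (z k)|) * tw x := by
          gcongr
          refine (Finset.abs_sum_le_sum_abs _ _).trans (le_of_eq (Finset.sum_congr rfl fun k _ => ?_))
          rw [abs_mul, abs_of_nonneg (sq_nonneg _)]
      _ = ∑ k, ll z k x ^ 2 * |f (z k)| * tw x := by rw [Finset.sum_mul]
      _ ≤ ∑ k, (e * (tw x * (ll z k x ^ 2 / tw (z k))) + E / x ^ 2 * (nu Q z k * (1 + z k ^ 2)⁻¹)) :=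
          Finset.sum_le_sum fun k _ => node k
      _ = e * (tw x * ∑ k, (ll z k x ^ 2 / tw (z k))) + E / x ^ 2 * ∑ k, (nu Q z k * (1 + z k ^ 2)⁻¹) := by
          rw [Finset.sum_add_distrib, ← Finset.mul_sum, ← Finset.mul_sum, ← Finset.mul_sum]
      _ ≤ e * C2 + E / x ^ 2 * Cr := by gcongr
      _ ≤ ε / 4 + ε / 4 := by
          rw [heC]
          gcongr
          rw [div_mul_eq_mul_div, div_le_iff₀ (by positivity)]
          have : 4 * (E * Cr) / ε ≤ x ^ 2 := by nlinarith
          rw [div_le_iff₀ hε] at this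
          linarith
  have s2 := hA x (by rw [abs_of_nonneg hx]; linarith)
  calc |(YY z f x - f x) * tw x| = |YY z f x - f x| * tw x := by rw [abs_mul, abs_of_pos htw]
    _ ≤ (|YY z f x| + |f x|) * tw x := by gcongr; exact abs_sub _ _
    _ ≤ ε := by linarith

end

lemma kap_int (H : FQ Q b) (x t : ℝ) : dslope (deriv Q) x t = ∫ s in (0:ℝ)..1, deriv (deriv Q) (x + s * (t - x)) := by
  have hcont : Continuous fun s : ℝ => deriv (deriv Q) (x + s * (t - x)) := H.cqq.comp (by fun_prop)
  rcases eq_or_ne t x with rfl | h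
  · simp
  · have h0 : t - x ≠ 0 := sub_ne_zero.2 h
    have hd : ∀ s ∈ Set.uIcc (0:ℝ) 1, HasDerivAt (fun s => deriv Q (x + s * (t - x)) / (t - x))
        (deriv (deriv Q) (x + s * (t - x))) s := by
      intro s _
      have h1 : HasDerivAt (fun s => x + s * (t - x)) (t - x) s := by
        simpa using ((hasDerivAt_id s).mul_const (t - x)).const_add x
      have := ((H.d1 (x + s * (t - x))).comp s h1).div_const (t - x)
      rwa [mul_div_assoc, div_self h0, mul_one] at this
    rw [intervalIntegral.integral_eq_sub_of_hasDerivAt hd (hcont.intervalIntegrable _ _), dslope_of_ne _ h, slope_def_field]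
    simp
    ring

lemma kap_equi (H : FQ Q b) (X : ℝ) {η : ℝ} (hη : 0 < η) : ∃ δ : ℝ, 0 < δ ∧ ∀ x y : ℝ, |x| ≤ X → |y| ≤ X →
    |x - y| ≤ δ → ∀ t, |dslope (deriv Q) x t - dslope (deriv Q) y t| ≤ η * (1 + hh Q t) := by
  have hu := (isCompact_Icc (a := -(X + 1)) (b := X + 1)).uniformContinuousOn_of_continuous H.cqq.continuousOn
  rw [Metric.uniformContinuousOn_iff_le] at hu
  obtain ⟨δ1, hδ1, hu⟩ := hu η hη
  have hb : (1:ℝ) ≤ b := by exact_mod_cast H.hb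
  set W : ℝ := b * (3 * hh Q X + 1) with hW
  have hhX := H.hnn X
  have hW0 : 0 < W := by positivity
  refine ⟨min δ1 (η / W), lt_min hδ1 (by positivity), fun x y hx hy hxy t => ?_⟩
  have d1 := hxy.trans (min_le_left _ _)
  have d2 := hxy.trans (min_le_right _ _)
  rw [le_div_iff₀ hW0] at d2
  have hht := H.hnn t
  rcases le_total |t| (X + 1) with h | h
  · rw [kap_int H, kap_int H, ← intervalIntegral.integral_sub]
    · have := intervalIntegral.norm_integral_le_of_norm_le_const (a := (0:ℝ)) (b := 1) (C := η)
        (f := fun s => deriv (deriv Q) (x + s * (t - x)) - deriv (deriv Q) (y + s * (t - y))) (by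
          intro s hs
          rw [Set.uIoc_of_le zero_le_one] at hs
          have mem : ∀ u : ℝ, |u| ≤ X → u + s * (t - u) ∈ Set.Icc (-(X + 1)) (X + 1) := by
            intro u hu
            have := abs_le.1 hu
            have := abs_le.1 h
            constructor <;> nlinarith [hs.1, hs.2]
          have := hu _ (mem x hx) _ (mem y hy) (by
            rw [Real.dist_eq]
            have e : x + s * (t - x) - (y + s * (t - y)) = (1 - s) * (x - y) := by ring
            rw [e, abs_mul, abs_of_nonneg (by linarith [hs.2])]
            nlinarith [hs.1, abs_nonneg (x - y)])
          rwa [Real.dist_eq] at this)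
      rw [Real.norm_eq_abs] at this
      simp only [sub_zero, abs_one, mul_one] at this
      nlinarith
    · exact (H.cqq.comp (by fun_prop)).intervalIntegrable _ _
    · exact (H.cqq.comp (by fun_prop)).intervalIntegrable _ _
  · have k1 := sub_smul_dslope (deriv Q) x t
    have k2 := sub_smul_dslope (deriv Q) y t
    have k3 := sub_smul_dslope (deriv Q) x y
    simp only [smul_eq_mul] at k1 k2 k3
    have id1 : (t - y) * (dslope (deriv Q) x t - dslope (deriv Q) y t)
        = (x - y) * (dslope (deriv Q) x t - dslope (deriv Q) x y) := by
      linear_combination k1 - k2 - k3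
    have hX0 : 0 ≤ X := (abs_nonneg _).trans hx
    have hhx : hh Q x ≤ hh Q X := H.hmonoabs (by rwa [abs_of_nonneg hX0])
    have hhy : hh Q y ≤ hh Q X := H.hmonoabs (by rwa [abs_of_nonneg hX0])
    have a1 := H.kap_le x t
    have a2 := H.kap_le x y
    have a3 := (H.kap_ge x t).1
    have a4 := (H.kap_ge x y).1
    have a5 := H.hnn x
    have hty : 1 ≤ |t - y| := by
      have := abs_sub_abs_le_abs_sub t y; linarith
    have m1 : |dslope (deriv Q) x t - dslope (deriv Q) x y| ≤ W * (1 + hh Q t) := by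
      have m2 : b * (hh Q x + hh Q t) ≤ W * (1 + hh Q t) := by
        rw [hW, mul_assoc]; gcongr; nlinarith
      have m3 : b * (hh Q x + hh Q y) ≤ W * (1 + hh Q t) := by
        rw [hW, mul_assoc]; gcongr; nlinarith
      rw [abs_le]; constructor <;> linarith
    calc |dslope (deriv Q) x t - dslope (deriv Q) y t| ≤ |t - y| * |dslope (deriv Q) x t - dslope (deriv Q) y t| :=
          le_mul_of_one_le_left (abs_nonneg _) hty
      _ = |x - y| * |dslope (deriv Q) x t - dslope (deriv Q) x y| := by rw [← abs_mul, id1, abs_mul]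
      _ ≤ |x - y| * (W * (1 + hh Q t)) := by gcongr
      _ = |x - y| * W * (1 + hh Q t) := by ring
      _ ≤ _ := by gcongr

section
variable {tw : ℝ → ℝ} {D K C c : ℝ} {N : ℕ} {L : ℕ → ℝ}

lemma AA_equi (H : FQ Q b) (M : MB Q b K C c N L) (X : ℝ) {η : ℝ} (hη : 0 < η) : ∃ δ : ℝ, 0 < δ ∧
    ∀ n p (z : Fin n → ℝ), N ≤ n → OP Q n p z → ∀ x y : ℝ, |x| ≤ X → |y| ≤ X →
    |x - y| ≤ δ → |AA Q p y - AA Q p x| ≤ η * AA Q p x := by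
  have hc := M.hc
  obtain ⟨δ, hδ, h⟩ := kap_equi H X (η := η / (1 / c + 2)) (by positivity)
  refine ⟨δ, hδ, fun n p z hn O x y hx hy hxy => ?_⟩
  set e := η / (1 / c + 2) with he
  have he0 : 0 < e := by positivity
  have pp := (PB.poly p).pow 2
  have hm : I Q (fun t => e * (p.eval t ^ 2 + p.eval t ^ 2 * hh Q t)) = e * (1 + I Q (fun t => p.eval t ^ 2 * hh Q t)) := by
    rw [I_mul, I_add H pp (pp.mul (PB.h H)), O.norm]
  have pr : PB (fun t => e * (p.eval t ^ 2 + p.eval t ^ 2 * hh Q t)) := by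
    exact (PB.const _).mul (pp.add (pp.mul (PB.h H)))
  have key : ∀ u v : ℝ, |u| ≤ X → |v| ≤ X → |u - v| ≤ δ → AA Q p u - AA Q p v ≤ e * (1 + I Q (fun t => p.eval t ^ 2 * hh Q t)) := by
    intro u v hu hv huv
    unfold AA
    rw [← I_sub H (pp.mul (PB.kap H u)) (pp.mul (PB.kap H v)), ← hm]
    apply I_mono H ((pp.mul (PB.kap H u)).sub (pp.mul (PB.kap H v))) pr
    intro t
    have := (abs_le.1 (h u v hu hv huv t)).2
    have := mul_le_mul_of_nonneg_left this (sq_nonneg (p.eval t))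
    linarith
  have a1 := key x y hx hy hxy
  have a2 := key y x hy hx (by rwa [abs_sub_comm])
  have a3 := OP.AA_m (p := p) H x
  have a4 := M.low n p z hn O x
  have hR := RR_pos H x
  have a5 : 1 ≤ 1 / c * AA Q p x := by
    rw [one_div, ← div_eq_inv_mul, le_div_iff₀ hc]; nlinarith
  have a6 : e * (1 + I Q (fun t => p.eval t ^ 2 * hh Q t)) ≤ η * AA Q p x := by
    calc _ ≤ e * (1 / c * AA Q p x + 2 * AA Q p x) := by gcongr; linarith
      _ = e * (1 / c + 2) * AA Q p x := by ring
      _ = _ := by rw [he, div_mul_cancel₀ _ (by positivity)]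
  rw [abs_le]; constructor <;> linarith

lemma G_near1 (H : FQ Q b) (X : ℝ) {η : ℝ} (hη : 0 < η) : ∃ δ : ℝ, 0 < δ ∧ ∀ x t : ℝ, |x| ≤ X → |t - x| ≤ δ →
    |(GG Q x).eval t - 1| ≤ η := by
  obtain ⟨C, hC, hlo⟩ := ph_lo H
  have hu := (isCompact_Icc (a := -(X + 1)) (b := X + 1)).uniformContinuousOn_of_continuous H.cQ.continuousOn
  rw [Metric.uniformContinuousOn_iff_le] at hu
  set a : ℝ := min (η / 2) 1 with ha
  have ha0 : 0 < a := lt_min (by linarith) one_pos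
  have ha1 : a ≤ 1 := min_le_right _ _
  have ha2 : 2 * a ≤ η := by have := min_le_left (η / 2) 1; linarith
  obtain ⟨δ1, hδ1, hu⟩ := hu a ha0
  have hRX := RR_pos H X
  set δ2 : ℝ := a / (4 * (C * RR Q X)) with hδ2
  have hδ20 : 0 < δ2 := by positivity
  refine ⟨min δ1 (min 1 δ2), lt_min hδ1 (lt_min one_pos hδ20), fun x t hx ht => ?_⟩
  have t1 := ht.trans (min_le_left _ _)
  have t2 := (ht.trans (min_le_right _ _)).trans (min_le_left _ _)
  have t3 := (ht.trans (min_le_right _ _)).trans (min_le_right _ _)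
  have hX0 : 0 ≤ X := (abs_nonneg _).trans hx
  have hRx : RR Q x ≤ RR Q X := by
    have := H.hmonoabs (x := x) (y := X) (by rwa [abs_of_nonneg hX0])
    unfold RR; linarith
  have hR := RR_pos H x
  have hsq : C * (RR Q x * (t - x) ^ 2) ≤ a / 4 := by
    have : (t - x) ^ 2 ≤ δ2 := by rw [← sq_abs]; nlinarith [abs_nonneg (t - x)]
    calc C * (RR Q x * (t - x) ^ 2) ≤ C * (RR Q X * δ2) := by gcongr
      _ = a / 4 := by rw [hδ2]; field_simp
  have hsq' : RR Q x * (t - x) ^ 2 ≤ 1 / 4 := by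
    have : RR Q x * (t - x) ^ 2 ≤ C * (RR Q x * (t - x) ^ 2) := le_mul_of_one_le_left (by positivity) hC
    linarith
  have hq := hu t ⟨by have := abs_le.1 hx; have := abs_le.1 t2; linarith, by have := abs_le.1 hx; have := abs_le.1 t2; linarith⟩
    x ⟨by have := abs_le.1 hx; linarith, by have := abs_le.1 hx; linarith⟩ (by rw [Real.dist_eq]; exact t1)
  rw [Real.dist_eq] at hq
  have hq' := abs_le.1 hq
  have up := ph_max H x t
  rw [ph_self] at up
  have lo := hlo x t hsq'
  unfold ph at up lo
  have eG : (GG Q x).eval t = ((GG Q x).eval t * exp (-(Q t))) * exp (Q t) := by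
    rw [mul_assoc, ← exp_add]; simp
  have up2 : (GG Q x).eval t ≤ exp a := by
    rw [eG]
    calc _ ≤ exp (-(Q x)) * exp (Q t) := by gcongr
      _ = exp (Q t - Q x) := by rw [← exp_add]; congr 1; ring
      _ ≤ _ := exp_le_exp.2 hq'.2
  have lo2 : exp (-(2 * a)) ≤ (GG Q x).eval t := by
    rw [eG]
    calc exp (-(2 * a)) ≤ exp (-(Q x) + (-(C * (RR Q x * (t - x) ^ 2))) + Q t) := exp_le_exp.2 (by linarith)
      _ = exp (-(Q x)) * exp (-(C * (RR Q x * (t - x) ^ 2))) * exp (Q t) := by rw [exp_add, exp_add]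
      _ ≤ _ := by gcongr
  have f1 := (abs_le.1 (Real.abs_exp_sub_one_le (x := a) (by rw [abs_of_pos ha0]; exact ha1))).2
  rw [abs_of_pos ha0] at f1
  have f2 := add_one_le_exp (-(2 * a))
  rw [abs_le]; constructor <;> linarith

lemma near_step (H : FQ Q b) (M : MB Q b K C c N L) {f : ℝ → ℝ} (hf : Continuous f) (X : ℝ) {η : ℝ} (hη : 0 < η) :
    ∃ δ : ℝ, 0 < δ ∧ ∀ n p (z : Fin n → ℝ), N ≤ n → OP Q n p z → ∀ x t : ℝ, |x| ≤ X → |t - x| ≤ δ →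
      |f t - f x * (AA Q p t / AA Q p x * (GG Q x).eval t)| ≤ η := by
  obtain ⟨F, hF⟩ := (isCompact_Icc (a := -X) (b := X)).exists_bound_of_continuousOn hf.continuousOn
  have hu := (isCompact_Icc (a := -(X + 1)) (b := X + 1)).uniformContinuousOn_of_continuous hf.continuousOn
  rw [Metric.uniformContinuousOn_iff_le] at hu
  obtain ⟨δ1, hδ1, hu⟩ := hu (η / 2) (by linarith)
  set a : ℝ := min 1 (η / (6 * (|F| + 1))) with ha
  have hF0 := abs_nonneg F
  have ha0 : 0 < a := lt_min one_pos (by positivity)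
  have ha1 : a ≤ 1 := min_le_left _ _
  have ha2 : a * (6 * (|F| + 1)) ≤ η := by
    rw [← le_div_iff₀ (by positivity)]; exact min_le_right _ _
  obtain ⟨δ2, hδ2, hA⟩ := AA_equi H M (X + 1) ha0
  obtain ⟨δ3, hδ3, hG⟩ := G_near1 H X ha0
  refine ⟨min (min δ1 1) (min δ2 δ3), lt_min (lt_min hδ1 one_pos) (lt_min hδ2 hδ3), fun n p z hn O x t hx ht => ?_⟩
  have t1 := (ht.trans (min_le_left _ _)).trans (min_le_left _ _)
  have t2 := (ht.trans (min_le_left _ _)).trans (min_le_right _ _)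
  have t3 := (ht.trans (min_le_right _ _)).trans (min_le_left _ _)
  have t4 := (ht.trans (min_le_right _ _)).trans (min_le_right _ _)
  have hx' := abs_le.1 hx
  have t2' := abs_le.1 t2
  have g := hG x t hx t4
  have htX : |t| ≤ X + 1 := abs_le.2 ⟨by linarith, by linarith⟩
  have ar := hA n p z hn O x t (by linarith) htX (by rwa [abs_sub_comm])
  have hc := M.hc
  have hA0 : 0 < AA Q p x := lt_of_lt_of_le (by have := RR_pos H x; positivity) (M.low n p z hn O x)
  have rho : |AA Q p t / AA Q p x - 1| ≤ a := by
    have : AA Q p t / AA Q p x - 1 = (AA Q p t - AA Q p x) / AA Q p x := by field_simp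
    rw [this, abs_div, abs_of_pos hA0, div_le_iff₀ hA0]; exact ar
  have ff := hu t (abs_le.1 htX) x ⟨by linarith, by linarith⟩ (by rw [Real.dist_eq]; exact t1)
  rw [Real.dist_eq] at ff
  have fx : |f x| ≤ |F| := (hF x hx').trans (le_abs_self F)
  set ρ := AA Q p t / AA Q p x
  set g' := (GG Q x).eval t
  have pr : |ρ * g' - 1| ≤ 3 * a := by
    have e : ρ * g' - 1 = (ρ - 1) * (g' - 1) + (ρ - 1) + (g' - 1) := by ring
    rw [e]
    refine (abs_add_three _ _ _).trans ?_
    rw [abs_mul]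
    have := mul_le_mul rho (g.trans ha1) (abs_nonneg _) ha0.le
    linarith
  have e : f t - f x * (ρ * g') = (f t - f x) - f x * (ρ * g' - 1) := by ring
  rw [e]
  refine (abs_sub _ _).trans ?_
  rw [abs_mul]
  have := mul_le_mul fx pr (abs_nonneg _) hF0
  nlinarith

end
end GW


namespace GW
variable {Q : ℝ → ℝ} {b : ℕ} {n : ℕ} {p : Polynomial ℝ} {z : Fin n → ℝ}

section
variable {tw : ℝ → ℝ} {D K C c : ℝ} {N : ℕ} {L : ℕ → ℝ}

lemma comp_id (H : FQ Q b) (O : OP Q n p z) (hn : 0 < n) {x : ℝ} (hA : 0 < AA Q p x) (hJ : JJ Q x < n) (f : ℝ → ℝ) :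
    YY z f x - f x = ∑ k, ll z k x ^ 2 * (f (z k) - f x * (AA Q p (z k) / AA Q p x * (GG Q x).eval (z k)))
      - f x * (p.eval x ^ 2 * ∫ t, vv Q (GG Q x) x t) / AA Q p x := by
  have hdeg : (Sx (Sx (GG Q x) x) x).degree < (2 * n : ℕ) := by
    refine lt_of_le_of_lt Polynomial.degree_le_natDegree ?_
    have h1 : (Sx (Sx (GG Q x) x) x).natDegree ≤ (GG Q x).natDegree := by
      unfold Sx
      rw [Polynomial.natDegree_divByMonic _ (Polynomial.monic_X_sub_C x), Polynomial.natDegree_divByMonic _ (Polynomial.monic_X_sub_C x)]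
      omega
    have h2 := GG_deg (Q := Q) x
    exact_mod_cast (by omega : (Sx (Sx (GG Q x) x) x).natDegree < 2 * n)
  have key := O.D_exact H hn x (GG Q x) hdeg (GG_deriv H x) (ph_max H x)
  rw [GG_self, one_mul] at key
  have e1 : ∑ k, ll z k x ^ 2 * (f (z k) - f x * (AA Q p (z k) / AA Q p x * (GG Q x).eval (z k)))
      = YY z f x - f x / AA Q p x * ∑ k, lam Q z k * (GG Q x).eval (z k) * (ep p z k).eval x ^ 2 := by
    unfold YY
    rw [Finset.mul_sum, ← Finset.sum_sub_distrib]
    refine Finset.sum_congr rfl fun k _ => ?_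
    have h3 := O.fund H k x
    change ll z k x ^ 2 * _ = _ at h3
    linear_combination (-(f x / AA Q p x * (GG Q x).eval (z k))) * h3
  rw [e1, key]
  field_simp
  ring

set_option maxHeartbeats 1600000 in
lemma comp_step (H : FQ Q b) (T : TW Q tw D) (M : MB Q b K C c N L) {f : ℝ → ℝ} (hf : Continuous f) {Cf : ℝ}
    (hCf : ∀ t, |f t| * tw t ≤ Cf) (X : ℝ)
    {ε : ℝ} (hε : 0 < ε) : ∃ N2 : ℕ, ∀ n p (z : Fin n → ℝ), N2 ≤ n → OP Q n p z → ∀ x, 0 ≤ x → x ≤ X →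
      |(YY z f x - f x) * tw x| ≤ ε := by
  obtain ⟨C2, hC2, N1, hN1, hV⟩ := V_bound H T M
  obtain ⟨Cr, hCr, hr⟩ := Rsum0 H
  obtain ⟨Cv, hCv, hv⟩ := vv_up H
  have hc := M.hc
  have hD := T.hD
  have hC := M.hC
  have hK := M.hK
  have hCf0 : 0 ≤ Cf := le_trans (mul_nonneg (abs_nonneg _) (T.pos 0).le) (hCf 0)
  set T0 : ℝ := D * exp (-(Q 0)) with hT0
  have hT00 : 0 < T0 := by positivity
  set η := ε / (2 * (T0 * C2)) with hη
  have hη0 : 0 < η := by positivity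
  have hηe : η * T0 * C2 = ε / 2 := by rw [hη]; field_simp
  obtain ⟨δ, hδ, hnear⟩ := near_step H M hf X hη0
  set Cd : ℝ := (1 + 2 * X ^ 2) / δ ^ 2 + 2 with hCd
  have hCd0 : 0 < Cd := by positivity
  set E0 : ℝ := (Cf * D * D / c + Cf / c) * Cd with hE0
  have hE00 : 0 ≤ E0 := by positivity
  set E : ℝ := E0 * Cr + Cf * Cv / c with hE
  have hE1 : 0 ≤ E := by positivity
  have hev : ∀ᶠ n : ℕ in atTop, N1 ≤ n ∧ K * X ≤ L n ∧ 2 * (E * C) / ε ≤ L n ∧ FF Q X + 1 < n := by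
    filter_upwards [eventually_ge_atTop N1, M.hL.eventually_ge_atTop (K * X), M.hL.eventually_ge_atTop (2 * (E * C) / ε),
      tendsto_natCast_atTop_atTop.eventually_gt_atTop (FF Q X + 1)] with n a1 a2 a3 a4
    exact ⟨a1, a2, a3, a4⟩
  obtain ⟨N2, hN2⟩ := eventually_atTop.1 hev
  refine ⟨N2, fun n p z hn O x hx hxX => ?_⟩
  obtain ⟨n1, n2, n3, n4⟩ := hN2 n hn
  have hnN := hN1.trans n1
  have hn0 : 0 < n := by have := M.N0; omega
  have hL1 := M.L1 n hnN
  have hR := RR_pos H x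
  have hlow := M.low n p z hnN O x
  have hA : 0 < AA Q p x := lt_of_lt_of_le (by positivity) hlow
  have hAc : c ≤ AA Q p x := le_trans (le_mul_of_one_le_right hc.le hR) hlow
  have hJ : JJ Q x < n := by
    have h1 := JJ_le H x
    have h2 := FF_scale H (l := 1) (s := x) (t := X) (by rw [abs_of_nonneg hx, abs_of_nonneg (hx.trans hxX)]; exact hxX)
      (by nlinarith)
    unfold FF at h2 n4
    have : (JJ Q x : ℝ) < n := by linarith
    exact_mod_cast this
  have hPw := M.inner n p z hnN O x hx (le_trans (by gcongr) n2)
  set Pw := p.eval x ^ 2 * exp (-(Q x)) with hPwd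
  have hPw0 : 0 ≤ Pw := by positivity
  have htw := T.pos x
  have hfx := hCf x
  rw [comp_id H O hn0 hA hJ f]
  have node : ∀ k, |ll z k x ^ 2 * (f (z k) - f x * (AA Q p (z k) / AA Q p x * (GG Q x).eval (z k)))| * tw x
      ≤ η * T0 * (tw x * (ll z k x ^ 2 / tw (z k))) + E0 * Pw * (nu Q z k * (1 + z k ^ 2)⁻¹) := by
    intro k
    have hnu := (nu_pos H O k).le
    have htk := T.pos (z k)
    rw [abs_mul, abs_of_nonneg (sq_nonneg (ll z k x))]
    have p1 : 0 ≤ η * T0 * (tw x * (ll z k x ^ 2 / tw (z k))) := by positivity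
    have p2 : 0 ≤ E0 * Pw * (nu Q z k * (1 + z k ^ 2)⁻¹) := by positivity
    rcases le_or_gt |z k - x| δ with h | h
    · have h1 := hnear n p z hnN O x (z k) (by rwa [abs_of_nonneg hx]) h
      have h2 := tw_bdd H T (z k)
      have : ll z k x ^ 2 * |f (z k) - f x * (AA Q p (z k) / AA Q p x * (GG Q x).eval (z k))| * tw x
          ≤ η * T0 * (tw x * (ll z k x ^ 2 / tw (z k))) := by
        calc _ ≤ ll z k x ^ 2 * η * tw x := by gcongr
          _ = η * tw (z k) * (tw x * (ll z k x ^ 2 / tw (z k))) := by field_simp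
          _ ≤ _ := by gcongr
      linarith
    · have hne : x ≠ z k := by rintro h0; rw [← h0, sub_self, abs_zero] at h; linarith
      have hd2 : δ ^ 2 ≤ (z k - x) ^ 2 := by rw [← sq_abs (z k - x)]; exact pow_le_pow_left₀ hδ.le h.le 2
      have hpos : 0 < (z k - x) ^ 2 := lt_of_lt_of_le (by positivity) hd2
      have hi : 1 / (z k - x) ^ 2 ≤ Cd * (1 + z k ^ 2)⁻¹ := by
        rw [← div_eq_mul_inv, div_le_div_iff₀ hpos (by positivity), one_mul]
        have s1 : 1 + z k ^ 2 ≤ 1 + 2 * X ^ 2 + 2 * (z k - x) ^ 2 := by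
          have := pow_le_pow_left₀ hx hxX 2
          linarith [sq_nonneg (z k - 2 * x), (by ring : 2 * x ^ 2 + 2 * (z k - x) ^ 2 = z k ^ 2 + (z k - 2 * x) ^ 2)]
        have s2 : (1 + 2 * X ^ 2) ≤ (1 + 2 * X ^ 2) / δ ^ 2 * (z k - x) ^ 2 := by
          rw [div_mul_eq_mul_div, le_div_iff₀ (by positivity)]
          exact mul_le_mul_of_nonneg_left hd2 (by positivity)
        rw [hCd, add_mul]; linarith
      have hep : (ep p z k).eval x ^ 2 ≤ p.eval x ^ 2 * (Cd * (1 + z k ^ 2)⁻¹) := by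
        rw [ep_far O k hne, div_eq_mul_one_div]; gcongr
      have f1 : ll z k x ^ 2 * |f (z k)| * tw x ≤ Cf * D * D / c * (Cd * Pw * (nu Q z k * (1 + z k ^ 2)⁻¹)) := by
        calc ll z k x ^ 2 * |f (z k)| * tw x = (|f (z k)| * tw (z k)) * (tw x * (ll z k x ^ 2 / tw (z k))) := by field_simp
          _ ≤ Cf * (D * exp (-(Q x)) * (D / c * (nu Q z k * (p.eval x ^ 2 * (Cd * (1 + z k ^ 2)⁻¹))))) := by
            gcongr
            · exact hCf _
            · exact tw_le H T x
            · refine (node_bd H T M hnN O k x).trans ?_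
              gcongr
          _ = _ := by rw [hPwd]; ring
      have hg0 := GG_nn H x (z k)
      have hg : (GG Q x).eval (z k) ≤ exp (Q (z k)) * exp (-(Q x)) := by
        have := ph_max H x (z k)
        rw [ph_self] at this
        unfold ph at this
        calc (GG Q x).eval (z k) = exp (Q (z k)) * ((GG Q x).eval (z k) * exp (-(Q (z k)))) := by
              rw [mul_left_comm, ← exp_add]; simp
          _ ≤ _ := by gcongr
      have hak := (O.AA_node_pos H k)
      have f2 : ll z k x ^ 2 * |f x * (AA Q p (z k) / AA Q p x * (GG Q x).eval (z k))| * tw x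
          ≤ Cf / c * (Cd * Pw * (nu Q z k * (1 + z k ^ 2)⁻¹)) := by
        have h3 := O.fund H k x
        change ll z k x ^ 2 * _ = _ at h3
        have hl := (O.lam_sq H k).le
        rw [abs_mul, abs_of_nonneg (a := AA Q p (z k) / AA Q p x * (GG Q x).eval (z k)) (by positivity)]
        calc _ = (|f x| * tw x) / AA Q p x * (GG Q x).eval (z k) * (ll z k x ^ 2 * AA Q p (z k)) := by ring
          _ = (|f x| * tw x) / AA Q p x * (GG Q x).eval (z k) * (lam Q z k * (ep p z k).eval x ^ 2) := by rw [h3]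
          _ ≤ Cf / c * (exp (Q (z k)) * exp (-(Q x))) * (lam Q z k * (p.eval x ^ 2 * (Cd * (1 + z k ^ 2)⁻¹))) := by gcongr
          _ = _ := by rw [hPwd, nu]; ring
      have f3 : ll z k x ^ 2 * |f (z k) - f x * (AA Q p (z k) / AA Q p x * (GG Q x).eval (z k))| * tw x
          ≤ ll z k x ^ 2 * (|f (z k)| + |f x * (AA Q p (z k) / AA Q p x * (GG Q x).eval (z k))|) * tw x := by
        gcongr; exact abs_sub _ _
      have f4 : E0 * Pw * (nu Q z k * (1 + z k ^ 2)⁻¹) = Cf * D * D / c * (Cd * Pw * (nu Q z k * (1 + z k ^ 2)⁻¹))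
        + Cf / c * (Cd * Pw * (nu Q z k * (1 + z k ^ 2)⁻¹)) := by rw [hE0]; ring
      linarith
  set S := ∑ k, ll z k x ^ 2 * (f (z k) - f x * (AA Q p (z k) / AA Q p x * (GG Q x).eval (z k))) with hS
  have s1 : |S| * tw x ≤ ε / 2 + E0 * Cr * Pw := by
    calc |S| * tw x ≤ (∑ k, |ll z k x ^ 2 * (f (z k) - f x * (AA Q p (z k) / AA Q p x * (GG Q x).eval (z k)))|) * tw x := by
          gcongr; exact Finset.abs_sum_le_sum_abs _ _
      _ ≤ ∑ k, (η * T0 * (tw x * (ll z k x ^ 2 / tw (z k))) + E0 * Pw * (nu Q z k * (1 + z k ^ 2)⁻¹)) := by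
          rw [Finset.sum_mul]; exact Finset.sum_le_sum fun k _ => node k
      _ = η * T0 * (tw x * ∑ k, (ll z k x ^ 2 / tw (z k))) + E0 * Pw * ∑ k, (nu Q z k * (1 + z k ^ 2)⁻¹) := by
          rw [Finset.sum_add_distrib, ← Finset.mul_sum, ← Finset.mul_sum, ← Finset.mul_sum]
      _ ≤ η * T0 * C2 + E0 * Pw * Cr := by
          gcongr
          · exact hV n p z n1 O x hx
          · exact hr n p z O
      _ = _ := by rw [hηe]; ring
  have s2 : |f x * (p.eval x ^ 2 * ∫ t, vv Q (GG Q x) x t) / AA Q p x| * tw x ≤ Cf * Cv / c * Pw := by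
    have hv0 : 0 ≤ ∫ t, vv Q (GG Q x) x t := integral_nonneg (vv_nn H x)
    rw [abs_div, abs_mul, abs_of_pos hA, abs_of_nonneg (a := p.eval x ^ 2 * _) (by positivity)]
    have hsR : √(RR Q x) ≤ RR Q x := Real.sqrt_le_iff.2 ⟨by linarith, by nlinarith⟩
    calc _ = (|f x| * tw x) * (p.eval x ^ 2 * ∫ t, vv Q (GG Q x) x t) / AA Q p x := by ring
      _ ≤ Cf * (p.eval x ^ 2 * (Cv * (exp (-(Q x)) * RR Q x))) / (c * RR Q x) := by
          gcongr
          refine (hv x).trans ?_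
          gcongr
      _ = _ := by rw [hPwd]; field_simp
  have s3 : E * Pw ≤ ε / 2 := by
    calc E * Pw ≤ E * (C / L n) := by gcongr
      _ = E * C / L n := by ring
      _ ≤ ε / 2 := by
        rw [div_le_iff₀ (by linarith)]
        rw [div_le_iff₀ hε] at n3
        linarith
  calc _ = |S - f x * (p.eval x ^ 2 * ∫ t, vv Q (GG Q x) x t) / AA Q p x| * tw x := by rw [abs_mul, abs_of_pos htw]
    _ ≤ (|S| + |f x * (p.eval x ^ 2 * ∫ t, vv Q (GG Q x) x t) / AA Q p x|) * tw x := by gcongr; exact abs_sub _ _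
    _ ≤ ε / 2 + E * Pw := by rw [hE]; linarith
    _ ≤ ε := by linarith

end

lemma main_pos (H : FQ Q b) {tw : ℝ → ℝ} {D : ℝ} (T : TW Q tw D) {f : ℝ → ℝ} (hf : Continuous f)
    (hdec : Tendsto (fun x => f x * tw x) (cocompact ℝ) (nhds 0)) {ε : ℝ} (hε : 0 < ε) :
    ∃ N2 : ℕ, ∀ n p (z : Fin n → ℝ), N2 ≤ n → OP Q n p z → ∀ x, 0 ≤ x → |(YY z f x - f x) * tw x| ≤ ε := by
  obtain ⟨K, C, c, N, L, M⟩ := exists_MB H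
  have hdec' : ∀ e : ℝ, 0 < e → ∃ A : ℝ, ∀ t, A ≤ |t| → |f t| * tw t ≤ e := by
    intro e he
    have h1 := Metric.tendsto_nhds.1 hdec e he
    rw [Metric.cobounded_eq_cocompact.symm, ← comap_norm_atTop, eventually_comap] at h1
    obtain ⟨A, hA⟩ := eventually_atTop.1 h1
    refine ⟨A, fun t ht => ?_⟩
    have := hA |t| ht t rfl
    rw [Real.dist_eq, sub_zero, abs_mul, abs_of_pos (T.pos t)] at this
    exact this.le
  obtain ⟨A, hA⟩ := hdec' 1 one_pos
  obtain ⟨F, hF⟩ := (isCompact_Icc (a := -A) (b := A)).exists_bound_of_continuousOn (hf.mul T.cont).continuousOn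
  have hCf : ∀ t, |f t| * tw t ≤ max 1 F := by
    intro t
    rcases le_total A |t| with h | h
    · exact (hA t h).trans (le_max_left _ _)
    · have := hF t (abs_le.1 h)
      rw [Real.norm_eq_abs, Pi.mul_apply, abs_mul, abs_of_pos (T.pos t)] at this
      exact this.trans (le_max_right _ _)
  obtain ⟨X, N1, h1⟩ := tail_step H T M hCf hdec' hε
  obtain ⟨N2, h2⟩ := comp_step H T M hf hCf X hε
  refine ⟨max N1 N2, fun n p z hn O x hx => ?_⟩
  rcases le_total X x with h | h
  · exact h1 n p z (le_trans (le_max_left _ _) hn) O x hx h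
  · exact h2 n p z (le_trans (le_max_right _ _) hn) O x hx h

lemma YY_neg (z : Fin n → ℝ) (f : ℝ → ℝ) (x : ℝ) :
    YY (fun k => - z (Fin.rev k)) (fun t => f (-t)) (-x) = YY z f x := by
  unfold YY
  rw [← Equiv.sum_comp Fin.revPerm (fun k => ll z k x ^ 2 * f (z k))]
  refine Finset.sum_congr rfl fun k _ => ?_
  simp only [Fin.revPerm_apply, neg_neg]
  congr 2
  unfold ll
  refine Finset.prod_bij (fun j _ => Fin.rev j) ?_ ?_ ?_ ?_
  · intro j hj
    simp only [Finset.mem_erase, Finset.mem_univ, and_true] at hj ⊢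
    exact fun h => hj (Fin.rev_injective h)
  · intro i _ j _ h; exact Fin.rev_injective h
  · intro j hj
    refine ⟨Fin.rev j, ?_, Fin.rev_rev j⟩
    simp only [Finset.mem_erase, Finset.mem_univ, and_true] at hj ⊢
    intro h; apply hj; rw [← h, Fin.rev_rev]
  · intro j _
    rw [← neg_div_neg_eq]
    congr 1 <;> ring

lemma OP.flip (H : FQ Q b) (O : OP Q n p z) : OP Q n p (fun k => - z (Fin.rev k)) :=
  ⟨O.deg, O.lead, O.orth, O.norm, fun i j hij => neg_lt_neg (O.mono (Fin.rev_lt_rev.2 hij)), fun k => by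
    rw [O.parity H, O.zero, mul_zero]⟩

lemma main_all (H : FQ Q b) {tw : ℝ → ℝ} {D : ℝ} (T : TW Q tw D) {f : ℝ → ℝ} (hf : Continuous f)
    (hdec : Tendsto (fun x => f x * tw x) (cocompact ℝ) (nhds 0)) {ε : ℝ} (hε : 0 < ε) :
    ∃ N2 : ℕ, ∀ n p (z : Fin n → ℝ), N2 ≤ n → OP Q n p z → ∀ x, |(YY z f x - f x) * tw x| ≤ ε := by
  obtain ⟨N1, h1⟩ := main_pos H T hf hdec hε
  obtain ⟨N2, h2⟩ := main_pos H T (f := fun t => f (-t)) (hf.comp continuous_neg) (by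
    have := hdec.comp (Homeomorph.neg ℝ).isClosedEmbedding.tendsto_cocompact
    refine this.congr fun t => ?_
    simp [T.even]) hε
  refine ⟨max N1 N2, fun n p z hn O x => ?_⟩
  rcases le_total 0 x with h | h
  · exact h1 n p z (le_trans (le_max_left _ _) hn) O x h
  · have := h2 n p _ (le_trans (le_max_right _ _) hn) (O.flip H) (-x) (by linarith)
    rw [YY_neg] at this
    simpa [T.even] using this

end GW

namespace GW
variable {Q tw : ℝ → ℝ} {b : ℕ}

lemma mkFQ (hQeven : ∀ x, Q (-x) = Q x) (hQsmooth : ContDiff ℝ 3 Q)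
    (hQ'pos : ∀ x : ℝ, 0 < x → 0 < deriv Q x) {A B : ℝ} (hA : 2 ≤ A)
    (hAB : ∀ x : ℝ, 0 < x →
      A ≤ deriv (fun y => y * deriv Q y) x / deriv Q x ∧
      deriv (fun y => y * deriv Q y) x / deriv Q x ≤ B) : ∃ b : ℕ, FQ Q b := by
  have hdd : Differentiable ℝ (deriv Q) := by
    have : ContDiff ℝ 2 (deriv Q) := (contDiff_succ_iff_deriv (n := 2)).1 hQsmooth |>.2.2
    exact this.differentiable (by norm_num)
  have e : ∀ x, deriv (fun y => y * deriv Q y) x = deriv Q x + x * deriv (deriv Q) x := by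
    intro x
    have h0 : deriv (fun y => y * deriv Q y) x = 1 * deriv Q x + x * deriv (deriv Q) x :=
      ((hasDerivAt_id x).mul (hdd x).hasDerivAt).deriv
    rw [h0, one_mul]
  refine ⟨max ⌈B⌉₊ 1, hQeven, hQsmooth, hQ'pos, fun x hx => ?_, fun x hx => ?_, le_max_right _ _⟩
  · have h1 := (hAB x hx).1
    rw [e, le_div_iff₀ (hQ'pos x hx)] at h1
    nlinarith [hQ'pos x hx]
  · have h1 := (hAB x hx).2
    rw [e, div_le_iff₀ (hQ'pos x hx)] at h1
    have h2 : B ≤ ((max ⌈B⌉₊ 1 : ℕ) : ℝ) := (Nat.le_ceil B).trans (by exact_mod_cast le_max_left _ _)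
    nlinarith [hQ'pos x hx]

lemma mkTW (H : FQ Q b) {d : ℝ} (hd1 : 1 ≤ d) (htw_even : ∀ x, tw (-x) = tw x)
    (htw_pos : ∀ x, 0 < tw x) (hc : Continuous tw)
    (ho : ∀ x : ℝ, d ≤ |x| → tw x = Real.exp (-(Q x)) * |x| / deriv Q |x|) : ∃ D, TW Q tw D := by
  have hR : ∀ x, 1 ≤ RR Q x := RR_pos H
  have cR : Continuous (RR Q) := by
    unfold RR
    exact continuous_const.add H.ch
  have cQ : Continuous Q := H.smooth.continuous
  have c1 : Continuous fun x => exp (-(Q x)) / (RR Q x * tw x) :=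
    (by fun_prop : Continuous fun x => exp (-(Q x))).div (cR.mul hc)
      (fun x => (mul_pos (by linarith [hR x]) (htw_pos x)).ne')
  have c2 : Continuous fun x => (RR Q x * tw x) / exp (-(Q x)) :=
    (cR.mul hc).div (by fun_prop) (fun x => (exp_pos _).ne')
  obtain ⟨C1, h1⟩ := (isCompact_Icc (a := -d) (b := d)).exists_bound_of_continuousOn c1.continuousOn
  obtain ⟨C2, h2⟩ := (isCompact_Icc (a := -d) (b := d)).exists_bound_of_continuousOn c2.continuousOn
  have hh1 : 0 < hh Q 1 := H.hpos' one_pos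
  have key : ∀ x, d ≤ |x| → exp (-(Q x)) = hh Q x * tw x := by
    intro x hx
    have hx0 : 0 < |x| := by linarith
    have := H.hpos' hx0
    rw [H.habs] at this
    rw [ho x hx, H.qeq, H.habs]
    field_simp
  set D := max (max C1 C2) (1 / hh Q 1 + 1) with hD
  have d1 : C1 ≤ D := (le_max_left _ _).trans (le_max_left _ _)
  have d2 : C2 ≤ D := (le_max_right _ _).trans (le_max_left _ _)
  have d3 : 1 / hh Q 1 + 1 ≤ D := le_max_right _ _
  have d4 : 1 ≤ D := by
    have : 0 < 1 / hh Q 1 := by positivity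
    linarith
  refine ⟨D, d4, htw_pos, hc, htw_even, fun x => ?_, fun x => ?_⟩
  · have hp : 0 < RR Q x * tw x := mul_pos (by linarith [hR x]) (htw_pos x)
    rcases le_total d |x| with hx | hx
    · rw [key x hx]
      have : hh Q x * tw x ≤ RR Q x * tw x := by
        apply mul_le_mul_of_nonneg_right _ (htw_pos x).le
        unfold RR; linarith
      nlinarith
    · have := (le_abs_self _).trans (h1 x (abs_le.1 hx))
      rw [div_le_iff₀ hp] at this
      nlinarith
  · rcases le_total d |x| with hx | hx
    · have hl := H.hlarge x (hd1.trans hx)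
      have k : RR Q x ≤ (1 / hh Q 1 + 1) * hh Q x := by
        unfold RR
        have : 1 ≤ 1 / hh Q 1 * hh Q x := by
          rw [one_div, inv_mul_eq_div, le_div_iff₀ hh1]; linarith
        linarith
      have k2 : RR Q x ≤ D * hh Q x := k.trans (by gcongr; linarith)
      rw [key x hx, ← mul_assoc]
      exact mul_le_mul_of_nonneg_right k2 (htw_pos x).le
    · have := (le_abs_self _).trans (h2 x (abs_le.1 hx))
      rw [div_le_iff₀ (exp_pos _)] at this
      nlinarith [exp_pos (-(Q x))]

end GW

/-- With the Freud weight `w = e^{-Q}` and the modified weight `w̃` as in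
the text, for every continuous `f : ℝ → ℝ` with `f(x)·w̃(x) → 0` as `|x| → ∞`, the Grünwald
interpolation `Y_n(f,·)` on the zeros of the orthonormal polynomials `p_n` satisfies
`sup_x |(Y_n(f,x) - f(x))·w̃(x)| → 0` as `n → ∞`. -/
theorem grunwald_interpolation_converges
    (Q : ℝ → ℝ) (hQeven : ∀ x, Q (-x) = Q x) (hQsmooth : ContDiff ℝ 3 Q)
    (hQ'pos : ∀ x : ℝ, 0 < x → 0 < deriv Q x)
    (A B : ℝ) (hA : 2 ≤ A)
    (hAB : ∀ x : ℝ, 0 < x →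
      A ≤ deriv (fun y => y * deriv Q y) x / deriv Q x ∧
      deriv (fun y => y * deriv Q y) x / deriv Q x ≤ B)
    (c : ℝ) (hc : ∀ x : ℝ, 1 ≤ |x| →
      |x * iteratedDeriv 3 Q x / iteratedDeriv 2 Q x| ≤ c)
    (d : ℝ) (hd1 : 1 ≤ d)
    (hd : ∀ x : ℝ, d ≤ |x| →
      (1 - (B - 1) ^ 2 - c * (B - 1)) / x ^ 2 ≤ iteratedDeriv 2 Q x)
    (tw : ℝ → ℝ) (htw_even : ∀ x, tw (-x) = tw x) (htw_pos : ∀ x, 0 < tw x)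
    (htw_smooth : ContDiff ℝ 2 tw)
    (htw_inner : ∀ x : ℝ, |x| ≤ 1 → tw x = Real.exp (-(Q x)))
    (htw_outer : ∀ x : ℝ, d ≤ |x| → tw x = Real.exp (-(Q x)) * |x| / deriv Q |x|)
    (hlog1 : ∀ x : ℝ, 0 < x → 0 < deriv (fun y => Real.log (1 / tw y)) x)
    (hlog2 : ∀ x : ℝ, 0 < x →
      0 < deriv (deriv (fun y => Real.log (1 / tw y))) x)
    (hlog1c : ContinuousOn (deriv (fun y => Real.log (1 / tw y))) (Set.Ioi 0))
    (hlog2c : ContinuousOn (deriv (deriv (fun y => Real.log (1 / tw y)))) (Set.Ioi 0))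
    (P : ℕ → Polynomial ℝ)
    (hdeg : ∀ n, (P n).natDegree = n) (hlead : ∀ n, 0 < (P n).leadingCoeff)
    (horth : ∀ n : ℕ, ∀ q : Polynomial ℝ, q.degree < n →
      ∫ t : ℝ, (P n).eval t * q.eval t * Real.exp (-(Q t)) = 0)
    (hnorm : ∀ n : ℕ, ∫ t : ℝ, ((P n).eval t) ^ 2 * Real.exp (-(Q t)) = 1)
    (xz : (n : ℕ) → Fin n → ℝ)
    (hxz_mono : ∀ n, StrictMono (xz n))
    (hxz_zero : ∀ n : ℕ, ∀ k : Fin n, (P n).eval (xz n k) = 0) :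
    ∀ f : ℝ → ℝ, Continuous f →
      Tendsto (fun x => f x * tw x) (cocompact ℝ) (nhds 0) →
      ∀ ε : ℝ, 0 < ε → ∃ N : ℕ, ∀ n : ℕ, N ≤ n → ∀ x : ℝ,
        |((∑ k : Fin n,
            (∏ j ∈ Finset.univ.erase k, (x - xz n j) / (xz n k - xz n j)) ^ 2 * f (xz n k))
          - f x) * tw x| ≤ ε := by
  intro f hf hdec ε hε
  obtain ⟨b, H⟩ := GW.mkFQ hQeven hQsmooth hQ'pos hA hAB
  obtain ⟨D, T⟩ := GW.mkTW H hd1 htw_even htw_pos htw_smooth.continuous htw_outer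
  obtain ⟨N, hN⟩ := GW.main_all H T hf hdec hε
  refine ⟨N, fun n hn x => ?_⟩
  exact hN n (P n) (xz n) hn ⟨hdeg n, hlead n, horth n, hnorm n, hxz_mono n, hxz_zero n⟩ x
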